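/- arXiv:1710.02512 — 2 statements merged into one kernel-verified Lean document; each statement's English description precedes it below -/
import Mathlib

section
/- Let q be an even prime power with q > 8 and let n ≥ 5. Then every k-cap in PG(n, q) satisfies k < q^{n−1} − q^{n−2} + 2√5·q^{n−3} − 9q^{n−4} − 2(q^{n−5} + ⋯ + q + 1) + 1, where q^{n−5} + ⋯ + q + 1 denotes the geometric sum Σ_{i=0}^{n−5} q^i. -/
open Module

/-- Points of the projective space `PG(n, q)` over the field `F` (with `q = |F|`). -/
abbrev PGPoint (F : Type*) [Field F] (n : ℕ) := Projectivization F (Fin (n + 1) → F)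

/-- The set of projective points lying in the projective subspace determined by
a linear subspace `W`. -/
def ptsIn {F : Type*} [Field F] {n : ℕ} (W : Submodule F (Fin (n + 1) → F)) :
    Set (PGPoint F n) := {P | P.submodule ≤ W}

/-- Three points of `PG(n, q)` are collinear if they lie on a common line. -/
def Coll3 {F : Type*} [Field F] {n : ℕ} (P₁ P₂ P₃ : PGPoint F n) : Prop :=
  Module.finrank F ↥(P₁.submodule ⊔ P₂.submodule ⊔ P₃.submodule) ≤ 2

/-- A cap (a plane arc when `n = 2`): a set of points no three of which are collinear. -/
def IsCap {F : Type*} [Field F] {n : ℕ} (K : Set (PGPoint F n)) : Prop :=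
  ∀ P₁ ∈ K, ∀ P₂ ∈ K, ∀ P₃ ∈ K, P₁ ≠ P₂ → P₁ ≠ P₃ → P₂ ≠ P₃ → ¬ Coll3 P₁ P₂ P₃

/-- A complete cap: a cap that is not contained in a cap with one more point. -/
def IsCompleteCap {F : Type*} [Field F] {n : ℕ} (K : Set (PGPoint F n)) : Prop :=
  IsCap K ∧ ∀ P ∉ K, ¬ IsCap (insert P K)

/-- A tangent line of `K`: a line (2-dimensional linear subspace) meeting `K`
in exactly one point. -/
def IsTangent {F : Type*} [Field F] {n : ℕ} (K : Set (PGPoint F n))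
    (W : Submodule F (Fin (n + 1) → F)) : Prop :=
  Module.finrank F W = 2 ∧ (ptsIn W ∩ K).ncard = 1

/-!
A pencil of hyperplanes with axis `A` covers the points off `A` once and those on `A` `q + 1` times.
For even `q` this parity yields tangents to a `(q + 1)`-arc through every point of its plane, and
these are concurrent in a nucleus. In `PG(3, q)` a cap with more than `q² + 1` points could be
extended by the nucleus of any section of size `q + 1`; a complete one would therefore meet every
plane in `0` or `q + 2` points, which is impossible for `q > 2` by divisibility.

In higher dimension, let `u f` be the excess of the section by `f = 0` over its mean, scaled by `q`.
It is a character sum over the cap. Three distinct points of a cap are linearly independent, so the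
second and third moments of `u` over all functionals `f` depend only on the size of the cap. If
`u ≥ -L`, then `u² (u + L) ≥ 0`, and dropping all but the extreme functionals bounds the size. For
a cap missing a hyperplane `H` (an affine cap) the hyperplanes sharing an axis with `H` partition
the cap, so upper bounds on sections give the lower bound `-L`; this lifts `q² + 1` to affine caps
in `PG(4, q)` and `PG(5, q)`, and the same partition lifts it further by a factor `q` per dimension.
Finally, a large cap in `PG(n, q)` has by the same moments a hyperplane with few points, and the
rest of the cap is affine.
-/

section CapBounds

open Finset Submodule

variable {F : Type*} [Field F] {V : Type*} [AddCommGroup V] [Module F V]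

local notation "q" => Fintype.card F

/-- A cap in vector form: `S` contains one representative vector of each point of a cap of the
projective space of `V`. Taking `y = z` in `notMem_span` says that distinct vectors of `S`
represent distinct points. -/
structure IsVectorCap (F : Type*) [Field F] {V : Type*} [AddCommGroup V] [Module F V]
    (S : Finset V) : Prop where
  zero_notMem : 0 ∉ S
  notMem_span : ∀ x ∈ S, ∀ y ∈ S, ∀ z ∈ S, x ≠ y → x ≠ z → x ∉ span F {y, z}

open Classical in
/-- The part of `S` on the hyperplane `f = 0`, as a set of vectors of that hyperplane. -/
noncomputable def hyperplaneSection (S : Finset V) (f : Dual F V) : Finset f.ker :=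
  S.subtype (· ∈ f.ker)

section Pencil

@[simp]
lemma mem_hyperplaneSection {S : Finset V} {f : Dual F V} {v : f.ker} :
    v ∈ hyperplaneSection S f ↔ (v : V) ∈ S := by
  simp [hyperplaneSection]

lemma add_smul_apply_eq_zero_iff {f g : Dual F V} {v : V} (hf : f v ≠ 0) {c : F} :
    (g + c • f) v = 0 ↔ c = -(g v / f v) := by
  rw [LinearMap.add_apply, LinearMap.smul_apply, smul_eq_mul, ← neg_div, eq_div_iff hf, add_comm,
    add_eq_zero_iff_eq_neg]

variable [DecidableEq F]

/-- The number of vectors of `S` on the hyperplane `f = 0`. -/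
def sectionCard (S : Finset V) (f : Dual F V) : ℕ := #{v ∈ S | f v = 0}

/-- The number of vectors of `S` on the axis `f = g = 0` of the pencil of hyperplanes spanned by
`f` and `g`. -/
def axisCard (S : Finset V) (f g : Dual F V) : ℕ := #{v ∈ S | f v = 0 ∧ g v = 0}

variable {S : Finset V} {f g : Dual F V}

lemma axisCard_comm (S : Finset V) (f g : Dual F V) : axisCard S f g = axisCard S g f := by
  simp only [axisCard, and_comm]

lemma axisCard_add_smul_left (S : Finset V) (f g : Dual F V) (c : F) :
    axisCard S (g + c • f) f = axisCard S f g := by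
  unfold axisCard
  congr 1
  ext v
  simp +contextual [and_comm (a := f v = 0)]

lemma axisCard_le_sectionCard (S : Finset V) (f g : Dual F V) :
    axisCard S f g ≤ sectionCard S f :=
  card_le_card (monotone_filter_right S fun _ _ h => h.1)

lemma sectionCard_mono {T : Finset V} (hTS : T ⊆ S) (f : Dual F V) :
    sectionCard T f ≤ sectionCard S f :=
  card_le_card (filter_subset_filter _ hTS)

lemma sectionCard_add_sum_pencil [Fintype F] (S : Finset V) (f g : Dual F V) :
    sectionCard S f + ∑ c : F, sectionCard S (g + c • f) = #S + q * axisCard S f g := by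
  have hpoint (v : V) : ((if f v = 0 then 1 else 0) + ∑ c : F, if (g + c • f) v = 0 then 1 else 0)
      = 1 + q * if f v = 0 ∧ g v = 0 then 1 else 0 := by
    by_cases hf : f v = 0
    · by_cases hg : g v = 0 <;> simp [hf, hg]
    · simp only [hf, add_smul_apply_eq_zero_iff hf, if_false, false_and, sum_ite_eq', mem_univ,
        if_true, mul_zero, zero_add, add_zero]
  simp only [sectionCard, axisCard, card_filter]
  rw [sum_comm, ← sum_add_distrib, sum_congr rfl fun v _ => hpoint v, sum_add_distrib, ← mul_sum,
    card_eq_sum_ones]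

lemma sectionCard_add_sum_pencil_eq [Fintype F] (haxis : axisCard S f g = 0) :
    sectionCard S f + ∑ c : F, sectionCard S (g + c • f) = #S := by
  simp [sectionCard_add_sum_pencil, haxis]

lemma sum_sectionCard_pencil_eq [Fintype F] (hf : sectionCard S f = 0) (g : Dual F V) :
    ∑ c : F, sectionCard S (g + c • f) = #S := by
  rw [← sectionCard_add_sum_pencil_eq (Nat.le_zero.1 (hf ▸ axisCard_le_sectionCard S f g)), hf,
    zero_add]

lemma sectionCard_smul (S : Finset V) (f : Dual F V) {c : F} (hc : c ≠ 0) :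
    sectionCard S (c • f) = sectionCard S f := by
  simp [sectionCard, hc]

lemma card_hyperplaneSection (S : Finset V) (f : Dual F V) :
    #(hyperplaneSection S f) = sectionCard S f := by
  simp [hyperplaneSection, sectionCard]

lemma sectionCard_hyperplaneSection (S : Finset V) (f g : Dual F V) :
    sectionCard (hyperplaneSection S f) (g ∘ₗ f.ker.subtype) = axisCard S f g := by
  have : {v ∈ hyperplaneSection S f | (g ∘ₗ f.ker.subtype) v = 0}
      = hyperplaneSection {v ∈ S | g v = 0} f := by
    ext v
    rw [mem_filter]
    simp
  rw [sectionCard, this, card_hyperplaneSection, sectionCard, filter_filter, axisCard]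
  simp only [and_comm]

lemma sectionCard_hyperplaneSection_eq_zero (hf : sectionCard S f = 0) (g : Dual F V) :
    sectionCard (hyperplaneSection S g) (f ∘ₗ g.ker.subtype) = 0 := by
  rw [sectionCard_hyperplaneSection, axisCard_comm]
  exact Nat.le_zero.1 (hf ▸ axisCard_le_sectionCard S f g)

lemma ne_zero_of_sectionCard_eq_zero (hS : S.Nonempty) (hf : sectionCard S f = 0) :
    f ≠ 0 := by
  rintro rfl
  simp [sectionCard, hS.ne_empty] at hf

end Pencil

namespace IsVectorCap

variable {S T : Finset V} {f : Dual F V} {x y N : V}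

lemma ne_zero (hS : IsVectorCap F S) (hx : x ∈ S) : x ≠ 0 :=
  fun h => hS.zero_notMem (h ▸ hx)

lemma notMem_span_singleton (hS : IsVectorCap F S) (hx : x ∈ S) (hy : y ∈ S) (hxy : x ≠ y) :
    x ∉ span F {y} := by
  simpa using hS.notMem_span x hx y hy y hy hxy hxy

lemma linearIndependent_pair (hS : IsVectorCap F S) (hx : x ∈ S) (hy : y ∈ S) (hxy : x ≠ y) :
    LinearIndependent F ![x, y] :=
  (LinearIndependent.pair_iff' (hS.ne_zero hx)).2 fun a ha =>
    hS.notMem_span_singleton hy hx hxy.symm (mem_span_singleton.2 ⟨a, ha⟩)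

lemma mono (hS : IsVectorCap F S) (hTS : T ⊆ S) : IsVectorCap F T where
  zero_notMem := fun h => hS.zero_notMem (hTS h)
  notMem_span x hx y hy z hz := hS.notMem_span x (hTS hx) y (hTS hy) z (hTS hz)

lemma restrict (hS : IsVectorCap F S) (f : Dual F V) :
    IsVectorCap F (hyperplaneSection S f) where
  zero_notMem := by simpa using hS.zero_notMem
  notMem_span x hx y hy z hz hxy hxz hmem := by
    simp only [mem_hyperplaneSection] at hx hy hz
    refine hS.notMem_span x hx y hy z hz (Subtype.coe_ne_coe.2 hxy) (Subtype.coe_ne_coe.2 hxz) ?_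
    simpa [map_span, Set.image_pair] using mem_map_of_mem (f := f.ker.subtype) hmem

lemma insert_of_forall_notMem_span [DecidableEq V] (hS : IsVectorCap F S) (hN : N ≠ 0)
    (h : ∀ x ∈ S, ∀ y ∈ S, N ∉ span F {x, y}) : IsVectorCap F (insert N S) where
  zero_notMem := by simp [hN.symm, hS.zero_notMem]
  notMem_span x hx y hy z hz hxy hxz hmem := by
    have exchange {x z : V} (hx : x ∈ S) (hz : z ∈ S) (hxz : x ≠ z) : x ∉ span F {N, z} :=
      fun hmem => h x hx z hz (mem_span_insert_exchange hmem (hS.notMem_span_singleton hx hz hxz))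
    have exchange' {x : V} (hx : x ∈ S) : x ∉ span F {N} := fun hmem =>
      h x hx x hx (by
        simpa using mem_span_insert_exchange (s := ∅) (by simpa using hmem)
          (by simpa using hS.ne_zero hx))
    rcases Finset.mem_insert.1 hx with rfl | hxS
    · exact h y (mem_of_mem_insert_of_ne hy hxy.symm) z (mem_of_mem_insert_of_ne hz hxz.symm) hmem
    rcases Finset.mem_insert.1 hy with rfl | hyS <;> rcases Finset.mem_insert.1 hz with rfl | hzS
    · exact exchange' hxS (by simpa using hmem)
    · exact exchange hxS hzS hxz hmem
    · exact exchange hxS hyS hxy (Set.pair_comm y z ▸ hmem)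
    · exact hS.notMem_span x hxS y hyS z hzS hxy hxz hmem

end IsVectorCap

section Functionals

variable {f g : Dual F V} {U : Submodule F V}

lemma finrank_span_pair {W : Type*} [AddCommGroup W] [Module F W] {x y : W}
    (h : LinearIndependent F ![x, y]) : finrank F (span F {x, y}) = 2 := by
  rw [← Matrix.range_cons_cons_empty x y ![], finrank_span_eq_card h, Fintype.card_fin]

lemma linearIndependent_pair_of_apply {w : V} (hf : f ≠ 0) (hfw : f w = 0) (hgw : g w ≠ 0) :
    LinearIndependent F ![f, g] :=
  (LinearIndependent.pair_iff' hf).2 fun a ha => hgw (by simp [← ha, hfw])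

lemma linearIndependent_pencil (h : LinearIndependent F ![f, g]) (c : F) :
    LinearIndependent F ![f, g + c • f] := by
  rw [add_comm]
  exact (LinearIndependent.pair_add_smul_right_iff c).2 h

lemma pencil_ne_zero (h : LinearIndependent F ![f, g]) (c : F) : g + c • f ≠ 0 :=
  (linearIndependent_pencil h c).ne_zero 1

lemma exists_smul_eq_of_not_linearIndependent (hf : f ≠ 0) (h : ¬ LinearIndependent F ![f, g]) :
    ∃ c : F, c • f = g := by
  simpa [LinearIndependent.pair_iff' hf] using h

lemma exists_linearIndependent_le_ker [FiniteDimensional F V] (hf : f ≠ 0) (hU : U ≤ f.ker)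
    (hdim : finrank F U + 2 ≤ finrank F V) :
    ∃ g : Dual F V, LinearIndependent F ![f, g] ∧ U ≤ g.ker := by
  have hlt : U < f.ker := hU.lt_of_ne <| by
    rintro rfl
    have := Dual.finrank_ker_add_one_of_ne_zero hf
    omega
  obtain ⟨w, hwf, hwU⟩ := SetLike.exists_of_lt hlt
  obtain ⟨g, hgw, hg⟩ := exists_le_ker_of_notMem hwU
  exact ⟨g, linearIndependent_pair_of_apply hf hwf hgw, hg⟩

lemma exists_pencil_le_ker [FiniteDimensional F V] (hdim : finrank F U + 2 ≤ finrank F V) :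
    ∃ f g : Dual F V, LinearIndependent F ![f, g] ∧ U ≤ f.ker ∧ U ≤ g.ker := by
  obtain ⟨f, hf, hfU⟩ := exists_le_ker_of_lt_top U
    (lt_top_of_finrank_lt_finrank (by omega))
  obtain ⟨g, hfg, hgU⟩ := exists_linearIndependent_le_ker hf hfU hdim
  exact ⟨f, g, hfg, hfU, hgU⟩

lemma finrank_ker_inf_ker_add_two [FiniteDimensional F V] (h : LinearIndependent F ![f, g]) :
    finrank F ↥(f.ker ⊓ g.ker) + 2 = finrank F V := by
  have hker : (span F {f, g}).dualCoannihilator = f.ker ⊓ g.ker := SetLike.coe_injective <| by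
    ext v
    simp [coe_dualCoannihilator_span]
  have := Subspace.finrank_add_finrank_dualCoannihilator_eq (span F {f, g})
  rwa [finrank_span_pair h, hker, add_comm] at this

lemma ker_inf_ker_eq [FiniteDimensional F V] (h : LinearIndependent F ![f, g]) (hfU : U ≤ f.ker)
    (hgU : U ≤ g.ker) (hdim : finrank F V ≤ finrank F U + 2) : f.ker ⊓ g.ker = U := by
  have := finrank_ker_inf_ker_add_two h
  exact (eq_of_le_of_finrank_le (le_inf hfU hgU) (by omega)).symm

lemma finrank_ker_eq [FiniteDimensional F V] {n : ℕ} (hV : finrank F V = n + 1)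
    (hf : f ≠ 0) : finrank F f.ker = n :=
  Nat.succ_injective ((Dual.finrank_ker_add_one_of_ne_zero hf).trans hV)

lemma comp_subtype_ker_ne_zero [FiniteDimensional F V] (h : LinearIndependent F ![f, g]) :
    g ∘ₗ f.ker.subtype ≠ 0 := fun hzero => by
  have hle : f.ker ≤ g.ker := fun v hv => LinearMap.congr_fun hzero ⟨v, hv⟩
  have hdim := finrank_ker_inf_ker_add_two h
  have hf : f ≠ 0 := h.ne_zero 0
  have := Dual.finrank_ker_add_one_of_ne_zero hf
  rw [inf_eq_left.2 hle] at hdim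
  omega

lemma exists_linearIndependent_mem_ker [FiniteDimensional F V] {N : V} (hV : finrank F V = 3)
    (hf : f ≠ 0) (hN : N ≠ 0) (hfN : f N = 0) :
    ∃ x, LinearIndependent F ![N, x] ∧ f x = 0 := by
  have hlt : span F {N} < f.ker := lt_of_le_of_ne (by simpa) fun h => by
    have := Dual.finrank_ker_add_one_of_ne_zero hf
    rw [← h, finrank_span_singleton hN] at this
    omega
  obtain ⟨x, hfx, hx⟩ := SetLike.exists_of_lt hlt
  exact ⟨x, (LinearIndependent.pair_iff' hN).2 fun a ha => hx (mem_span_singleton.2 ⟨a, ha⟩), hfx⟩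

lemma exists_smul_eq_of_apply_eq_zero [FiniteDimensional F V] {x y : V} (hV : finrank F V = 3)
    (hf : f ≠ 0) (hxy : LinearIndependent F ![x, y]) (hfx : f x = 0) (hfy : f y = 0)
    (hgx : g x = 0) (hgy : g y = 0) : ∃ c : F, c • f = g := by
  refine exists_smul_eq_of_not_linearIndependent hf fun hfg => ?_
  have hle : span F {x, y} ≤ f.ker ⊓ g.ker :=
    span_le.2 (Set.pair_subset ⟨hfx, hgx⟩ ⟨hfy, hgy⟩)
  have := finrank_mono hle
  have := finrank_ker_inf_ker_add_two hfg
  rw [finrank_span_pair hxy] at *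
  omega

end Functionals

lemma IsVectorCap.exists_pencil_of_mem [FiniteDimensional F V] {A : Finset V} {P : V}
    (hA : IsVectorCap F A) (hV : finrank F V = 3) (hP : P ∈ A) :
    ∃ f g : Dual F V, LinearIndependent F ![f, g] ∧ f P = 0 ∧ g P = 0 := by
  simpa using exists_pencil_le_ker (U := span F {P})
    (by rw [finrank_span_singleton (hA.ne_zero hP), hV])

section Plane

variable [DecidableEq F] [FiniteDimensional F V] {A : Finset V} {f g : Dual F V} {P : V}

lemma exists_odd_sectionCard [Fintype F] (hq : Even q)
    (hV : 3 ≤ finrank F V) (S : Finset V) (hS : Odd #S) (Q : V) :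
    ∃ h : Dual F V, h ≠ 0 ∧ h Q = 0 ∧ Odd (sectionCard S h) := by
  obtain ⟨f, g, hfg, hfQ, hgQ⟩ := exists_pencil_le_ker (F := F) (U := span F {Q}) <| by
    have : finrank F (span F {Q}) ≤ 1 := by simpa using finrank_span_le_card (R := F) {Q}
    omega
  simp only [span_singleton_le_iff_mem, LinearMap.mem_ker] at hfQ hgQ
  by_contra! hno
  simp only [Nat.not_odd_iff_even] at hno
  refine Nat.not_odd_iff_even.2 ?_ (hS.add_even (hq.mul_right (axisCard S f g)))
  rw [← sectionCard_add_sum_pencil]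
  exact (hno f (hfg.ne_zero 0) hfQ).add <| even_sum _ fun c _ =>
    hno _ (pencil_ne_zero hfg c) (by simp [hfQ, hgQ])

namespace IsVectorCap

lemma sectionCard_le_two (hA : IsVectorCap F A) (hV : finrank F V = 3) (hf : f ≠ 0) :
    sectionCard A f ≤ 2 := by
  by_contra! h
  obtain ⟨x, y, z, hx, hy, hz, hxy, hxz, hyz⟩ := two_lt_card_iff.1 h
  simp only [mem_filter] at hx hy hz
  have hker := Dual.finrank_ker_add_one_of_ne_zero hf
  have hspan : span F {y, z} = f.ker := eq_of_le_of_finrank_eq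
    (span_le.2 (Set.pair_subset hy.2 hz.2))
    (by rw [finrank_span_pair (hA.linearIndependent_pair hy.1 hz.1 hyz)]; omega)
  exact hA.notMem_span x hx.1 y hy.1 z hz.1 hxy hxz (hspan ▸ hx.2)

lemma axisCard_eq_one (hA : IsVectorCap F A) (hV : finrank F V = 3)
    (hfg : LinearIndependent F ![f, g]) (hP : P ∈ A) (hfP : f P = 0) (hgP : g P = 0) :
    axisCard A f g = 1 := by
  have haxis : f.ker ⊓ g.ker = span F {P} :=
    ker_inf_ker_eq hfg (by simpa) (by simpa) (by rw [finrank_span_singleton (hA.ne_zero hP), hV])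
  refine card_eq_one.2 ⟨P, eq_singleton_iff_unique_mem.2 ⟨by simp [*], fun v hv => ?_⟩⟩
  obtain ⟨hvA, hfv, hgv⟩ := mem_filter.1 hv
  by_contra hvP
  exact hA.notMem_span_singleton hvA hP hvP (haxis ▸ ⟨hfv, hgv⟩)

lemma sectionCard_add_sum_pencil_of_mem [Fintype F] (hA : IsVectorCap F A) (hV : finrank F V = 3)
    (hfg : LinearIndependent F ![f, g]) (hP : P ∈ A) (hfP : f P = 0) (hgP : g P = 0) :
    sectionCard A f + ∑ c : F, sectionCard A (g + c • f) = #A + q := by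
  rw [sectionCard_add_sum_pencil, hA.axisCard_eq_one hV hfg hP hfP hgP, mul_one]

lemma card_le_sectionCard_add [Fintype F] (hA : IsVectorCap F A) (hV : finrank F V = 3)
    (hf : f ≠ 0) (hP : P ∈ A) (hfP : f P = 0) : #A ≤ sectionCard A f + q := by
  obtain ⟨g, hfg, hgP⟩ := exists_linearIndependent_le_ker (U := span F {P}) hf (by simpa)
    (by rw [finrank_span_singleton (hA.ne_zero hP), hV])
  have hsum := hA.sectionCard_add_sum_pencil_of_mem hV hfg hP hfP (by simpa using hgP)
  have hle : ∑ c : F, sectionCard A (g + c • f) ≤ q * 2 :=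
    sum_le_card_nsmul univ _ 2 fun c _ => hA.sectionCard_le_two hV (pencil_ne_zero hfg c)
  omega

lemma sectionCard_ne_one [Fintype F] (hA : IsVectorCap F A) (hV : finrank F V = 3)
    (hcard : #A = q + 2) (hf : f ≠ 0) : sectionCard A f ≠ 1 := fun h => by
  obtain ⟨P, hP⟩ := card_pos.1 (h.symm ▸ one_pos : 0 < sectionCard A f)
  obtain ⟨hPA, hfP⟩ := mem_filter.1 hP
  have := hA.card_le_sectionCard_add hV hf hPA hfP
  omega

lemma exists_tangent [Fintype F] (hA : IsVectorCap F A) (hV : finrank F V = 3)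
    (hcard : #A ≤ q + 1) (hP : P ∈ A) : ∃ h : Dual F V, h ≠ 0 ∧ h P = 0 ∧ sectionCard A h = 1 := by
  obtain ⟨f, g, hfg, hfP, hgP⟩ := hA.exists_pencil_of_mem hV hP
  by_contra! hno
  have hsecant {h : Dual F V} (hh : h ≠ 0) (hhP : h P = 0) : 2 ≤ sectionCard A h := by
    have hpos : 0 < sectionCard A h := card_pos.2 ⟨P, mem_filter.2 ⟨hP, hhP⟩⟩
    have := hno h hh hhP
    omega
  have hsum := hA.sectionCard_add_sum_pencil_of_mem hV hfg hP hfP hgP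
  have hge : q * 2 ≤ ∑ c : F, sectionCard A (g + c • f) :=
    card_nsmul_le_sum univ _ 2 fun c _ => hsecant (pencil_ne_zero hfg c) (by simp [hfP, hgP])
  have : 2 ≤ sectionCard A f := hsecant (hfg.ne_zero 0) hfP
  omega

lemma not_linearIndependent_of_tangent [Fintype F] (hA : IsVectorCap F A) (hV : finrank F V = 3)
    (hcard : #A = q + 1) (hP : P ∈ A) (hfP : f P = 0) (hgP : g P = 0)
    (hfA : sectionCard A f = 1) (hgA : sectionCard A g = 1) : ¬ LinearIndependent F ![f, g] := by
  intro hfg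
  have hsum := hA.sectionCard_add_sum_pencil_of_mem hV hfg hP hfP hgP
  have hlt : ∑ c : F, sectionCard A (g + c • f) < ∑ c : F, 2 :=
    sum_lt_sum (fun c _ => hA.sectionCard_le_two hV (pencil_ne_zero hfg c))
      ⟨0, mem_univ _, by simp [hgA]⟩
  simp only [sum_const, card_univ, smul_eq_mul] at hlt
  omega

lemma exists_tangent_through [Fintype F] (hA : IsVectorCap F A) (hV : finrank F V = 3)
    (hq : Even q) (hcard : #A = q + 1) (Q : V) :
    ∃ h : Dual F V, h ≠ 0 ∧ h Q = 0 ∧ sectionCard A h = 1 := by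
  obtain ⟨h, hh, hhQ, k, hk⟩ := exists_odd_sectionCard hq hV.ge A (hcard ▸ hq.add_one) Q
  have := hA.sectionCard_le_two hV hh
  exact ⟨h, hh, hhQ, by omega⟩

lemma exists_finset_tangent [Fintype F] (hA : IsVectorCap F A) (hV : finrank F V = 3)
    (hq : Even q) (hcard : #A = q + 1) :
    ∃ T : Finset (Dual F V), #T = q + 1 ∧ (∀ t ∈ T, t ≠ 0 ∧ sectionCard A t = 1) ∧
      (∀ t ∈ T, ∀ t' ∈ T, t ≠ t' → LinearIndependent F ![t, t']) ∧ ∀ Q, ∃ t ∈ T, t Q = 0 := by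
  classical
  choose t ht htP htA using hA.exists_tangent_through hV hq hcard
  have hzero {P P' : V} (hP : P ∈ A) (hP' : P' ∈ A) (h : t P P' = 0) : P = P' :=
    card_le_one.1 (htA P).le P (mem_filter.2 ⟨hP, htP P⟩) P' (mem_filter.2 ⟨hP', h⟩)
  have hinj : Set.InjOn t A := fun P hP P' hP' h => hzero hP hP' (h ▸ htP P')
  refine ⟨A.image t, by rw [card_image_of_injOn hinj, hcard], ?_, ?_, fun Q => ?_⟩
  · simp only [forall_mem_image]
    exact fun P _ => ⟨ht P, htA P⟩
  · simp only [forall_mem_image]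
    intro P hP P' hP' hne
    by_contra hdep
    obtain ⟨c, hc⟩ := exists_smul_eq_of_not_linearIndependent (ht P) hdep
    exact hne (congrArg t (hzero hP' hP (by simp [← hc, htP])).symm)
  · obtain ⟨P, hP⟩ := card_pos.1 ((htA Q).symm ▸ one_pos)
    obtain ⟨hPA, hQP⟩ := mem_filter.1 hP
    obtain ⟨c, hc⟩ := exists_smul_eq_of_not_linearIndependent (ht Q) <|
      hA.not_linearIndependent_of_tangent hV hcard hPA hQP (htP P) (htA Q) (htA P)
    exact ⟨t P, mem_image_of_mem t hPA, by simp [← hc, htP]⟩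

lemma exists_nucleus [Fintype F] (hA : IsVectorCap F A) (hV : finrank F V = 3) (hq : Even q)
    (hcard : #A = q + 1) :
    ∃ N : V, N ≠ 0 ∧ ∀ g : Dual F V, g ≠ 0 → g N = 0 → sectionCard A g = 1 := by
  obtain ⟨T, hTcard, hT, hTind, hTthrough⟩ := hA.exists_finset_tangent hV hq hcard
  obtain ⟨t, htT, t', htT', hne⟩ :=
    one_lt_card.1 (by rw [hTcard]; exact Nat.succ_lt_succ Fintype.card_pos)
  have hdim := finrank_ker_inf_ker_add_two (hTind t htT t' htT' hne)
  obtain ⟨N, ⟨htN, htN'⟩, hN⟩ := exists_mem_ne_zero_of_ne_bot (p := t.ker ⊓ t'.ker) <| by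
    rintro h
    rw [h, finrank_bot] at hdim
    omega
  refine ⟨N, hN, fun g hg hgN => by_contra fun hgA => ?_⟩
  obtain ⟨x, hNx, hgx⟩ := exists_linearIndependent_mem_ker hV hg hN hgN
  -- If the line `g = 0` is not in `T`, then each of its `q` points other than `N` lies on a line of
  -- `T` of its own, while two of the `q + 1` lines of `T` pass through `N`.
  have haxis : axisCard T (Dual.eval F V N) (Dual.eval F V x) = 0 := by
    refine card_eq_zero.2 (filter_eq_empty_iff.2 fun s hs ⟨hsN, hsx⟩ => hgA ?_)
    obtain ⟨c, rfl⟩ := exists_smul_eq_of_apply_eq_zero hV hg hNx hgN hgx hsN hsx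
    have hc : c ≠ 0 := fun h => (hT _ hs).1 (by simp [h])
    rw [← sectionCard_smul A g hc, (hT _ hs).2]
  have hsum := sectionCard_add_sum_pencil_eq haxis
  have hge : q * 1 ≤ ∑ c : F, sectionCard T (Dual.eval F V x + c • Dual.eval F V N) :=
    card_nsmul_le_sum univ _ 1 fun c _ => by
      obtain ⟨s, hs, hsx⟩ := hTthrough (x + c • N)
      exact card_pos.2 ⟨s, mem_filter.2 ⟨hs, by simpa using hsx⟩⟩
  have htwo : 1 < sectionCard T (Dual.eval F V N) :=
    one_lt_card.2 ⟨t, mem_filter.2 ⟨htT, htN⟩, t', mem_filter.2 ⟨htT', htN'⟩, hne⟩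
  omega

end IsVectorCap

end Plane

lemma IsVectorCap.card_le_add_two [Fintype F] [FiniteDimensional F V] {A : Finset V}
    (hA : IsVectorCap F A) (hV : finrank F V = 3) : #A ≤ q + 2 := by
  classical
  rcases A.eq_empty_or_nonempty with rfl | ⟨P, hP⟩
  · simp
  obtain ⟨f, g, hfg, hfP, -⟩ := hA.exists_pencil_of_mem hV hP
  have hf : f ≠ 0 := hfg.ne_zero 0
  have := hA.card_le_sectionCard_add hV hf hP hfP
  have := hA.sectionCard_le_two hV hf
  omega

section Moments

variable [Fintype F]

noncomputable local instance dualFintype [FiniteDimensional F V] : Fintype (Dual F V) :=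
  @Fintype.ofFinite _ (Module.finite_of_finite F)

lemma card_dual [FiniteDimensional F V] : Fintype.card (Dual F V) = q ^ finrank F V := by
  rw [Module.card_eq_pow_finrank (K := F), Subspace.dual_finrank_eq]

variable [DecidableEq F]

/-- `q - 1` if `v` lies on the hyperplane `f = 0` and `-1` otherwise: the sum of `χ (f v)` over the
nontrivial additive characters `χ` of `F`. -/
noncomputable def kernelWeight (f : Dual F V) (v : V) : ℝ := if f v = 0 then (q : ℝ) - 1 else -1

/-- The excess of the section of `S` by the hyperplane `f = 0` over the mean value `#S / q`,
scaled by `q`. -/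
noncomputable def sectionExcess (S : Finset V) (f : Dual F V) : ℝ := q * sectionCard S f - #S

lemma sectionExcess_zero (S : Finset V) : sectionExcess S (0 : Dual F V) = (q - 1) * #S := by
  simp [sectionExcess, sectionCard, sub_one_mul]

lemma sectionExcess_smul (S : Finset V) (f : Dual F V) {c : F} (hc : c ≠ 0) :
    sectionExcess S (c • f) = sectionExcess S f := by
  rw [sectionExcess, sectionCard_smul S f hc, sectionExcess]

lemma sectionExcess_eq_sum (S : Finset V) (f : Dual F V) :
    sectionExcess S f = ∑ v ∈ S, kernelWeight f v := by
  have hweight (v : V) : kernelWeight f v = q * (if f v = 0 then 1 else 0) - 1 := by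
    unfold kernelWeight
    split_ifs <;> ring
  simp_rw [hweight, sum_sub_distrib, ← mul_sum]
  simp [sectionExcess, sectionCard]

lemma kernelWeight_mul_self (f : Dual F V) (v : V) :
    kernelWeight f v * kernelWeight f v = (q - 2) * kernelWeight f v + (q - 1) := by
  unfold kernelWeight
  split_ifs <;> ring

lemma sum_kernelWeight_add_smul {h : Dual F V} {x : V} (hx : h x ≠ 0) (f : Dual F V) :
    ∑ c : F, kernelWeight (f + c • h) x = 0 := by
  have hweight (c : F) :
      kernelWeight (f + c • h) x = (if c = -(f x / h x) then (q : ℝ) else 0) - 1 := by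
    simp only [kernelWeight, add_smul_apply_eq_zero_iff hx]
    split_ifs <;> ring
  simp [hweight]

lemma kernelWeight_add {h : Dual F V} {v : V} (hv : h v = 0) (f : Dual F V) :
    kernelWeight (f + h) v = kernelWeight f v := by simp [kernelWeight, hv]

variable [FiniteDimensional F V]

lemma sum_kernelWeight_mul_eq_zero {U : Submodule F V} {x : V} (hx : x ∉ U) {Ψ : Dual F V → ℝ}
    (hΨ : ∀ f h : Dual F V, U ≤ h.ker → Ψ (f + h) = Ψ f) : ∑ f, kernelWeight f x * Ψ f = 0 := by
  -- Translating `f` by the multiples of a functional `h` that vanishes on `U` but not at `x` fixes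
  -- `Ψ f` and averages `kernelWeight f x` to zero.
  obtain ⟨h, hhx, hU⟩ := exists_le_ker_of_notMem hx
  have hinv (f : Dual F V) (c : F) : Ψ (f + c • h) = Ψ f :=
    hΨ f _ fun v hv => by simp [LinearMap.mem_ker.1 (hU hv)]
  have htranslate (c : F) :
      ∑ f, kernelWeight (f + c • h) x * Ψ f = ∑ f, kernelWeight f x * Ψ f := by
    simpa only [Equiv.coe_addRight, hinv] using
      Equiv.sum_comp (Equiv.addRight (c • h)) fun f => kernelWeight f x * Ψ f
  have hmean : (q : ℝ) * ∑ f, kernelWeight f x * Ψ f = 0 :=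
    calc (q : ℝ) * ∑ f, kernelWeight f x * Ψ f
        = ∑ c : F, ∑ f, kernelWeight (f + c • h) x * Ψ f := by
          simp only [htranslate, sum_const, card_univ, nsmul_eq_mul]
      _ = ∑ f, (∑ c : F, kernelWeight (f + c • h) x) * Ψ f := by
          rw [sum_comm]
          simp only [sum_mul]
      _ = 0 := by simp only [sum_kernelWeight_add_smul hhx, zero_mul, sum_const_zero]
  exact (mul_eq_zero.1 hmean).resolve_left (Nat.cast_ne_zero.2 Fintype.card_ne_zero)

lemma sum_kernelWeight {x : V} (hx : x ≠ 0) : ∑ f : Dual F V, kernelWeight f x = 0 := by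
  simpa using sum_kernelWeight_mul_eq_zero (F := F) (U := ⊥) (x := x) (by simpa)
    (Ψ := fun _ => 1) fun _ _ _ => rfl

lemma sum_kernelWeight_mul {x y : V} (h : x ∉ span F {y}) :
    ∑ f : Dual F V, kernelWeight f x * kernelWeight f y = 0 :=
  sum_kernelWeight_mul_eq_zero h fun f _ hU => kernelWeight_add (hU (mem_span_singleton_self y)) f

lemma sum_kernelWeight_mul_mul {x y z : V} (h : x ∉ span F {y, z}) :
    ∑ f : Dual F V, kernelWeight f x * (kernelWeight f y * kernelWeight f z) = 0 :=
  sum_kernelWeight_mul_eq_zero h fun f h hU => by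
    rw [kernelWeight_add (hU (subset_span (by simp))) f,
      kernelWeight_add (hU (subset_span (by simp))) f]

lemma sum_kernelWeight_mul_self {x : V} (hx : x ≠ 0) :
    ∑ f : Dual F V, kernelWeight f x * kernelWeight f x = (q - 1) * q ^ finrank F V := by
  simp_rw [kernelWeight_mul_self, sum_add_distrib, ← mul_sum, sum_kernelWeight hx]
  simp only [mul_zero, zero_add, sum_const, card_univ, card_dual, nsmul_eq_mul, Nat.cast_pow]
  ring

lemma sum_kernelWeight_mul_mul_self {x : V} (hx : x ≠ 0) :
    ∑ f : Dual F V, kernelWeight f x * (kernelWeight f x * kernelWeight f x)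
      = (q - 1) * (q - 2) * q ^ finrank F V := by
  simp_rw [kernelWeight_mul_self, mul_add, mul_left_comm _ ((q : ℝ) - 2), kernelWeight_mul_self,
    mul_add, sum_add_distrib, ← mul_sum, ← sum_mul, sum_kernelWeight hx]
  simp only [mul_zero, zero_mul, zero_add, sum_const, card_univ, card_dual, nsmul_eq_mul,
    Nat.cast_pow, add_zero]
  ring

lemma sum_sectionExcess {S : Finset V} (hS : 0 ∉ S) : ∑ f : Dual F V, sectionExcess S f = 0 := by
  simp_rw [sectionExcess_eq_sum]
  rw [sum_comm]
  exact sum_eq_zero fun x hx => sum_kernelWeight (ne_of_mem_of_not_mem hx hS)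

lemma exists_sectionExcess_neg {S : Finset V} (hS : 0 ∉ S) (hne : S.Nonempty) :
    ∃ f : Dual F V, f ≠ 0 ∧ sectionExcess S f < 0 := by
  by_contra! hno
  have hq : (1 : ℝ) < q := mod_cast Fintype.one_lt_card
  have hzero : 0 < sectionExcess S (0 : Dual F V) := by
    rw [sectionExcess_zero]
    exact mul_pos (by linarith) (by simpa)
  refine (sum_pos' (fun f _ => ?_) ⟨0, mem_univ _, hzero⟩).ne' (sum_sectionExcess (F := F) hS)
  rcases eq_or_ne f 0 with rfl | hf
  exacts [hzero.le, hno f hf]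

namespace IsVectorCap

variable {S : Finset V}

lemma sum_sectionExcess_sq (hS : IsVectorCap F S) :
    ∑ f : Dual F V, sectionExcess S f ^ 2 = #S * ((q - 1) * q ^ finrank F V) := by
  classical
  have hpair {x y : V} (hx : x ∈ S) (hy : y ∈ S) :
      ∑ f : Dual F V, kernelWeight f x * kernelWeight f y
        = if x = y then ((q : ℝ) - 1) * q ^ finrank F V else 0 := by
    split_ifs with hxy
    · rw [← hxy, sum_kernelWeight_mul_self (hS.ne_zero hx)]
    · exact sum_kernelWeight_mul (hS.notMem_span_singleton hx hy hxy)
  calc ∑ f : Dual F V, sectionExcess S f ^ 2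
      = ∑ x ∈ S, ∑ y ∈ S, ∑ f : Dual F V, kernelWeight f x * kernelWeight f y := by
        simp_rw [sectionExcess_eq_sum, pow_two, sum_mul_sum]
        rw [sum_comm]
        exact sum_congr rfl fun x _ => sum_comm
    _ = ∑ x ∈ S, ∑ y ∈ S, if x = y then ((q : ℝ) - 1) * q ^ finrank F V else 0 :=
        sum_congr rfl fun x hx => sum_congr rfl fun y hy => hpair hx hy
    _ = #S * ((q - 1) * q ^ finrank F V) := by simp

lemma sum_sectionExcess_cube (hS : IsVectorCap F S) :
    ∑ f : Dual F V, sectionExcess S f ^ 3 = #S * ((q - 1) * (q - 2) * q ^ finrank F V) := by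
  classical
  have htriple {x y z : V} (hx : x ∈ S) (hy : y ∈ S) (hz : z ∈ S) :
      ∑ f : Dual F V, kernelWeight f x * (kernelWeight f y * kernelWeight f z)
        = if x = y then if x = z then ((q : ℝ) - 1) * (q - 2) * q ^ finrank F V else 0 else 0 := by
    split_ifs with hxy hxz
    · rw [← hxy, ← hxz, sum_kernelWeight_mul_mul_self (hS.ne_zero hx)]
    · have hzx : z ≠ x := Ne.symm hxz
      simpa only [hxy, mul_comm, mul_left_comm] using
        sum_kernelWeight_mul_mul (hS.notMem_span z hz x hx y hy hzx (hxy ▸ hzx))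
    · by_cases hxz : x = z
      · have hyx : y ≠ x := Ne.symm hxy
        simpa only [hxz, mul_comm, mul_left_comm] using
          sum_kernelWeight_mul_mul (hS.notMem_span y hy x hx z hz hyx (hxz ▸ hyx))
      · exact sum_kernelWeight_mul_mul (hS.notMem_span x hx y hy z hz hxy hxz)
  calc ∑ f : Dual F V, sectionExcess S f ^ 3
      = ∑ x ∈ S, ∑ y ∈ S, ∑ z ∈ S,
          ∑ f : Dual F V, kernelWeight f x * (kernelWeight f y * kernelWeight f z) := by
        simp_rw [sectionExcess_eq_sum, pow_three, sum_mul_sum, mul_sum]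
        rw [sum_comm]
        refine sum_congr rfl fun x _ => ?_
        rw [sum_comm]
        exact sum_congr rfl fun y _ => sum_comm
    _ = ∑ x ∈ S, ∑ y ∈ S, ∑ z ∈ S, if x = y then
          if x = z then ((q : ℝ) - 1) * (q - 2) * q ^ finrank F V else 0 else 0 :=
        sum_congr rfl fun x hx => sum_congr rfl fun y hy => sum_congr rfl fun z hz =>
          htriple hx hy hz
    _ = #S * ((q - 1) * (q - 2) * q ^ finrank F V) := by simp

lemma sum_sq_mul_sectionExcess_add_le (hS : IsVectorCap F S) {L : ℝ} (E : Finset (Dual F V))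
    (hE : ∀ f ∉ E, -L ≤ sectionExcess S f) :
    ∑ f ∈ E, sectionExcess S f ^ 2 * (sectionExcess S f + L)
      ≤ #S * ((q - 1) * q ^ finrank F V * (q - 2 + L)) :=
  calc ∑ f ∈ E, sectionExcess S f ^ 2 * (sectionExcess S f + L)
      ≤ ∑ f : Dual F V, sectionExcess S f ^ 2 * (sectionExcess S f + L) :=
        sum_le_sum_of_subset_of_nonneg (subset_univ E) fun f _ hf =>
          mul_nonneg (sq_nonneg _) (by linarith [hE f hf])
    _ = ∑ f : Dual F V, sectionExcess S f ^ 3 + (∑ f : Dual F V, sectionExcess S f ^ 2) * L := by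
        rw [sum_mul, ← sum_add_distrib]
        exact sum_congr rfl fun f _ => by ring
    _ = #S * ((q - 1) * q ^ finrank F V * (q - 2 + L)) := by
        rw [hS.sum_sectionExcess_cube, hS.sum_sectionExcess_sq]
        ring

end IsVectorCap

end Moments

lemma IsVectorCap.exists_pencil_axisCard_eq_two [DecidableEq F] [FiniteDimensional F V]
    {S : Finset V} {x y : V} (hS : IsVectorCap F S) (hV : finrank F V = 4)
    (hx : x ∈ S) (hy : y ∈ S) (hxy : x ≠ y) :
    ∃ f g : Dual F V, LinearIndependent F ![f, g] ∧
      span F {x, y} ≤ f.ker ∧ span F {x, y} ≤ g.ker ∧ axisCard S f g = 2 := by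
  classical
  have hdim := finrank_span_pair (hS.linearIndependent_pair hx hy hxy)
  obtain ⟨f, g, hfg, hf, hg⟩ := exists_pencil_le_ker (F := F) (U := span F {x, y}) (by omega)
  have haxis := ker_inf_ker_eq hfg hf hg (by omega)
  refine ⟨f, g, hfg, hf, hg, card_eq_two.2 ⟨x, y, hxy, Subset.antisymm (fun z hz => ?_) ?_⟩⟩
  · obtain ⟨hzS, hfz, hgz⟩ := mem_filter.1 hz
    by_contra hne
    simp only [Finset.mem_insert, Finset.mem_singleton, not_or] at hne
    exact hS.notMem_span z hzS x hx y hy hne.1 hne.2 (haxis ▸ ⟨hfz, hgz⟩)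
  · have hmem {z : V} (hzS : z ∈ S) (hz : z ∈ span F {x, y}) : z ∈ {v ∈ S | f v = 0 ∧ g v = 0} :=
      mem_filter.2 ⟨hzS, hf hz, hg hz⟩
    exact insert_subset (hmem hx (subset_span (by simp)))
      (singleton_subset_iff.2 (hmem hy (subset_span (by simp))))

section Solid

variable [Fintype F] [FiniteDimensional F V] {S : Finset V}

namespace IsVectorCap

section Planes

variable [DecidableEq F] {f g : Dual F V} {x y P : V}

lemma sectionCard_le_card_add_two (hS : IsVectorCap F S) (hV : finrank F V = 4) (hf : f ≠ 0) :
    sectionCard S f ≤ q + 2 := by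
  rw [← card_hyperplaneSection]
  exact (hS.restrict f).card_le_add_two (finrank_ker_eq hV hf)

lemma axisCard_ne_one (hS : IsVectorCap F S) (hV : finrank F V = 4)
    (hfg : LinearIndependent F ![f, g]) (hf : sectionCard S f = q + 2) : axisCard S f g ≠ 1 := by
  rw [← sectionCard_hyperplaneSection]
  exact (hS.restrict f).sectionCard_ne_one (finrank_ker_eq hV (hfg.ne_zero 0))
    (by rw [card_hyperplaneSection, hf]) (comp_subtype_ker_ne_zero hfg)

lemma exists_sectionCard_eq_add_two (hS : IsVectorCap F S) (hV : finrank F V = 4)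
    (hcard : q ^ 2 + 2 ≤ #S) (hx : x ∈ S) (hy : y ∈ S) (hxy : x ≠ y) :
    ∃ f : Dual F V, f ≠ 0 ∧ span F {x, y} ≤ f.ker ∧ sectionCard S f = q + 2 := by
  obtain ⟨f, g, hfg, hfU, hgU, haxis⟩ := hS.exists_pencil_axisCard_eq_two hV hx hy hxy
  by_contra! hno
  have hle {h : Dual F V} (hh : h ≠ 0) (hU : span F {x, y} ≤ h.ker) : sectionCard S h ≤ q + 1 :=
    Nat.lt_succ_iff.1 ((hS.sectionCard_le_card_add_two hV hh).lt_of_ne (hno h hh hU))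
  have hsum := sectionCard_add_sum_pencil S f g
  have hpencil : ∑ c : F, sectionCard S (g + c • f) ≤ q * (q + 1) :=
    sum_le_card_nsmul univ _ _ fun c _ => hle (pencil_ne_zero hfg c) fun z hz => by
      simp [LinearMap.mem_ker.1 (hfU hz), LinearMap.mem_ker.1 (hgU hz)]
  have hf : sectionCard S f ≤ q + 1 := hle (hfg.ne_zero 0) hfU
  rw [haxis] at hsum
  nlinarith

lemma exists_insert_of_sectionCard_eq [DecidableEq V] (hS : IsVectorCap F S)
    (hV : finrank F V = 4) (hq : Even q) (hcard : q ^ 2 + 2 ≤ #S) (hf : f ≠ 0)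
    (hfS : sectionCard S f = q + 1) : ∃ N ∉ S, IsVectorCap F (insert N S) := by
  obtain ⟨⟨N, hfN⟩, hN, hnucleus⟩ := (hS.restrict f).exists_nucleus (finrank_ker_eq hV hf) hq
    (by rw [card_hyperplaneSection, hfS])
  -- A secant of `S` through `N` lies on a plane meeting `S` in `q + 2` points. That plane and
  -- `f = 0` intersect in a line through the nucleus, hence in a tangent, but a `(q + 2)`-arc has
  -- no tangents.
  have hpair {x y : V} (hx : x ∈ S) (hy : y ∈ S) (hxy : x ≠ y) : N ∉ span F {x, y} := fun hmem => by
    obtain ⟨f', hf', hU, hf'S⟩ := hS.exists_sectionCard_eq_add_two hV hcard hx hy hxy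
    have hind : LinearIndependent F ![f, f'] := by
      by_contra hdep
      obtain ⟨c, rfl⟩ := exists_smul_eq_of_not_linearIndependent hf hdep
      rw [sectionCard_smul S f (by rintro rfl; simp at hf'), hfS] at hf'S
      omega
    refine hS.axisCard_ne_one hV (LinearIndependent.pair_symm_iff.1 hind) hf'S ?_
    rw [axisCard_comm, ← sectionCard_hyperplaneSection]
    exact hnucleus _ (comp_subtype_ker_ne_zero hind) (hU hmem)
  have hforall (x : V) (hx : x ∈ S) (y : V) (hy : y ∈ S) : N ∉ span F {x, y} := by
    obtain ⟨z, hz, hzx⟩ := exists_mem_ne (by omega : 1 < #S) x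
    rcases eq_or_ne x y with rfl | hxy
    · exact fun hmem => hpair hx hz hzx.symm (span_mono (by simp) hmem)
    · exact hpair hx hy hxy
  exact ⟨N, fun hNS => hforall N hNS N hNS (subset_span (by simp)),
    hS.insert_of_forall_notMem_span (by simpa using hN) hforall⟩

lemma sectionCard_eq_add_two_of_complete [DecidableEq V] (hS : IsVectorCap F S)
    (hV : finrank F V = 4) (hq : Even q) (hcard : q ^ 2 + 2 ≤ #S)
    (hmax : ∀ N ∉ S, ¬ IsVectorCap F (insert N S)) (hf : f ≠ 0) (hP : P ∈ S)
    (hfP : f P = 0) : sectionCard S f = q + 2 := by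
  have hne {h : Dual F V} (hh : h ≠ 0) : sectionCard S h ≠ q + 1 := fun hS' => by
    obtain ⟨N, hNS, hN⟩ := hS.exists_insert_of_sectionCard_eq hV hq hcard hh hS'
    exact hmax N hNS hN
  by_contra hfS
  have hle : sectionCard S f ≤ q := by
    have := hS.sectionCard_le_card_add_two hV hf
    have := hne hf
    omega
  obtain ⟨h, hh, -, htangent⟩ := (hS.restrict f).exists_tangent (finrank_ker_eq hV hf)
    (by rw [card_hyperplaneSection]; omega) (P := ⟨P, hfP⟩) (by simpa)
  obtain ⟨g, rfl⟩ := LinearMap.exists_extend h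
  obtain ⟨w, hw⟩ := DFunLike.ne_iff.1 hh
  have hfg : LinearIndependent F ![f, g] := linearIndependent_pair_of_apply hf w.2 hw
  rw [sectionCard_hyperplaneSection] at htangent
  have hsum := sectionCard_add_sum_pencil S f g
  obtain ⟨c, -, hc⟩ : ∃ c ∈ (univ : Finset F), q < sectionCard S (g + c • f) :=
    exists_lt_of_sum_lt (f := fun _ => q) <| by
      rw [sum_const, card_univ, smul_eq_mul]
      rw [htangent] at hsum
      nlinarith
  have hcf := linearIndependent_pencil hfg c
  refine hS.axisCard_ne_one hV (LinearIndependent.pair_symm_iff.1 hcf) ?_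
    ((axisCard_add_smul_left S f g c).trans htangent)
  have := hS.sectionCard_le_card_add_two hV (pencil_ne_zero hfg c)
  have := hne (pencil_ne_zero hfg c)
  omega

end Planes

lemma card_eq_of_complete [DecidableEq V] (hS : IsVectorCap F S) (hV : finrank F V = 4)
    (hq : Even q) (hcard : q ^ 2 + 2 ≤ #S) (hmax : ∀ N ∉ S, ¬ IsVectorCap F (insert N S)) :
    #S = q ^ 2 + q + 2 := by
  classical
  obtain ⟨x, hx, y, hy, hxy⟩ := one_lt_card.1 (by omega : 1 < #S)
  obtain ⟨f, g, hfg, hfU, hgU, haxis⟩ := hS.exists_pencil_axisCard_eq_two hV hx hy hxy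
  have hfx : f x = 0 := hfU (subset_span (by simp))
  have hgx : g x = 0 := hgU (subset_span (by simp))
  have hsection {h : Dual F V} (hh : h ≠ 0) (hhx : h x = 0) : sectionCard S h = q + 2 :=
    hS.sectionCard_eq_add_two_of_complete hV hq hcard hmax hh hx hhx
  have hpencil : ∑ c : F, sectionCard S (g + c • f) = q * (q + 2) :=
    sum_const_nat fun c _ => hsection (pencil_ne_zero hfg c) (by simp [hfx, hgx])
  have hsum := sectionCard_add_sum_pencil S f g
  have hf : sectionCard S f = q + 2 := hsection (hfg.ne_zero 0) hfx
  rw [hpencil, haxis, hf] at hsum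
  linarith

lemma exists_insert_of_sq_add_two_le [DecidableEq V] (hS : IsVectorCap F S) (hV : finrank F V = 4)
    (hq : Even q) (hq2 : 2 < q) (hcard : q ^ 2 + 2 ≤ #S) : ∃ N ∉ S, IsVectorCap F (insert N S) := by
  classical
  by_contra! hmax
  have hcard' := hS.card_eq_of_complete hV hq hcard hmax
  have hsection {h : Dual F V} (hh : h ≠ 0) (hhS : sectionCard S h ≠ 0) :
      sectionCard S h = q + 2 := by
    obtain ⟨P, hP⟩ := card_pos.1 (Nat.pos_of_ne_zero hhS)
    obtain ⟨hPS, hhP⟩ := mem_filter.1 hP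
    exact hS.sectionCard_eq_add_two_of_complete hV hq hcard hmax hh hPS hhP
  obtain ⟨f, hf, hexcess⟩ :=
    exists_sectionExcess_neg (F := F) hS.zero_notMem (card_pos.1 (by omega : 0 < #S))
  have hfS : sectionCard S f = 0 := by
    by_contra hfS
    have hlt : q * sectionCard S f < #S := by
      rw [sectionExcess, sub_neg] at hexcess
      exact_mod_cast hexcess
    rw [hsection hf hfS, hcard'] at hlt
    nlinarith
  obtain ⟨g, hfg, -⟩ := exists_linearIndependent_le_ker (U := ⊥) hf bot_le (by simp [hV])
  have hdvd : q + 2 ∣ #S := by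
    rw [← sum_sectionCard_pencil_eq hfS g]
    refine dvd_sum fun c _ => ?_
    by_cases h0 : sectionCard S (g + c • f) = 0
    · simp [h0]
    · simp [hsection (pencil_ne_zero hfg c) h0]
  -- `q + 2` divides `q ^ 2 + q + 2 = (q + 2) * (q - 1) + 4`, hence `4`.
  obtain ⟨k, hk⟩ := hdvd
  rcases lt_or_ge k q with hkq | hqk <;> nlinarith

lemma card_le_sq_add_one (hS : IsVectorCap F S) (hV : finrank F V = 4) (hq : Even q)
    (hq2 : 2 < q) : #S ≤ q ^ 2 + 1 := by
  classical
  have : Finite V := Module.finite_of_finite F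
  obtain ⟨T, hST, hT⟩ := (Set.toFinite {T : Finset V | IsVectorCap F T}).exists_le_maximal hS
  by_contra! hcard
  obtain ⟨N, hNT, hN⟩ := hT.prop.exists_insert_of_sq_add_two_le hV hq hq2
    (hcard.trans_le (card_le_card hST))
  exact hNT (hT.le_of_ge hN (subset_insert N T) (mem_insert_self N T))

end IsVectorCap

end Solid

section Affine

variable [DecidableEq F] [Fintype F] {S : Finset V} {f₀ g : Dual F V}

lemma neg_le_sectionExcess_of_affine (hf₀ : sectionCard S f₀ = 0) {m : ℝ}
    (hm : ∀ g : Dual F V, LinearIndependent F ![f₀, g] → sectionCard S g ≤ m)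
    (hg : LinearIndependent F ![f₀, g]) : -((q - 1) * (q * m - #S)) ≤ sectionExcess S g := by
  have hsum : (#S : ℝ) = ∑ c : F, (sectionCard S (g + c • f₀) : ℝ) := by
    rw [← sum_sectionCard_pencil_eq hf₀ g, Nat.cast_sum]
  rw [← add_sum_erase _ _ (mem_univ (0 : F)), zero_smul, add_zero] at hsum
  have hle : ∑ c ∈ univ.erase (0 : F), (sectionCard S (g + c • f₀) : ℝ) ≤ (q - 1) * m := by
    refine (sum_le_card_nsmul _ _ m fun c _ => hm _ (linearIndependent_pencil hg c)).trans_eq ?_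
    rw [card_erase_of_mem (mem_univ 0), card_univ, nsmul_eq_mul, Nat.cast_pred Fintype.card_pos]
  have hmul : (q : ℝ) * ∑ c ∈ univ.erase (0 : F), (sectionCard S (g + c • f₀) : ℝ)
      ≤ q * ((q - 1) * m) := mul_le_mul_of_nonneg_left hle (Nat.cast_nonneg _)
  simp only [sectionExcess]
  linear_combination hmul + (q : ℝ) * hsum

lemma sum_comp_sectionExcess_smul (hf₀ : sectionCard S f₀ = 0) (φ : ℝ → ℝ) :
    ∑ c : F, φ (sectionExcess S (c • f₀)) = φ ((q - 1) * #S) + (q - 1) * φ (-#S) := by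
  have hne {c : F} (hc : c ∈ univ.erase 0) : φ (sectionExcess S (c • f₀)) = φ (-#S) := by
    rw [sectionExcess_smul S f₀ (ne_of_mem_erase hc), sectionExcess, hf₀]
    simp
  rw [← add_sum_erase _ _ (mem_univ 0), zero_smul, sectionExcess_zero, sum_congr rfl fun c => hne,
    sum_const, card_erase_of_mem (mem_univ 0), card_univ, nsmul_eq_mul,
    Nat.cast_pred Fintype.card_pos]

variable [FiniteDimensional F V]

namespace IsVectorCap

lemma affine_moment_inequality (hS : IsVectorCap F S) (hne : S.Nonempty)
    (hf₀ : sectionCard S f₀ = 0) {m : ℝ}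
    (hm : ∀ g : Dual F V, LinearIndependent F ![f₀, g] → sectionCard S g ≤ m) :
    0 ≤ ((q : ℝ) - 2) * (q ^ finrank F V - q * #S ^ 2)
      + (q - 1) * (q * m - #S) * (q ^ finrank F V - q * #S) := by
  classical
  have hf₀_ne := ne_zero_of_sectionCard_eq_zero hne hf₀
  have hmoment := hS.sum_sq_mul_sectionExcess_add_le (univ.image fun c : F => c • f₀)
    fun g hg => neg_le_sectionExcess_of_affine hf₀ hm <|
      (LinearIndependent.pair_iff' hf₀_ne).2 fun c hc => hg (mem_image.2 ⟨c, mem_univ c, hc⟩)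
  rw [sum_image (smul_left_injective F hf₀_ne).injOn,
    sum_comp_sectionExcess_smul hf₀ fun u => u ^ 2 * (u + (q - 1) * (q * m - #S))] at hmoment
  have hpos : (0 : ℝ) < #S * (q - 1) := by
    have hq : (1 : ℝ) < q := mod_cast Fintype.one_lt_card
    exact mul_pos (mod_cast hne.card_pos) (by linarith)
  refine nonneg_of_mul_nonneg_right ?_ hpos
  linear_combination hmoment

lemma card_lt_of_affine (hS : IsVectorCap F S) (hf₀ : sectionCard S f₀ = 0)
    {m : ℝ} (hm : ∀ g : Dual F V, LinearIndependent F ![f₀, g] → sectionCard S g ≤ m)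
    {a : ℕ} (ha : 0 < a) (hneg : ((q : ℝ) - 2) * (q ^ finrank F V - q * a ^ 2)
      + (q - 1) * (q * m - a) * (q ^ finrank F V - q * a) < 0) : #S < a := by
  by_contra! hcard
  -- The moment inequality is not monotone in `#S`, so it is applied to exactly `a` vectors.
  obtain ⟨T, hTS, rfl⟩ := exists_subset_card_eq hcard
  refine hneg.not_ge ((hS.mono hTS).affine_moment_inequality (card_pos.1 ha)
    (Nat.le_zero.1 (hf₀ ▸ sectionCard_mono hTS f₀)) fun g hg => ?_)
  exact (Nat.cast_le.2 (sectionCard_mono hTS g)).trans (hm g hg)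

lemma card_lt_of_affine_of_finrank_eq_five (hS : IsVectorCap F S) (hV : finrank F V = 5)
    (hq : Even q) (hq2 : 2 < q) (hf₀ : sectionCard S f₀ = 0) :
    (#S : ℝ) < q ^ 3 - q ^ 2 + 4 * q := by
  have hm (g : Dual F V) (hg : LinearIndependent F ![f₀, g]) :
      (sectionCard S g : ℝ) ≤ q ^ 2 + 1 := by
    rw [← card_hyperplaneSection]
    exact_mod_cast (hS.restrict g).card_le_sq_add_one (finrank_ker_eq hV (hg.ne_zero 1)) hq hq2
  obtain ⟨a, ha⟩ : ∃ a : ℕ, (a : ℝ) = q ^ 3 - q ^ 2 + 4 * q :=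
    ⟨q * (q * (q - 1) + 4), by push_cast [Nat.cast_pred (Fintype.card_pos (α := F))]; ring⟩
  have hq3 : (3 : ℝ) ≤ q := mod_cast hq2
  have ha_pos : (0 : ℝ) < a := by rw [ha]; nlinarith [sq_nonneg (q : ℝ)]
  have hpoly : (0 : ℝ) < q ^ 4 + 4 * q ^ 3 - 13 * q ^ 2 + 13 * q - 20 := by
    nlinarith [pow_pos (by linarith : (0 : ℝ) < q) 3]
  rw [← ha, Nat.cast_lt]
  refine hS.card_lt_of_affine hf₀ hm (mod_cast ha_pos) ?_
  rw [hV, ha]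
  linear_combination mul_pos (pow_pos (by linarith : (0 : ℝ) < q) 3) hpoly

lemma card_lt_of_affine_of_finrank_eq_six (hS : IsVectorCap F S) (hV : finrank F V = 6)
    (hq : Even q) (hq2 : 2 < q) (hf₀ : sectionCard S f₀ = 0) :
    (#S : ℝ) < q ^ 4 - 2 * q ^ 3 + 9 * q ^ 2 := by
  have hm (g : Dual F V) (hg : LinearIndependent F ![f₀, g]) :
      (sectionCard S g : ℝ) ≤ q ^ 3 - q ^ 2 + 4 * q := by
    rw [← card_hyperplaneSection]
    exact ((hS.restrict g).card_lt_of_affine_of_finrank_eq_five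
      (finrank_ker_eq hV (hg.ne_zero 1)) hq hq2 (sectionCard_hyperplaneSection_eq_zero hf₀ g)).le
  obtain ⟨a, ha⟩ : ∃ a : ℕ, (a : ℝ) = q ^ 4 - 2 * q ^ 3 + 9 * q ^ 2 :=
    ⟨q ^ 2 * ((q - 1) ^ 2 + 8), by push_cast [Nat.cast_pred (Fintype.card_pos (α := F))]; ring⟩
  have hq3 : (3 : ℝ) ≤ q := mod_cast hq2
  have ha_pos : (0 : ℝ) < a := by rw [ha]; nlinarith [sq_nonneg ((q : ℝ) ^ 2 - q)]
  have hpoly : (0 : ℝ) < q ^ 4 + 17 * q ^ 3 - 55 * q ^ 2 + 91 * q - 117 := by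
    nlinarith [pow_pos (by linarith : (0 : ℝ) < q) 3]
  rw [← ha, Nat.cast_lt]
  refine hS.card_lt_of_affine hf₀ hm (mod_cast ha_pos) ?_
  rw [hV, ha]
  linear_combination mul_pos (pow_pos (by linarith : (0 : ℝ) < q) 5) hpoly

end IsVectorCap

end Affine

section HigherDimension

variable [Fintype F] [FiniteDimensional F V] {S : Finset V}

namespace IsVectorCap

lemma card_le_pow_mul_of_affine [DecidableEq F] (hS : IsVectorCap F S) {j : ℕ}
    (hV : finrank F V = j + 6) (hq : Even q) (hq2 : 2 < q) {f₀ : Dual F V}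
    (hf₀ : sectionCard S f₀ = 0) : (#S : ℝ) ≤ q ^ (j + 2) * (q ^ 2 - 2 * q + 9) := by
  induction j generalizing V with
  | zero => exact (hS.card_lt_of_affine_of_finrank_eq_six hV hq hq2 hf₀).le.trans_eq (by ring)
  | succ j ih =>
    rcases S.eq_empty_or_nonempty with rfl | hne
    · have : (0 : ℝ) ≤ q ^ 2 - 2 * q + 9 := by nlinarith [sq_nonneg ((q : ℝ) - 1)]
      simpa using by positivity
    obtain ⟨g, hg, -⟩ := exists_linearIndependent_le_ker
      (ne_zero_of_sectionCard_eq_zero hne hf₀) (U := ⊥) bot_le (by rw [finrank_bot, hV]; omega)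
    have hsection (c : F) :
        (sectionCard S (g + c • f₀) : ℝ) ≤ q ^ (j + 2) * (q ^ 2 - 2 * q + 9) := by
      rw [← card_hyperplaneSection]
      exact ih (hS.restrict _) (finrank_ker_eq hV (pencil_ne_zero hg c))
        (sectionCard_hyperplaneSection_eq_zero hf₀ _)
    calc (#S : ℝ) = ∑ c : F, (sectionCard S (g + c • f₀) : ℝ) := by
          rw [← sum_sectionCard_pencil_eq hf₀ g, Nat.cast_sum]
      _ ≤ ∑ _c : F, (q : ℝ) ^ (j + 2) * (q ^ 2 - 2 * q + 9) := sum_le_sum fun c _ => hsection c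
      _ = q ^ (j + 1 + 2) * (q ^ 2 - 2 * q + 9) := by
          rw [sum_const, card_univ, nsmul_eq_mul]
          ring

lemma exists_sectionCard_lt [DecidableEq F] (hS : IsVectorCap F S) {k : ℕ}
    (hV : finrank F V = k + 4) (hk : 2 ≤ k) (hq2 : 2 < q)
    (hcard : (#S : ℝ) = q ^ k * (q ^ 2 - 2 * q + 13)) :
    ∃ f : Dual F V, (sectionCard S f : ℝ) < 4 * q ^ k := by
  by_contra! hno
  have hq3 : (3 : ℝ) ≤ q := mod_cast hq2
  have hle := hS.sum_sq_mul_sectionExcess_add_le (L := #S - 4 * q * q ^ k) {0} fun f _ => by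
    have := mul_le_mul_of_nonneg_left (hno f) (Nat.cast_nonneg (α := ℝ) q)
    simp only [sectionExcess]
    linarith
  rw [sum_singleton, sectionExcess_zero, hcard, hV, pow_add] at hle
  set s : ℝ := (q : ℝ) ^ k
  have hs : (q : ℝ) ^ 2 ≤ s := pow_le_pow_right₀ (by linarith) hk
  have hmean : 0 < (q : ℝ) ^ 2 - 2 * q + 13 := by nlinarith
  have hpoly : (0 : ℝ) < q ^ 4 + 17 * q ^ 3 - 71 * q ^ 2 + 163 * q - 117 := by
    nlinarith [pow_pos (by linarith : (0 : ℝ) < q) 3]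
  have hfactor : 0 < s * (q ^ 4 + 17 * q ^ 3 - 71 * q ^ 2 + 163 * q - 117)
      + q * (q - 2) * (s - q ^ 2) := by
    have : 0 ≤ (q : ℝ) * (q - 2) := mul_nonneg (by linarith) (by linarith)
    have := mul_nonneg this (sub_nonneg.2 hs)
    have := mul_pos (by nlinarith : 0 < s) hpoly
    linarith
  have hcommon : 0 < ((q : ℝ) - 1) * q * s ^ 2 * (q ^ 2 - 2 * q + 13) := by
    have : 0 < (q : ℝ) - 1 := by linarith
    have : 0 < s := by nlinarith
    positivity
  refine hle.not_gt ?_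
  linear_combination mul_pos hcommon hfactor

lemma card_lt_pow_mul (hS : IsVectorCap F S) {j : ℕ} (hV : finrank F V = j + 6) (hq : Even q)
    (hq2 : 2 < q) : (#S : ℝ) < q ^ (j + 2) * (q ^ 2 - 2 * q + 13) := by
  classical
  by_contra! hcard
  obtain ⟨a, ha⟩ : ∃ a : ℕ, (a : ℝ) = q ^ (j + 2) * (q ^ 2 - 2 * q + 13) :=
    ⟨q ^ (j + 2) * ((q - 1) ^ 2 + 12),
      by push_cast [Nat.cast_pred (Fintype.card_pos (α := F))]; ring⟩
  obtain ⟨T, hTS, rfl⟩ := exists_subset_card_eq (Nat.cast_le.1 (ha.trans_le hcard))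
  have hT := hS.mono hTS
  obtain ⟨f, hf⟩ := hT.exists_sectionCard_lt hV (by omega) hq2 ha
  have haffine : (#{v ∈ T | f v ≠ 0} : ℝ) ≤ q ^ (j + 2) * (q ^ 2 - 2 * q + 9) :=
    (hT.mono (filter_subset _ T)).card_le_pow_mul_of_affine hV hq hq2 (f₀ := f) <| by
      simp [sectionCard, filter_filter]
  have hsplit : (sectionCard T f + #{v ∈ T | f v ≠ 0} : ℝ) = #T :=
    mod_cast card_filter_add_card_filter_not _
  linarith

end IsVectorCap

end HigherDimension

section Projective

variable {n : ℕ} {K : Set (PGPoint F n)}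

lemma rep_notMem_span_singleton {P Q : PGPoint F n} (hPQ : P ≠ Q) : P.rep ∉ span F {Q.rep} := by
  intro hmem
  obtain ⟨a, ha⟩ := mem_span_singleton.1 hmem
  apply hPQ
  rw [← P.mk_rep, ← Q.mk_rep, Projectivization.mk_eq_mk_iff']
  exact ⟨a, ha⟩

lemma coll3_of_rep_mem_span {P Q R : PGPoint F n} (h : P.rep ∈ span F {Q.rep, R.rep}) :
    Coll3 P Q R := by
  classical
  have hsup : P.submodule ⊔ Q.submodule ⊔ R.submodule = span F {Q.rep, R.rep} := by
    rw [P.submodule_eq, Q.submodule_eq, R.submodule_eq, sup_assoc, ← span_union,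
      Set.singleton_union, sup_eq_right, span_singleton_le_iff_mem]
    exact h
  rw [Coll3, hsup]
  exact_mod_cast (finrank_span_finset_le_card ({Q.rep, R.rep} : Finset _)).trans card_le_two

lemma exists_isVectorCap [Finite F] (hK : IsCap K) :
    ∃ S : Finset (Fin (n + 1) → F), IsVectorCap F S ∧ #S = K.ncard := by
  classical
  have hinj : Function.Injective (Projectivization.rep (K := F) (V := Fin (n + 1) → F)) :=
    fun P Q h => by_contra fun hPQ => rep_notMem_span_singleton hPQ (h ▸ mem_span_singleton_self _)
  refine ⟨K.toFinite.toFinset.image Projectivization.rep, ⟨?_, ?_⟩, ?_⟩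
  · simpa using fun P _ => P.rep_nonzero
  · simp only [mem_image, Set.Finite.mem_toFinset]
    rintro _ ⟨P, hP, rfl⟩ _ ⟨Q, hQ, rfl⟩ _ ⟨R, hR, rfl⟩ hPQ hPR hmem
    have hPQ := ne_of_apply_ne _ hPQ
    rcases eq_or_ne Q R with rfl | hQR
    · exact rep_notMem_span_singleton hPQ (by simpa using hmem)
    · exact hK P hP Q hQ R hR hPQ (ne_of_apply_ne _ hPR) hQR (coll3_of_rep_mem_span hmem)
  · rw [card_image_of_injective _ hinj, Set.ncard_eq_toFinset_card K]

theorem stmt11_general [Fintype F] (hqeven : Even q) (hq : 2 < q) (hn : 5 ≤ n) (hK : IsCap K) :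
    (K.ncard : ℝ) < (q : ℝ) ^ (n - 1) - 2 * q ^ (n - 2) + 13 * q ^ (n - 3) := by
  classical
  obtain ⟨j, rfl⟩ := Nat.exists_eq_add_of_le' hn
  obtain ⟨S, hS, hcard⟩ := exists_isVectorCap hK
  calc (K.ncard : ℝ) = #S := by rw [hcard]
    _ < q ^ (j + 2) * (q ^ 2 - 2 * q + 13) := hS.card_lt_pow_mul (by simp) hqeven hq
    _ = q ^ (j + 4) - 2 * q ^ (j + 3) + 13 * q ^ (j + 2) := by ring

end Projective

end CapBounds

lemma quadratic_bound_le_sqrt_five_bound {q : ℝ} (hq : 10 ≤ q) {n : ℕ} (hn : 4 ≤ n) :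
    q ^ (n - 1) - 2 * q ^ (n - 2) + 13 * q ^ (n - 3) ≤ q ^ (n - 1) - q ^ (n - 2)
      + 2 * √5 * q ^ (n - 3) - 9 * q ^ (n - 4)
      - 2 * (∑ i ∈ Finset.range (n - 4), q ^ i) + 1 := by
  obtain ⟨m, rfl⟩ := Nat.exists_eq_add_of_le' hn
  simp only [Nat.add_sub_cancel, Nat.reduceSubDiff]
  have hsqrt : (2.23 : ℝ) ≤ √5 := Real.le_sqrt_of_sq_le (by norm_num)
  have hgeom : 9 * ∑ i ∈ Finset.range m, q ^ i ≤ q ^ m - 1 := by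
    rw [← geom_sum_mul, mul_comm]
    exact mul_le_mul_of_nonneg_left (by linarith) (Finset.sum_nonneg fun i _ => by positivity)
  have hsqrt_mul := mul_le_mul_of_nonneg_right hsqrt (by positivity : 0 ≤ q ^ (m + 1))
  have hquad : 0 ≤ q ^ m * (q ^ 2 - 8.54 * q - 9 - 2 / 9) :=
    mul_nonneg (by positivity) (by nlinarith)
  linear_combination hquad + 2 * hsqrt_mul + 2 / 9 * hgeom

theorem stmt11 (F : Type*) [Field F] [Fintype F] (q : ℕ) (hcard : Fintype.card F = q)
    (hqeven : Even q) (hq : 8 < q) (n : ℕ) (hn : 5 ≤ n)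
    (K : Set (PGPoint F n)) (hK : IsCap K) :
    (K.ncard : ℝ) < (q : ℝ) ^ (n - 1) - (q : ℝ) ^ (n - 2)
      + 2 * Real.sqrt 5 * (q : ℝ) ^ (n - 3) - 9 * (q : ℝ) ^ (n - 4)
      - 2 * (∑ i ∈ Finset.range (n - 4), (q : ℝ) ^ i) + 1 := by
  subst hcard
  have hq10 : 10 ≤ Fintype.card F := by grind
  exact (stmt11_general hqeven (by omega) hn hK).trans_le
    (quadratic_bound_le_sqrt_five_bound (q := Fintype.card F) (mod_cast hq10) (by omega))
end

section
/- For every n ≥ 5, every k-cap in PG(n, 8) satisfies k ≤ 478·8^{n−4} − 2(8^{n−5} + ⋯ + 8 + 1) + 1, where 8^{n−5} + ⋯ + 8 + 1 denotes the geometric sum Σ_{i=0}^{n−5} 8^i. -/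
open Module

/-!
Let `q` be even and let `Q` be a point off a cap in a subspace of rank `j + 2`, on some secant of
the cap there. If the cap has `c` points in the subspace, of which `x` are on tangents through `Q`,
then `c + x ≤ 2 + q + ⋯ + q ^ j`: for planes this is Segre's method of tangents, and in general it
follows by counting along the planes through a secant on `Q`. Counting the defects in this
inequality over all points of a solid shows that a cap containing a plane section of at least
`q + 2` points has at most `(q ^ 3 + 2 * q ^ 2 + 3 * q + 4) / (q + 3)` points in the solid, which is
`60` when `q = 8`.

Now let a complete cap of `PG(4, 8)` have `c ≥ 480` points. Its plane sections have at most `9`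
points, so through any two points of the cap there are many planes meeting it in an oval. Each oval
leaves at least `7` representatives of points `Q` of its plane off all its secants. On the other
hand, for a given `Q` such planes lie only in the few solids in which no secant passes through `Q`;
adding `Q` to the cap in such a solid, the bound `60` applies and limits the number of planes in
terms of `c + x`. Summed over `Q`, the two estimates contradict each other, so `c ≤ 479`.

In higher dimensions, count along the rank `5` subspaces through a solid with at least `61` points;
if there is no such solid, along the solids through a plane with at least `9` points; and if there
is no such plane, along the planes through a secant.
-/

namespace PGCap

open scoped Finset
open Submodule

theorem sum_sum_erase_eq_zero_of_symm {ι M : Type*} [DecidableEq ι] [AddCommMonoid M]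
    (htwo : ∀ a : M, a + a = 0) (E : Finset ι) (c : ι → ι → M)
    (hsymm : ∀ i j, c i j = c j i) :
    ∑ i ∈ E, ∑ j ∈ E.erase i, c i j = 0 := by
  rw [Finset.sum_sigma']
  refine Finset.sum_involution (fun p _ => ⟨p.2, p.1⟩) ?_ ?_ ?_ ?_
  · rintro ⟨i, j⟩ _
    rw [hsymm j i, htwo]
  · rintro ⟨i, j⟩ hij _ h
    simp only [Finset.mem_sigma, Finset.mem_erase] at hij
    exact hij.2.1 (congrArg Sigma.fst h)
  · rintro ⟨i, j⟩ hij
    simp only [Finset.mem_sigma, Finset.mem_erase] at hij ⊢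
    exact ⟨hij.2.2, hij.2.1.symm, hij.1⟩
  · simp

section FiniteField

variable {F : Type*} [Field F] [Fintype F]

theorem charP_two_of_even_card (hq : Even (Fintype.card F)) : CharP F 2 :=
  ringChar.of_eq (FiniteField.even_card_iff_char_two.2 (Nat.even_iff.1 hq))

theorem prod_compl_sub_mul_prod_erase_sub [DecidableEq F] {Y : Finset F} {e : F} (he : e ∈ Y) :
    (∏ c ∈ Yᶜ, (e - c)) * ∏ k ∈ Y.erase e, (e - k) = -1 := by
  have hunits : ∏ c ∈ Finset.univ.erase e, (e - c) = ∏ u : Fˣ, (u : F) := by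
    symm
    refine Finset.prod_bij (fun u _ => e - u) ?_ ?_ ?_ ?_
    · simp
    · intro u _ v _ h
      exact Units.ext (by simpa using h)
    · intro c hc
      exact ⟨Units.mk0 (e - c) (sub_ne_zero.2 (Finset.ne_of_mem_erase hc).symm), by simp⟩
    · simp
  have hdisj : Disjoint Yᶜ (Y.erase e) :=
    (disjoint_compl_left (a := Y)).mono_right (Finset.erase_subset e Y)
  have hunion : Yᶜ ∪ Y.erase e = Finset.univ.erase e := by
    ext c
    by_cases hc : c = e <;> simp [hc, he, em']
  rw [← Finset.prod_union hdisj, hunion, hunits, ← Units.coe_prod,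
    FiniteField.prod_univ_units_id_eq_neg_one, Units.val_neg, Units.val_one]

-- Lagrange's formula with nodes `T` for the leading coefficient of the monic `∏ c ∉ Y, (X - c)`.
theorem sum_inv_prod_sub_mul_inv_prod_sub [DecidableEq F] {Y T : Finset F}
    (hcard : #Y + #T = Fintype.card F + 1) :
    ∑ e ∈ Y ∩ T, (∏ k ∈ Y.erase e, (e - k))⁻¹ * (∏ u ∈ T.erase e, (e - u))⁻¹ = -1 := by
  let p : Polynomial F := ∏ c ∈ Yᶜ, (Polynomial.X - Polynomial.C c)
  have hmonic : p.Monic := Polynomial.monic_prod_of_monic _ _ fun c _ => Polynomial.monic_X_sub_C c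
  have hdegree : p.degree + 1 = #T := by
    have hY := Finset.card_add_card_compl Y
    have : #Yᶜ + 1 = #T := by omega
    rw [← this]
    simp [p, Polynomial.degree_prod]
  have heval (e : F) : p.eval e = ∏ c ∈ Yᶜ, (e - c) := by
    simp [p, Polynomial.eval_prod]
  have hinterp := Lagrange.leadingCoeff_eq_sum (s := T) (v := id) Function.injective_id.injOn
    hdegree.symm
  have hon (e : F) (he : e ∈ Y) : p.eval e = -(∏ k ∈ Y.erase e, (e - k))⁻¹ := by
    have hprod := prod_compl_sub_mul_prod_erase_sub he
    have hne : ∏ k ∈ Y.erase e, (e - k) ≠ 0 := by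
      rintro h
      simp [h] at hprod
    rw [heval, neg_eq_neg_one_mul, eq_mul_inv_iff_mul_eq₀ hne, hprod]
  have hoff (e : F) (he : e ∉ Y) : p.eval e = 0 := by
    rw [heval]
    exact Finset.prod_eq_zero (Finset.mem_compl.2 he) (sub_self e)
  rw [hmonic.leadingCoeff] at hinterp
  rw [hinterp, ← Finset.sum_neg_distrib, Finset.inter_comm, ← Finset.filter_mem_eq_inter,
    Finset.sum_filter]
  refine Finset.sum_congr rfl fun e _ => ?_
  by_cases he : e ∈ Y
  · simp [he, hon e he, div_eq_mul_inv]
  · simp [he, hoff e he]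

end FiniteField

theorem erase_image_of_injOn {α β : Type*} [DecidableEq α] [DecidableEq β] {s : Finset α}
    {f : α → β} (hf : Set.InjOn f s) {a : α} (ha : a ∈ s) :
    (s.image f).erase (f a) = (s.erase a).image f := by
  ext b
  simp only [Finset.mem_erase, Finset.mem_image]
  constructor
  · rintro ⟨hb, c, hc, rfl⟩
    exact ⟨c, ⟨fun h => hb (h ▸ rfl), hc⟩, rfl⟩
  · rintro ⟨c, ⟨hca, hc⟩, rfl⟩
    exact ⟨fun h => hca (hf hc ha h), c, hc, rfl⟩

section Arc

variable {F ι : Type*} [Field F] [DecidableEq ι]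

theorem prod_erase_insert_image [DecidableEq F] {s : Finset ι} {w : ι → F}
    (hw : Set.InjOn w s) {c : F} (hc : ∀ k ∈ s, w k ≠ c) {j : ι} (hj : j ∈ s) :
    ∏ d ∈ (insert c (s.image w)).erase (w j), (w j - d)
      = (w j - c) * ∏ k ∈ s.erase j, (w j - w k) := by
  rw [Finset.erase_insert_of_ne (hc j hj).symm, Finset.prod_insert,
    erase_image_of_injOn hw hj, Finset.prod_image (hw.mono (Finset.erase_subset _ _))]
  simp only [Finset.mem_erase, Finset.mem_image]
  rintro ⟨_, k, hk, h⟩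
  exact hc k hk h

theorem slope_sub_mul_prod_mul_pow {s : Finset ι} {x y : ι → F} (hy : ∀ k ∈ s, y k ≠ 0) (c : F)
    {j : ι} (hj : j ∈ s) :
    ((x j / y j - c) * ∏ k ∈ s.erase j, (x j / y j - x k / y k)) * (y j ^ #s * ∏ k ∈ s, y k)
      = (x j - c * y j) * y j * ∏ k ∈ s.erase j, (x j * y k - x k * y j) := by
  have hyj := hy j hj
  have hprod : ∏ k ∈ s.erase j, (x j * y k - x k * y j)
      = (∏ k ∈ s.erase j, (x j / y j - x k / y k)) *
        (y j ^ #(s.erase j) * ∏ k ∈ s.erase j, y k) := by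
    rw [← Finset.prod_const, ← Finset.prod_mul_distrib, ← Finset.prod_mul_distrib]
    refine Finset.prod_congr rfl fun k hk => ?_
    have hyk := hy k (Finset.mem_of_mem_erase hk)
    field_simp
  have hc : (x j / y j - c) * y j = x j - c * y j := by field_simp
  rw [hprod, ← hc, ← Finset.mul_prod_erase s y hj, ← Finset.card_erase_add_one hj, pow_succ]
  ring

theorem slope_prod_mul_slope_prod [Fintype F] {s E : Finset ι} {x y : ι → F} (hE : E ⊆ s)
    (hcard : #s + #E + 1 = Fintype.card F) (hy : ∀ k ∈ s, y k ≠ 0) {j : ι} (hj : j ∈ E) :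
    ((x j / y j - 0) * ∏ k ∈ s.erase j, (x j / y j - x k / y k)) *
        ((x j / y j - 1) * ∏ k ∈ E.erase j, (x j / y j - x k / y k)) *
        ((∏ k ∈ s, y k) * ∏ k ∈ E, y k)
      = y j ^ 2 * x j * (x j - y j) * (∏ k ∈ s.erase j, (x j * y k - x k * y j)) *
        ∏ k ∈ E.erase j, (x j * y k - x k * y j) := by
  have hpow : y j ^ #s * y j ^ #E = 1 := by
    rw [← pow_add, show #s + #E = Fintype.card F - 1 by omega,
      FiniteField.pow_card_sub_one_eq_one _ (hy j (hE hj))]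
  have hs := slope_sub_mul_prod_mul_pow (x := x) hy 0 (hE hj)
  have hE' := slope_sub_mul_prod_mul_pow (x := x) (fun k hk => hy k (hE hk)) 1 hj
  set A := (x j / y j - 0) * ∏ k ∈ s.erase j, (x j / y j - x k / y k)
  set B := (x j / y j - 1) * ∏ k ∈ E.erase j, (x j / y j - x k / y k)
  calc A * B * ((∏ k ∈ s, y k) * ∏ k ∈ E, y k)
      = A * B * ((∏ k ∈ s, y k) * ∏ k ∈ E, y k) * (y j ^ #s * y j ^ #E) := by rw [hpow, mul_one]
    _ = A * (y j ^ #s * ∏ k ∈ s, y k) * (B * (y j ^ #E * ∏ k ∈ E, y k)) := by ring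
    _ = _ := by
      rw [hs, hE']
      ring

theorem sum_pencil [Fintype F] {s E : Finset ι} {x y : ι → F} (hE : E ⊆ s)
    (hcard : #s + #E + 1 = Fintype.card F) (hx : ∀ k ∈ s, x k ≠ 0) (hy : ∀ k ∈ s, y k ≠ 0)
    (hxy : ∀ k ∈ s, x k ≠ y k) (hdet : ∀ j ∈ s, ∀ k ∈ s, j ≠ k → x j * y k ≠ x k * y j) :
    ∑ j ∈ E, (y j ^ 2 * x j * (x j - y j) * (∏ k ∈ s.erase j, (x j * y k - x k * y j)) *
        ∏ k ∈ E.erase j, (x j * y k - x k * y j))⁻¹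
      = -((∏ k ∈ s, y k)⁻¹ * (∏ k ∈ E, y k)⁻¹) := by
  classical
  have hslope : Set.InjOn (fun k => x k / y k) s := by
    intro j hj k hk h
    by_contra hjk
    exact hdet j hj k hk hjk ((div_eq_div_iff (hy j hj) (hy k hk)).1 h)
  have hzero : ∀ k ∈ s, x k / y k ≠ 0 := fun k hk => div_ne_zero (hx k hk) (hy k hk)
  have hone : ∀ k ∈ s, x k / y k ≠ 1 := fun k hk h => hxy k hk ((div_eq_one_iff_eq (hy k hk)).1 h)
  have hslopeE := hslope.mono (Finset.coe_subset.2 hE)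
  let Y := insert 0 (s.image fun k => x k / y k)
  let T := insert 1 (E.image fun k => x k / y k)
  have hYT : Y ∩ T = E.image fun k => x k / y k := by
    ext d
    simp only [Y, T, Finset.mem_inter, Finset.mem_insert, Finset.mem_image]
    constructor
    · rintro ⟨rfl | ⟨k, hk, rfl⟩, h | h⟩
      · simp at h
      · exact h
      · exact absurd h (hone k hk)
      · exact h
    · rintro ⟨k, hk, rfl⟩
      exact ⟨Or.inr ⟨k, hE hk, rfl⟩, Or.inr ⟨k, hk, rfl⟩⟩
  have hYTcard : #Y + #T = Fintype.card F + 1 := by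
    rw [Finset.card_insert_of_notMem (by simpa using fun k hk => ⟨hx k hk, hy k hk⟩),
      Finset.card_insert_of_notMem (by simpa using fun k hk => hone k (hE hk)),
      Finset.card_image_of_injOn hslope, Finset.card_image_of_injOn hslopeE]
    omega
  have hsum := sum_inv_prod_sub_mul_inv_prod_sub hYTcard
  rw [hYT, Finset.sum_image hslopeE] at hsum
  rw [← neg_one_mul, ← hsum, Finset.sum_mul]
  refine Finset.sum_congr rfl fun j hj => ?_
  rw [prod_erase_insert_image hslope hzero (hE hj),
    prod_erase_insert_image hslopeE (fun k hk => hone k (hE hk)) hj]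
  rw [← slope_prod_mul_slope_prod hE hcard hy hj, mul_inv, mul_inv, mul_inv (∏ k ∈ s, y k)]

/-- The determinant with rows `(1, xᵢ, yᵢ)`, `(1, xⱼ, yⱼ)`, `(1, xₖ, yₖ)`, whose vanishing means
that three points of the affine plane are collinear. -/
def affineDet (x y : ι → F) (i j k : ι) : F :=
  (x j - x i) * (y k - y i) - (x k - x i) * (y j - y i)

/-- The contribution of the pair `e`, `j` to the partial fraction identity `sum_pencil` in the
pencil of lines through the point `e` of an arc. -/
def arcWeight (x y : ι → F) (s E : Finset ι) (e j : ι) : F :=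
  ((y j - y e) ^ 2 * (x j - x e) * ((x j - x e) - (y j - y e)) *
    (∏ k ∈ (s.erase e).erase j, affineDet x y e j k) *
    ∏ k ∈ (E.erase e).erase j, affineDet x y e j k)⁻¹

theorem arcWeight_comm [CharP F 2] (x y : ι → F) (s E : Finset ι) (e j : ι) :
    arcWeight x y s E e j = arcWeight x y s E j e := by
  have hdet (k : ι) : affineDet x y e j k = affineDet x y j e k := by
    rw [← CharTwo.neg_eq (affineDet x y j e k), affineDet, affineDet]
    ring
  have hfactor : (y j - y e) ^ 2 * (x j - x e) * ((x j - x e) - (y j - y e))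
      = (y e - y j) ^ 2 * (x e - x j) * ((x e - x j) - (y e - y j)) := by ring
  simp only [arcWeight, hdet, hfactor, Finset.erase_right_comm (a := e)]

theorem inv_prod_mul_inv_prod_eq_sum_arcWeight [Fintype F] [CharP F 2] {s E : Finset ι}
    {x y : ι → F} (hE : E ⊆ s) (hcard : #s + #E = Fintype.card F + 1) (hx : Set.InjOn x s)
    (hy : Set.InjOn y s) (hxy : Set.InjOn (fun i => x i - y i) s)
    (hdet : ∀ i ∈ s, ∀ j ∈ s, ∀ k ∈ s, i ≠ j → i ≠ k → j ≠ k → affineDet x y i j k ≠ 0)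
    {e : ι} (he : e ∈ E) :
    (∏ k ∈ s.erase e, (y e - y k))⁻¹ * (∏ k ∈ E.erase e, (y e - y k))⁻¹
      = ∑ j ∈ E.erase e, arcWeight x y s E e j := by
  have hes := hE he
  have hsub {k : ι} {f : ι → F} (hf : Set.InjOn f s) (hk : k ∈ s.erase e) : f k - f e ≠ 0 :=
    sub_ne_zero.2 fun h => Finset.ne_of_mem_erase hk (hf (Finset.mem_of_mem_erase hk) hes h)
  have hcard' : #(s.erase e) + #(E.erase e) + 1 = Fintype.card F := by
    have := Finset.card_erase_add_one hes
    have := Finset.card_erase_add_one he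
    omega
  have hsum := sum_pencil (x := fun k => x k - x e) (y := fun k => y k - y e)
    (Finset.erase_subset_erase e hE) hcard' (fun k hk => hsub hx hk) (fun k hk => hsub hy hk)
    (fun k hk h => hsub hxy hk (by linear_combination h)) (fun j hj k hk hjk h =>
      hdet e hes j (Finset.mem_of_mem_erase hj) k (Finset.mem_of_mem_erase hk)
        (Finset.ne_of_mem_erase hj).symm (Finset.ne_of_mem_erase hk).symm hjk (sub_eq_zero.2 h))
  rw [CharTwo.neg_eq] at hsum
  simp only [CharTwo.sub_eq_add, add_comm (y e)]
  simp only [CharTwo.sub_eq_add] at hsum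
  rw [← hsum]
  simp only [arcWeight, affineDet, CharTwo.sub_eq_add]

end Arc

/- Segre's method of tangents: were `2 * #s > q`, the partial fraction identity for the `y`-values
would equate `1` with the sum of `arcWeight` over ordered pairs of distinct points, which vanishes
in characteristic two. -/
theorem two_mul_card_le_of_arc {F ι : Type*} [Field F] [Fintype F] (hq : Even (Fintype.card F))
    {s : Finset ι} {x y : ι → F} (hx : Set.InjOn x s) (hy : Set.InjOn y s)
    (hxy : Set.InjOn (fun i => x i - y i) s)
    (hdet : ∀ i ∈ s, ∀ j ∈ s, ∀ k ∈ s, i ≠ j → i ≠ k → j ≠ k → affineDet x y i j k ≠ 0) :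
    2 * #s ≤ Fintype.card F := by
  classical
  have := charP_two_of_even_card hq
  by_contra! hlt
  have hs : #s ≤ Fintype.card F := by
    rw [← Finset.card_image_of_injOn hy]
    exact Finset.card_le_univ _
  obtain ⟨E, hE, hEcard⟩ :=
    Finset.exists_subset_card_eq (s := s) (n := Fintype.card F + 1 - #s) (by omega)
  have hcard : #s + #E = Fintype.card F + 1 := by omega
  have hyE := hy.mono (Finset.coe_subset.2 hE)
  have hsum := sum_inv_prod_sub_mul_inv_prod_sub (Y := s.image y) (T := E.image y)
    (by rwa [Finset.card_image_of_injOn hy, Finset.card_image_of_injOn hyE])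
  have hterm (e : ι) (he : e ∈ E) :
      (∏ k ∈ (s.image y).erase (y e), (y e - k))⁻¹ * (∏ k ∈ (E.image y).erase (y e), (y e - k))⁻¹
        = ∑ j ∈ E.erase e, arcWeight x y s E e j := by
    rw [erase_image_of_injOn hy (hE he), erase_image_of_injOn hyE he,
      Finset.prod_image (hy.mono (Finset.erase_subset _ _)),
      Finset.prod_image (hyE.mono (Finset.erase_subset _ _)),
      inv_prod_mul_inv_prod_eq_sum_arcWeight hE hcard hx hy hxy hdet he]
  rw [Finset.inter_eq_right.2 (Finset.image_subset_image hE), Finset.sum_image hyE,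
    Finset.sum_congr rfl hterm,
    sum_sum_erase_eq_zero_of_symm CharTwo.add_self_eq_zero E _ (arcWeight_comm x y s E)] at hsum
  exact neg_ne_zero.2 one_ne_zero hsum.symm

open scoped Classical

section Subspaces

variable {F V : Type*} [Field F] [AddCommGroup V] [Module F V]

/-- The section of a set of vectors, such as representatives of a point set, by a subspace. -/
noncomputable def sect (S : Finset V) (E : Submodule F V) : Finset V := {v ∈ S | v ∈ E}

variable {S : Finset V} {U E W : Submodule F V} {v : V}

theorem mem_sect : v ∈ sect S E ↔ v ∈ S ∧ v ∈ E := Finset.mem_filter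

theorem sect_subset : sect S E ⊆ S := Finset.filter_subset _ _

theorem sect_mono (h : U ≤ E) : sect S U ⊆ sect S E :=
  fun _ hv => mem_sect.2 ⟨(mem_sect.1 hv).1, h (mem_sect.1 hv).2⟩

theorem sect_mono_left {A : Finset V} (h : A ⊆ S) : sect A E ⊆ sect S E :=
  Finset.filter_subset_filter _ h

theorem sect_top : sect S (⊤ : Submodule F V) = S := Finset.filter_true_of_mem fun _ _ => mem_top

theorem sect_sect (h : U ≤ E) : sect (sect S E) U = sect S U := by
  ext v
  simp only [mem_sect, and_assoc]
  exact and_congr_right fun _ => and_iff_right_of_imp fun hv => h hv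

theorem card_sect_sub_card_sect (hUE : U ≤ E) :
    (#(sect S E) - #(sect S U) : ℤ) = #(sect S E \ sect S U) := by
  rw [Finset.cast_card_sdiff (sect_mono hUE)]

theorem eq_sup_span_singleton [FiniteDimensional F V] (hUW : U ≤ W)
    (hrank : finrank F W = finrank F U + 1) (hvW : v ∈ W) (hvU : v ∉ U) :
    W = U ⊔ span F {v} :=
  (eq_of_le_of_finrank_eq (sup_le hUW ((span_singleton_le_iff_mem v W).2 hvW))
    (by rw [hrank, finrank_sup_span_singleton hvU])).symm

end Subspaces

section Covers

variable {F V : Type*} [Field F] [AddCommGroup V] [Module F V] [Finite V]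

/-- The subspaces of `E` that contain `U` as a hyperplane: the points of the quotient geometry
`E / U`. -/
noncomputable def covers (U E : Submodule F V) : Finset (Submodule F V) :=
  (Set.toFinite {W | U ≤ W ∧ W ≤ E ∧ finrank F W = finrank F U + 1}).toFinset

variable {U E W : Submodule F V}

theorem mem_covers : W ∈ covers U E ↔ U ≤ W ∧ W ≤ E ∧ finrank F W = finrank F U + 1 := by
  simp [covers]

theorem sup_span_singleton_mem_covers (hUE : U ≤ E) {v : V} (hvE : v ∈ E) (hvU : v ∉ U) :
    U ⊔ span F {v} ∈ covers U E :=
  mem_covers.2 ⟨le_sup_left, sup_le hUE ((span_singleton_le_iff_mem v E).2 hvE),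
    finrank_sup_span_singleton hvU⟩

theorem sum_card_sect_covers (hUE : U ≤ E) (S : Finset V) :
    ∑ W ∈ covers U E, (#(sect S W) - #(sect S U) : ℤ) = #(sect S E) - #(sect S U) := by
  have hmaps : Set.MapsTo (fun v => U ⊔ span F {v}) ↑(sect S E \ sect S U) ↑(covers U E) := by
    intro v hv
    simp only [Finset.coe_sdiff, Set.mem_sdiff, Finset.mem_coe, mem_sect, not_and] at hv
    exact sup_span_singleton_mem_covers hUE hv.1.2 (hv.2 hv.1.1)
  rw [card_sect_sub_card_sect hUE, Finset.card_eq_sum_card_fiberwise hmaps, Nat.cast_sum]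
  refine Finset.sum_congr rfl fun W hW => ?_
  obtain ⟨hUW, hWE, hrank⟩ := mem_covers.1 hW
  rw [card_sect_sub_card_sect hUW]
  congr 2
  ext v
  simp only [Finset.mem_sdiff, Finset.mem_filter, mem_sect]
  constructor
  · rintro ⟨⟨hvS, hvW⟩, hvU⟩
    exact ⟨⟨⟨hvS, hWE hvW⟩, hvU⟩,
      (eq_sup_span_singleton hUW hrank hvW fun h => hvU ⟨hvS, h⟩).symm⟩
  · rintro ⟨⟨⟨hvS, -⟩, hvU⟩, rfl⟩
    exact ⟨⟨hvS, mem_sup_right (mem_span_singleton_self v)⟩, hvU⟩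

end Covers

section Counting

variable {F V : Type*} [Field F] [Fintype F] [AddCommGroup V] [Module F V] {q : ℕ}

theorem card_sect_univ [Fintype V] (hcard : Fintype.card F = q) (E : Submodule F V) :
    #(sect Finset.univ E) = q ^ finrank F E := by
  rw [← hcard, ← Module.card_eq_pow_finrank (K := F) (V := E), sect, ← Fintype.card_subtype]

theorem card_covers [Finite V] (hcard : Fintype.card F = q) {U E : Submodule F V} (hUE : U ≤ E)
    {j : ℕ} (hj : finrank F E = finrank F U + j) :
    #(covers U E) = ∑ i ∈ Finset.range j, q ^ i := by
  have := Fintype.ofFinite V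
  have hsum := sum_card_sect_covers hUE (Finset.univ : Finset V)
  have hterm : ∀ W ∈ covers U E, (#(sect Finset.univ W) - #(sect Finset.univ U) : ℤ)
      = (q : ℤ) ^ finrank F U * (q - 1) := by
    intro W hW
    rw [card_sect_univ hcard, card_sect_univ hcard, (mem_covers.1 hW).2.2]
    push_cast
    ring
  rw [Finset.sum_congr rfl hterm, Finset.sum_const, card_sect_univ hcard, card_sect_univ hcard,
    hj, nsmul_eq_mul] at hsum
  have hq : 1 < q := hcard ▸ Fintype.one_lt_card
  have hpos : (0 : ℤ) < (q : ℤ) ^ finrank F U * (q - 1) :=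
    mul_pos (pow_pos (by omega) _) (by omega)
  have hgeom := geom_sum_mul (q : ℤ) j
  zify
  refine mul_right_cancel₀ hpos.ne' ?_
  push_cast at hsum
  linear_combination hsum - (q : ℤ) ^ finrank F U * hgeom

end Counting

section Caps

variable {F V : Type*} [Field F] [AddCommGroup V] [Module F V]

/-- A cap, given by one representing vector for each of its points. -/
structure CapRep (F : Type*) {V : Type*} [Field F] [AddCommGroup V] [Module F V]
    (S : Finset V) : Prop where
  zero_notMem : (0 : V) ∉ S
  notMem_span_pair : ∀ a ∈ S, ∀ b ∈ S, ∀ c ∈ S, c ≠ a → c ≠ b → c ∉ span F {a, b}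

/-- A nonzero vector representing a point off the point set represented by `S`. -/
structure OffCap (F : Type*) {V : Type*} [Field F] [AddCommGroup V] [Module F V]
    (S : Finset V) (Q : V) : Prop where
  ne_zero : Q ≠ 0
  notMem_span : ∀ a ∈ S, Q ∉ span F {a}

/-- The points of the cap whose line through `Q` is a secant. -/
noncomputable def secantPts (F : Type*) {V : Type*} [Field F] [AddCommGroup V] [Module F V]
    (S : Finset V) (Q : V) : Finset V :=
  {a ∈ S | ∃ b ∈ S, b ≠ a ∧ Q ∈ span F {a, b}}

/-- The points of the cap whose line through `Q` is a tangent. -/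
noncomputable def tangentPts (F : Type*) {V : Type*} [Field F] [AddCommGroup V] [Module F V]
    (S : Finset V) (Q : V) : Finset V :=
  S \ secantPts F S Q

variable {S : Finset V} {E W : Submodule F V} {a b c v w Q : V}

theorem mem_secantPts : a ∈ secantPts F S Q ↔ a ∈ S ∧ ∃ b ∈ S, b ≠ a ∧ Q ∈ span F {a, b} :=
  Finset.mem_filter

theorem secantPts_subset : secantPts F S Q ⊆ S := Finset.filter_subset _ _

theorem tangentPts_subset : tangentPts F S Q ⊆ S := Finset.sdiff_subset

theorem card_sect_tangentPts_add_card_sect_secantPts (S : Finset V) (Q : V) (E : Submodule F V) :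
    #(sect (tangentPts F S Q) E) + #(sect (secantPts F S Q) E) = #(sect S E) := by
  have : sect (tangentPts F S Q) E = sect S E \ sect (secantPts F S Q) E := by
    ext v
    simp only [tangentPts, mem_sect, Finset.mem_sdiff]
    tauto
  rw [this, Finset.card_sdiff_add_card_eq_card (sect_mono_left secantPts_subset)]

theorem span_pair_le : span F {v, w} ≤ E ↔ v ∈ E ∧ w ∈ E := by
  simp [span_le, Set.pair_subset_iff]

theorem left_mem_span_pair (v w : V) : v ∈ span F {v, w} := subset_span (by simp)

theorem right_mem_span_pair (v w : V) : w ∈ span F {v, w} := subset_span (by simp)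

theorem mem_span_singleton_symm (hw : w ≠ 0) (h : w ∈ span F {v}) : v ∈ span F {w} := by
  rw [← insert_empty_eq w]
  exact mem_span_insert_exchange (by simpa using h) (by simpa using hw)

theorem finrank_span_pair [FiniteDimensional F V] (hv : v ∉ span F {w}) (hw : w ≠ 0) :
    finrank F (span F {v, w}) = 2 := by
  rw [span_insert, sup_comm, finrank_sup_span_singleton hv, finrank_span_singleton hw]

theorem OffCap.exchange (hQ : OffCap F S Q) (hb : b ∈ S) (h : Q ∈ span F {a, b}) :
    a ∈ span F {Q, b} :=
  mem_span_insert_exchange h (hQ.notMem_span b hb)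

theorem OffCap.mem_of_mem_span_pair (hQ : OffCap F S Q) (ha : a ∈ S) (hQE : Q ∈ E) (haE : a ∈ E)
    (h : Q ∈ span F {a, b}) : b ∈ E :=
  span_pair_le.2 ⟨hQE, haE⟩ (hQ.exchange ha (Set.pair_comm a b ▸ h))

namespace CapRep

theorem ne_zero (hS : CapRep F S) (ha : a ∈ S) : a ≠ 0 := by
  rintro rfl
  exact hS.zero_notMem ha

theorem notMem_span_singleton (hS : CapRep F S) (ha : a ∈ S) (hb : b ∈ S) (hab : a ≠ b) :
    a ∉ span F {b} := by
  simpa using hS.notMem_span_pair b hb b hb a ha hab hab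

theorem mono (hS : CapRep F S) {T : Finset V} (hT : T ⊆ S) : CapRep F T :=
  ⟨fun h => hS.zero_notMem (hT h), fun a ha b hb c hc =>
    hS.notMem_span_pair a (hT ha) b (hT hb) c (hT hc)⟩

theorem finrank_span_pair [FiniteDimensional F V] (hS : CapRep F S) (ha : a ∈ S) (hb : b ∈ S)
    (hab : a ≠ b) :
    finrank F (span F {a, b}) = 2 :=
  PGCap.finrank_span_pair (hS.notMem_span_singleton ha hb hab) (hS.ne_zero hb)

theorem sect_span_pair (hS : CapRep F S) (ha : a ∈ S) (hb : b ∈ S) :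
    sect S (span F {a, b}) = {a, b} := by
  ext c
  simp only [mem_sect, Finset.mem_insert, Finset.mem_singleton]
  constructor
  · rintro ⟨hc, hmem⟩
    by_contra! hne
    exact hS.notMem_span_pair a ha b hb c hc hne.1 hne.2 hmem
  · rintro (rfl | rfl)
    · exact ⟨ha, left_mem_span_pair _ _⟩
    · exact ⟨hb, right_mem_span_pair _ _⟩

theorem card_sect_span_pair (hS : CapRep F S) (ha : a ∈ S) (hb : b ∈ S) (hab : a ≠ b) :
    #(sect S (span F {a, b})) = 2 := by
  rw [hS.sect_span_pair ha hb, Finset.card_pair hab]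

theorem card_image_units_smul [Fintype F] {q : ℕ} (hS : CapRep F S)
    (hcard : Fintype.card F = q) :
    #((S ×ˢ (Finset.univ : Finset Fˣ)).image fun p => p.2 • p.1) = #S * (q - 1) := by
  rw [Finset.card_image_of_injOn, Finset.card_product, Finset.card_univ, Fintype.card_units, hcard]
  rintro ⟨a, u⟩ ha ⟨b, v⟩ hb (h : u • a = v • b)
  simp only [Finset.coe_product, Set.mem_prod, Finset.mem_coe] at ha hb
  obtain rfl : a = b := by
    by_contra hab
    refine hS.notMem_span_singleton ha.1 hb.1 hab
      (mem_span_singleton.2 ⟨(u⁻¹ * v : Fˣ), ?_⟩)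
    rw [← Units.smul_def, mul_smul, ← h, inv_smul_smul]
  rw [Units.ext (smul_left_injective F (hS.ne_zero ha.1) h)]

theorem partner_unique (hS : CapRep F S) (hQ : OffCap F S Q) (ha : a ∈ S) (hb : b ∈ S)
    (hc : c ∈ S) (hca : c ≠ a) (hab : Q ∈ span F {a, b}) (hac : Q ∈ span F {a, c}) : c = b := by
  by_contra hcb
  exact hS.notMem_span_pair a ha b hb c hc hca hcb
    (hQ.mem_of_mem_span_pair ha hab (left_mem_span_pair a b) hac)

theorem card_sect_secantPts (hS : CapRep F S) (hQ : OffCap F S Q) (hQE : Q ∈ E) :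
    #(sect (secantPts F S Q) E) = #{p ∈ (sect S E).offDiag | Q ∈ span F {p.1, p.2}} := by
  symm
  refine Finset.card_bij (fun p _ => p.1) ?_ ?_ ?_
  · rintro ⟨a, b⟩ hp
    simp only [Finset.mem_filter, Finset.mem_offDiag, mem_sect] at hp
    obtain ⟨⟨⟨ha, haE⟩, ⟨hb, -⟩, hab⟩, hQab⟩ := hp
    exact mem_sect.2 ⟨mem_secantPts.2 ⟨ha, b, hb, hab.symm, hQab⟩, haE⟩
  · rintro ⟨a, b⟩ hp ⟨a', c⟩ hp' (rfl : a = a')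
    simp only [Finset.mem_filter, Finset.mem_offDiag, mem_sect] at hp hp'
    rw [hS.partner_unique hQ hp.1.1.1 hp'.1.2.1.1 hp.1.2.1.1 hp.1.2.2.symm hp'.2 hp.2]
  · intro a ha
    obtain ⟨ha, haE⟩ := mem_sect.1 ha
    obtain ⟨ha, b, hb, hba, hQab⟩ := mem_secantPts.1 ha
    refine ⟨(a, b), ?_, rfl⟩
    simp only [Finset.mem_filter, Finset.mem_offDiag, mem_sect]
    exact ⟨⟨⟨ha, haE⟩, ⟨hb, hQ.mem_of_mem_span_pair ha hQE haE hQab⟩, hba.symm⟩, hQab⟩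

theorem insert_of_secantPts_eq_empty (hS : CapRep F S) (hQ : OffCap F S Q)
    (hsecant : secantPts F S Q = ∅) : CapRep F (insert Q S) := by
  have hnot : ∀ a ∈ S, ∀ b ∈ S, a ≠ b → Q ∉ span F {a, b} := by
    intro a ha b hb hab h
    exact Finset.eq_empty_iff_forall_notMem.1 hsecant a (mem_secantPts.2 ⟨ha, b, hb, hab.symm, h⟩)
  have hpair : ∀ a ∈ S, ∀ c ∈ S, c ≠ a → c ∉ span F {Q, a} := by
    intro a ha c hc hca hmem
    exact hnot c hc a ha hca (mem_span_insert_exchange hmem (hS.notMem_span_singleton hc ha hca))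
  refine ⟨by simp [hQ.ne_zero.symm, hS.zero_notMem], ?_⟩
  intro a ha b hb c hc hca hcb
  rw [Finset.mem_insert] at ha hb hc
  rcases ha with rfl | ha <;> rcases hb with rfl | hb <;> rcases hc with rfl | hc
  · exact absurd rfl hca
  · rw [Set.pair_eq_singleton]
    exact fun h => hQ.notMem_span c hc (mem_span_singleton_symm (hS.ne_zero hc) h)
  · exact absurd rfl hca
  · exact hpair b hb c hc hcb
  · exact absurd rfl hcb
  · rw [Set.pair_comm]
    exact hpair a ha c hc hca
  · by_cases hab : a = b
    · rw [hab, Set.pair_eq_singleton]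
      exact hQ.notMem_span b hb
    · exact hnot a ha b hb hab
  · exact hS.notMem_span_pair a ha b hb c hc hca hcb

theorem offCap_add (hS : CapRep F S) (ha : a ∈ S) (hb : b ∈ S) (hab : a ≠ b) :
    OffCap F S (a + b) := by
  have hmem : a + b ∈ span F {a, b} :=
    add_mem (left_mem_span_pair a b) (right_mem_span_pair a b)
  have hne : a + b ≠ 0 := by
    intro h
    refine hS.notMem_span_singleton ha hb hab ?_
    rw [eq_neg_of_add_eq_zero_left h]
    exact neg_mem (mem_span_singleton_self b)
  refine ⟨hne, fun c hc hadd => ?_⟩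
  have hcab : c ∈ sect S (span F {a, b}) :=
    mem_sect.2 ⟨hc, (span_singleton_le_iff_mem _ _).2 hmem (mem_span_singleton_symm hne hadd)⟩
  rw [hS.sect_span_pair ha hb, Finset.mem_insert, Finset.mem_singleton] at hcab
  rcases hcab with rfl | rfl
  · exact hS.notMem_span_singleton hb ha hab.symm
      ((Submodule.add_mem_iff_right _ (mem_span_singleton_self c)).1 hadd)
  · exact hS.notMem_span_singleton ha hb hab
      ((Submodule.add_mem_iff_left _ (mem_span_singleton_self c)).1 hadd)

end CapRep

end Caps

section OffPoints

variable {F V : Type*} [Field F] [AddCommGroup V] [Module F V] [Fintype V]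
variable {S : Finset V} {E : Submodule F V} {a b Q : V}

/-- The vectors of `E` representing points off the cap. Every such point is represented `q - 1`
times, so that sums over `offPts S E` are `q - 1` times the corresponding sums over points. -/
noncomputable def offPts (S : Finset V) (E : Submodule F V) : Finset V :=
  {Q | Q ∈ E ∧ OffCap F S Q}

/-- A cap is complete in `E` if every point of `E` off the cap lies on a secant. -/
def CompleteIn (S : Finset V) (E : Submodule F V) : Prop :=
  ∀ Q ∈ offPts S E, (secantPts F S Q).Nonempty

theorem mem_offPts : Q ∈ offPts S E ↔ Q ∈ E ∧ OffCap F S Q := by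
  simp [offPts]

theorem sect_univ_eq_insert [Fintype F] (S : Finset V) (E : Submodule F V) :
    sect Finset.univ E = insert 0
      (((sect S E ×ˢ (Finset.univ : Finset Fˣ)).image fun p => p.2 • p.1) ∪ offPts S E) := by
  ext v
  simp only [mem_sect, Finset.mem_univ, true_and, Finset.mem_insert, Finset.mem_union,
    Finset.mem_image, Finset.mem_product, and_true, Prod.exists, mem_offPts]
  constructor
  · intro hv
    by_cases h0 : v = 0
    · exact Or.inl h0
    by_cases hoff : OffCap F S v
    · exact Or.inr (Or.inr ⟨hv, hoff⟩)
    obtain ⟨a, ha, hva⟩ : ∃ a ∈ S, v ∈ span F {a} := by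
      by_contra! h
      exact hoff ⟨h0, h⟩
    obtain ⟨c, rfl⟩ := mem_span_singleton.1 hva
    have hc : c ≠ 0 := by
      rintro rfl
      exact h0 (zero_smul F a)
    exact Or.inr (Or.inl ⟨a, Units.mk0 c hc, ⟨ha, (E.smul_mem_iff hc).1 hv⟩, rfl⟩)
  · rintro (rfl | ⟨a, u, ha, rfl⟩ | ⟨hv, -⟩)
    · exact E.zero_mem
    · exact E.smul_mem _ ha.2
    · exact hv

namespace CapRep

theorem sum_card_secantPts_mul (hS : CapRep F S) (E : Submodule F V) (g : V → ℤ) :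
    ∑ Q ∈ offPts S E, #(sect (secantPts F S Q) E) * g Q
      = ∑ p ∈ (sect S E).offDiag, ∑ Q ∈ offPts S (span F {p.1, p.2}), g Q := by
  have hpoint : ∀ Q ∈ offPts S E, #(sect (secantPts F S Q) E) * g Q
      = ∑ p ∈ (sect S E).offDiag, if Q ∈ span F {p.1, p.2} then g Q else 0 := by
    intro Q hQ
    obtain ⟨hQE, hQ⟩ := mem_offPts.1 hQ
    rw [hS.card_sect_secantPts hQ hQE, ← Finset.sum_filter, Finset.sum_const, nsmul_eq_mul]
  rw [Finset.sum_congr rfl hpoint, Finset.sum_comm]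
  refine Finset.sum_congr rfl fun p hp => ?_
  obtain ⟨ha, hb, -⟩ := Finset.mem_offDiag.1 hp
  have hpE : span F {p.1, p.2} ≤ E := span_pair_le.2 ⟨(mem_sect.1 ha).2, (mem_sect.1 hb).2⟩
  rw [← Finset.sum_filter]
  refine Finset.sum_congr ?_ fun _ _ => rfl
  ext Q
  simp only [Finset.mem_filter, mem_offPts]
  exact ⟨fun h => ⟨h.2, h.1.2⟩, fun h => ⟨⟨hpE h.1, h.2⟩, h.1⟩⟩

theorem exists_complete (hS : CapRep F S) (hSE : ∀ a ∈ S, a ∈ E) :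
    ∃ T : Finset V, S ⊆ T ∧ CapRep F T ∧ (∀ a ∈ T, a ∈ E) ∧ CompleteIn T E := by
  obtain ⟨T, hST, ⟨hT, hTE⟩, hmax⟩ :=
    (Set.toFinite {T : Finset V | CapRep F T ∧ ∀ a ∈ T, a ∈ E}).exists_le_maximal ⟨hS, hSE⟩
  refine ⟨T, hST, hT, hTE, fun Q hQ => ?_⟩
  obtain ⟨hQE, hQ⟩ := mem_offPts.1 hQ
  by_contra hempty
  rw [Finset.not_nonempty_iff_eq_empty] at hempty
  have hinsert : ∀ a ∈ insert Q T, a ∈ E := (Finset.forall_mem_insert Q T (· ∈ E)).2 ⟨hQE, hTE⟩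
  exact hQ.notMem_span Q (hmax ⟨hT.insert_of_secantPts_eq_empty hQ hempty, hinsert⟩
    (Finset.subset_insert Q T) (Finset.mem_insert_self Q T)) (mem_span_singleton_self Q)

variable [Fintype F] {q : ℕ}

theorem card_offPts (hS : CapRep F S) (hcard : Fintype.card F = q) (E : Submodule F V) :
    (#(offPts S E) : ℤ) = q ^ finrank F E - 1 - (q - 1) * #(sect S E) := by
  set M := (sect S E ×ˢ (Finset.univ : Finset Fˣ)).image fun p => p.2 • p.1 with hM
  have hmemM {v : V} : v ∈ M ↔ ∃ a ∈ sect S E, ∃ u : Fˣ, u • a = v := by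
    simp [hM, Finset.mem_image]
  have hdisj : Disjoint M (offPts S E) := by
    rw [Finset.disjoint_left]
    intro v hv hoff
    obtain ⟨a, ha, u, rfl⟩ := hmemM.1 hv
    exact (mem_offPts.1 hoff).2.notMem_span a (sect_subset ha)
      (smul_mem _ _ (mem_span_singleton_self a))
  have hzero : (0 : V) ∉ M ∪ offPts S E := by
    rw [Finset.mem_union, hmemM, mem_offPts]
    rintro (⟨a, ha, u, h⟩ | ⟨-, h⟩)
    · exact hS.ne_zero (sect_subset ha) ((smul_eq_zero_iff_eq u).1 h)
    · exact h.ne_zero rfl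
  have hq : 1 ≤ q := hcard ▸ Fintype.one_lt_card.le
  have htotal := card_sect_univ hcard E
  rw [sect_univ_eq_insert S E, Finset.card_insert_of_notMem hzero,
    Finset.card_union_of_disjoint hdisj,
    (hS.mono sect_subset).card_image_units_smul hcard] at htotal
  zify [hq] at htotal
  linear_combination htotal

theorem card_offPts_span_pair (hS : CapRep F S) (hcard : Fintype.card F = q) (ha : a ∈ S)
    (hb : b ∈ S) (hab : a ≠ b) : (#(offPts S (span F {a, b})) : ℤ) = (q - 1) ^ 2 := by
  rw [hS.card_offPts hcard, hS.card_sect_span_pair ha hb hab, hS.finrank_span_pair ha hb hab]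
  push_cast
  ring

theorem sum_card_secantPts (hS : CapRep F S) (hcard : Fintype.card F = q) (E : Submodule F V) :
    ∑ Q ∈ offPts S E, (#(sect (secantPts F S Q) E) : ℤ)
      = (q - 1) ^ 2 * (#(sect S E) * (#(sect S E) - 1)) := by
  have hpair : ∀ p ∈ (sect S E).offDiag,
      ∑ _Q ∈ offPts S (span F {p.1, p.2}), (1 : ℤ) = (q - 1) ^ 2 := by
    intro p hp
    obtain ⟨ha, hb, hab⟩ := Finset.mem_offDiag.1 hp
    rw [Finset.sum_const, nsmul_eq_mul, mul_one,
      hS.card_offPts_span_pair hcard (sect_subset ha) (sect_subset hb) hab]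
  have hsum := hS.sum_card_secantPts_mul E fun _ => 1
  simp only [mul_one] at hsum
  rw [hsum, Finset.sum_congr rfl hpair, Finset.sum_const, Finset.offDiag_card, nsmul_eq_mul,
    Nat.cast_sub (Nat.le_mul_self _)]
  push_cast
  ring

end CapRep

end OffPoints

section Segre

variable {F V : Type*} [Field F] [AddCommGroup V] [Module F V]
variable {S T : Finset V} {E W : Submodule F V} {a b c d p Q : V} {γ δ t : F}

theorem exists_affine_coordinates {c₀ : V} (hc : c ∈ span F {a, b} ⊔ span F {c₀})
    (hcab : c ∉ span F {a, b}) :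
    ∃ γ x y : F, γ ≠ 0 ∧ γ • c = x • a + y • b + c₀ := by
  obtain ⟨u, hu, w, hw, rfl⟩ := mem_sup.1 hc
  obtain ⟨x, y, rfl⟩ := mem_span_pair.1 hu
  obtain ⟨r, rfl⟩ := mem_span_singleton.1 hw
  have hr : r ≠ 0 := by
    rintro rfl
    exact hcab (by simpa using hu)
  refine ⟨r⁻¹, r⁻¹ * x, r⁻¹ * y, inv_ne_zero hr, ?_⟩
  simp only [smul_add, smul_smul, inv_mul_cancel₀ hr, one_smul]

theorem CapRep.smul_sub_smul_ne_smul (hS : CapRep F S) (hc : c ∈ S) (hd : d ∈ S) (hcd : c ≠ d)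
    (hγ : γ ≠ 0) (hp : p ∉ span F {c, d}) : δ • d - γ • c ≠ t • p := by
  intro h
  rcases eq_or_ne t 0 with rfl | ht
  · refine hS.notMem_span_singleton hc hd hcd ?_
    rw [← smul_mem_iff _ hγ, ← sub_eq_zero.1 (h.trans (zero_smul F p))]
    exact smul_mem _ _ (mem_span_singleton_self d)
  · rw [← smul_mem_iff _ ht, ← h] at hp
    exact hp (sub_mem (smul_mem _ _ (right_mem_span_pair c d))
      (smul_mem _ _ (left_mem_span_pair c d)))

theorem CapRep.two_mul_card_le_of_coordinates [Fintype F] (hq : Even (Fintype.card F))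
    (hT : CapRep F T) {c₀ : V} {γ x y : V → F} (hγ : ∀ c ∈ T, γ c ≠ 0)
    (hcoord : ∀ c ∈ T, γ c • c = x c • a + y c • b + c₀)
    (hdir : ∀ c ∈ T, ∀ d ∈ T, c ≠ d → ∀ p ∈ ({a, b, a + b} : Set V), p ∉ span F {c, d}) :
    2 * #T ≤ Fintype.card F := by
  have hdiff : ∀ c ∈ T, ∀ d ∈ T,
      γ d • d - γ c • c = (x d - x c) • a + (y d - y c) • b := by
    intro c hc d hd
    rw [hcoord c hc, hcoord d hd]
    module
  have hinj : ∀ c ∈ T, ∀ d ∈ T, c ≠ d → ∀ p ∈ ({a, b, a + b} : Set V), ∀ t : F,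
      (x d - x c) • a + (y d - y c) • b ≠ t • p := by
    intro c hc d hd hcd p hp t
    rw [← hdiff c hc d hd]
    exact hT.smul_sub_smul_ne_smul hc hd hcd (hγ c hc) (hdir c hc d hd hcd p hp)
  refine two_mul_card_le_of_arc (x := x) (y := y) hq ?_ ?_ ?_ ?_
  · intro c hc d hd h
    by_contra hcd
    exact hinj c hc d hd hcd b (by simp) (y d - y c) (by rw [h, sub_self, zero_smul, zero_add])
  · intro c hc d hd h
    by_contra hcd
    exact hinj c hc d hd hcd a (by simp) (x d - x c) (by rw [h, sub_self, zero_smul, add_zero])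
  · intro c hc d hd (h : x c - y c = x d - y d)
    by_contra hcd
    refine hinj c hc d hd hcd (a + b) (by simp) (x d - x c) ?_
    rw [smul_add, show x d - x c = y d - y c by linear_combination -h]
  · intro c hc d hd e he hcd hce hde hdet
    have hx : x d - x c ≠ 0 := by
      intro h
      exact hinj c hc d hd hcd b (by simp) (y d - y c) (by rw [h, zero_smul, zero_add])
    have hcomb : (x d - x c) • γ e • e
        = (x d - x c) • γ c • c + (x e - x c) • (γ d • d - γ c • c)
          + affineDet x y c d e • b := by
      rw [hdiff c hc d hd, hcoord e he, hcoord c hc, affineDet]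
      module
    refine hT.notMem_span_pair c hc d hd e he hce.symm hde.symm ?_
    rw [← smul_mem_iff _ (hγ e he), ← smul_mem_iff _ hx, hcomb, hdet, zero_smul, add_zero]
    have hcmem := smul_mem _ (γ c) (left_mem_span_pair (F := F) c d)
    exact add_mem (smul_mem _ _ hcmem)
      (smul_mem _ _ (sub_mem (smul_mem _ _ (right_mem_span_pair c d)) hcmem))

theorem CapRep.two_mul_card_le [Fintype F] [FiniteDimensional F V]
    (hq : Even (Fintype.card F)) (hT : CapRep F T) (habW : span F {a, b} ≤ W)
    (hrank : finrank F W = finrank F (span F {a, b}) + 1)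
    (hTW : ∀ c ∈ T, c ∈ W) (hTab : ∀ c ∈ T, c ∉ span F {a, b})
    (hdir : ∀ c ∈ T, ∀ d ∈ T, c ≠ d → ∀ p ∈ ({a, b, a + b} : Set V), p ∉ span F {c, d}) :
    2 * #T ≤ Fintype.card F := by
  rcases T.eq_empty_or_nonempty with rfl | ⟨c₀, hc₀⟩
  · simp
  have hWeq := eq_sup_span_singleton habW hrank (hTW c₀ hc₀) (hTab c₀ hc₀)
  have hcoord : ∀ c : V, ∃ γ x y : F, c ∈ T → γ ≠ 0 ∧ γ • c = x • a + y • b + c₀ := by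
    intro c
    by_cases hc : c ∈ T
    · obtain ⟨γ, x, y, h⟩ := exists_affine_coordinates (hWeq ▸ hTW c hc) (hTab c hc)
      exact ⟨γ, x, y, fun _ => h⟩
    · exact ⟨0, 0, 0, fun h => absurd h hc⟩
  choose γ x y h using hcoord
  exact hT.two_mul_card_le_of_coordinates hq (fun c hc => (h c hc).1) (fun c hc => (h c hc).2) hdir

theorem OffCap.span_pair_eq_of_mem_span_pair (hQ : OffCap F S Q) (hc : c ∈ S)
    (h : Q ∈ span F {c, d}) : span F {Q, c} = span F {c, d} :=
  le_antisymm (span_pair_le.2 ⟨h, left_mem_span_pair c d⟩)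
    (span_pair_le.2 ⟨right_mem_span_pair Q c, hQ.mem_of_mem_span_pair hc
      (left_mem_span_pair Q c) (right_mem_span_pair Q c) h⟩)

theorem CapRep.card_sect_add_card_sect_tangentPts_le (hS : CapRep F S) (hc : c ∈ S) :
    #(sect S (span F {Q, c})) + #(sect (tangentPts F S Q) (span F {Q, c})) ≤ 2 := by
  by_cases hcQ : c ∈ secantPts F S Q
  · obtain ⟨-, b, hb, hbc, hQcb⟩ := mem_secantPts.1 hcQ
    have hline : sect S (span F {Q, c}) ⊆ {c, b} :=
      hS.sect_span_pair hc hb ▸ sect_mono (span_pair_le.2 ⟨hQcb, left_mem_span_pair c b⟩)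
    have hbQ : b ∈ secantPts F S Q :=
      mem_secantPts.2 ⟨hb, c, hc, hbc.symm, Set.pair_comm c b ▸ hQcb⟩
    have hempty : sect (tangentPts F S Q) (span F {Q, c}) = ∅ := by
      refine Finset.eq_empty_of_forall_notMem fun d hd => ?_
      obtain ⟨hdt, hdl⟩ := mem_sect.1 hd
      obtain ⟨hdS, hdQ⟩ := Finset.mem_sdiff.1 hdt
      rcases Finset.mem_insert.1 (hline (mem_sect.2 ⟨hdS, hdl⟩)) with rfl | h
      · exact hdQ hcQ
      · exact hdQ (Finset.mem_singleton.1 h ▸ hbQ)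
    rw [hempty, Finset.card_empty, add_zero]
    exact (Finset.card_le_card hline).trans Finset.card_le_two
  · have hline : sect S (span F {Q, c}) ⊆ {c} := by
      intro d hd
      obtain ⟨hd, hdl⟩ := mem_sect.1 hd
      by_contra hdc
      rw [Finset.mem_singleton] at hdc
      exact hcQ (mem_secantPts.2 ⟨hc, d, hd, hdc, Set.pair_comm d c ▸
        mem_span_insert_exchange hdl (hS.notMem_span_singleton hd hc hdc)⟩)
    exact add_le_add (Finset.card_le_card hline)
      (Finset.card_le_card ((sect_mono_left tangentPts_subset).trans hline))

theorem CapRep.card_sect_add_card_sect_tangentPts_le_two_mul (hS : CapRep F S) (Q : V)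
    (E : Submodule F V) : #(sect S E) + #(sect (tangentPts F S Q) E)
      ≤ 2 * #((sect S E).image fun c => span F {Q, c}) := by
  have hmaps {A : Finset V} (hA : A ⊆ S) : Set.MapsTo (fun c => span F {Q, c}) (sect A E : Set V)
      ((sect S E).image fun c => span F {Q, c}) := fun c hc =>
    Finset.mem_coe.2 (Finset.mem_image_of_mem _ (sect_mono_left hA hc))
  rw [Finset.card_eq_sum_card_fiberwise (hmaps Finset.Subset.rfl),
    Finset.card_eq_sum_card_fiberwise (hmaps tangentPts_subset), ← Finset.sum_add_distrib, mul_comm,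
    ← smul_eq_mul]
  refine Finset.sum_le_card_nsmul _ _ _ fun L hL => ?_
  obtain ⟨c, hc, rfl⟩ := Finset.mem_image.1 hL
  have hfiber (A : Finset V) : {d ∈ sect A E | span F {Q, d} = span F {Q, c}}
      ⊆ sect A (span F {Q, c}) := fun d hd => by
    obtain ⟨hd, hdc⟩ := Finset.mem_filter.1 hd
    exact mem_sect.2 ⟨sect_subset hd, hdc ▸ right_mem_span_pair Q d⟩
  exact (add_le_add (Finset.card_le_card (hfiber S)) (Finset.card_le_card (hfiber _))).trans
    (hS.card_sect_add_card_sect_tangentPts_le (sect_subset hc))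

theorem OffCap.exists_secant (hQ : OffCap F S Q) (hQE : Q ∈ E)
    (hsecant : (sect (secantPts F S Q) E).Nonempty) :
    ∃ a ∈ S, ∃ b ∈ S, a ≠ b ∧ Q ∈ span F {a, b} ∧ span F {a, b} ≤ E := by
  obtain ⟨a, ha⟩ := hsecant
  obtain ⟨ha, haE⟩ := mem_sect.1 ha
  obtain ⟨haS, b, hb, hba, hQab⟩ := mem_secantPts.1 ha
  exact ⟨a, haS, b, hb, hba.symm, hQab,
    span_pair_le.2 ⟨haE, hQ.mem_of_mem_span_pair haS hQE haE hQab⟩⟩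

theorem CapRep.exists_transversal (hS : CapRep F S) (hQ : OffCap F S Q) (ha : a ∈ S)
    (hb : b ∈ S) (hQab : Q ∈ span F {a, b}) (habW : span F {a, b} ≤ W) :
    ∃ T ⊆ sect S W \ {a, b}, (∀ c ∈ T, ∀ d ∈ T, c ≠ d → Q ∉ span F {c, d}) ∧
      #(sect S W) + #(sect (tangentPts F S Q) W) ≤ 2 * (#T + 1) := by
  set lines := (sect S W).image fun c => span F {Q, c} with hlines
  have hQa : span F {Q, a} = span F {a, b} := hQ.span_pair_eq_of_mem_span_pair ha hQab
  have hQb : span F {Q, b} = span F {a, b} := by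
    rw [Set.pair_comm a b] at hQab ⊢
    exact hQ.span_pair_eq_of_mem_span_pair hb hQab
  obtain ⟨T, hTS, hTinj, hTlines⟩ := Finset.exists_subset_injOn_image_eq_of_surjOn
    (f := fun c => span F {Q, c}) (sect S W : Set V) (lines.erase (span F {a, b}))
    fun L hL => by simpa [hlines] using Finset.mem_of_mem_erase hL
  have hTne : ∀ c ∈ T, span F {Q, c} ≠ span F {a, b} := fun c hc =>
    Finset.ne_of_mem_erase (hTlines ▸ Finset.mem_image_of_mem (fun c => span F {Q, c}) hc)
  refine ⟨T, fun c hc => ?_, fun c hc d hd hcd h => ?_, ?_⟩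
  · rw [Finset.mem_sdiff, Finset.mem_insert, Finset.mem_singleton]
    refine ⟨hTS hc, ?_⟩
    rintro (rfl | rfl)
    exacts [hTne _ hc hQa, hTne _ hc hQb]
  · have hcS := sect_subset (hTS hc)
    have hdS := sect_subset (hTS hd)
    refine hcd (hTinj hc hd ?_)
    change span F {Q, c} = span F {Q, d}
    rw [hQ.span_pair_eq_of_mem_span_pair hcS h, Set.pair_comm c d,
      hQ.span_pair_eq_of_mem_span_pair hdS (Set.pair_comm c d ▸ h)]
  · have hmem : span F {a, b} ∈ lines :=
      hQa ▸ Finset.mem_image_of_mem _ (mem_sect.2 ⟨ha, (span_pair_le.1 habW).1⟩)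
    rw [← Finset.card_image_of_injOn hTinj, hTlines, Finset.card_erase_add_one hmem]
    exact hS.card_sect_add_card_sect_tangentPts_le_two_mul Q W

-- Scaling `a` and `b` so that `Q = a + b` makes `a`, `b` and `Q` the three directions that are
-- excluded for the chords of a transversal.
theorem CapRep.card_sect_add_card_sect_tangentPts_le_of_plane [Fintype F] [FiniteDimensional F V]
    (hq : Even (Fintype.card F)) (hS : CapRep F S) (hQ : OffCap F S Q) (ha : a ∈ S) (hb : b ∈ S)
    (hQab : Q ∈ span F {a, b}) (habW : span F {a, b} ≤ W)
    (hrank : finrank F W = finrank F (span F {a, b}) + 1) :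
    #(sect S W) + #(sect (tangentPts F S Q) W) ≤ Fintype.card F + 2 := by
  obtain ⟨α, β, hαβ⟩ := mem_span_pair.1 hQab
  have hα : α ≠ 0 := by
    rintro rfl
    exact hQ.notMem_span b hb (mem_span_singleton.2 ⟨β, by rw [← hαβ, zero_smul, zero_add]⟩)
  have hβ : β ≠ 0 := by
    rintro rfl
    exact hQ.notMem_span a ha (mem_span_singleton.2 ⟨α, by rw [← hαβ, zero_smul, add_zero]⟩)
  have hscale : span F {α • a, β • b} = span F {a, b} := by
    rw [span_insert, span_singleton_smul_eq hα.isUnit, span_singleton_smul_eq hβ.isUnit,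
      ← span_insert]
  obtain ⟨T, hTW, hTQ, hcount⟩ := hS.exists_transversal hQ ha hb hQab habW
  have hT : ∀ c ∈ T, c ∈ S ∧ c ∈ W ∧ c ≠ a ∧ c ≠ b := by
    intro c hc
    simpa [mem_sect, and_assoc] using hTW hc
  have h2T : 2 * #T ≤ Fintype.card F := by
    refine (hS.mono fun c hc => (hT c hc).1).two_mul_card_le hq (a := α • a) (b := β • b)
      (hscale ▸ habW) (hscale ▸ hrank) (fun c hc => (hT c hc).2.1) (fun c hc => ?_)
      fun c hc d hd hcd p hp => ?_
    · rw [hscale]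
      exact hS.notMem_span_pair a ha b hb c (hT c hc).1 (hT c hc).2.2.1 (hT c hc).2.2.2
    · have hcap {p : V} := hS.notMem_span_pair c (hT c hc).1 d (hT d hd).1 p
      rcases hp with rfl | rfl | rfl
      · rw [smul_mem_iff _ hα]
        exact hcap ha (hT c hc).2.2.1.symm (hT d hd).2.2.1.symm
      · rw [smul_mem_iff _ hβ]
        exact hcap hb (hT c hc).2.2.2.symm (hT d hd).2.2.2.symm
      · rw [hαβ]
        exact hTQ c hc d hd hcd
  omega

theorem CapRep.card_sect_add_card_sect_tangentPts_le_of_finrank [Fintype F] [Finite V] {q j : ℕ}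
    (hcard : Fintype.card F = q) (hq : Even q) (hS : CapRep F S) (hQ : OffCap F S Q) (hQE : Q ∈ E)
    (hsecant : (sect (secantPts F S Q) E).Nonempty) (hE : finrank F E = 2 + j) :
    #(sect S E) + #(sect (tangentPts F S Q) E) ≤ 2 + q * ∑ i ∈ Finset.range j, q ^ i := by
  obtain ⟨a, ha, b, hb, hab, hQab, habE⟩ := hQ.exists_secant hQE hsecant
  set l := span F {a, b}
  have hl : finrank F l = 2 := hS.finrank_span_pair ha hb hab
  have hSl : #(sect S l) = 2 := hS.card_sect_span_pair ha hb hab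
  have hXl : #(sect (tangentPts F S Q) l) = 0 := by
    have h := hS.card_sect_add_card_sect_tangentPts_le (Q := Q) ha
    rw [hQ.span_pair_eq_of_mem_span_pair ha hQab] at h
    change #(sect S l) + #(sect (tangentPts F S Q) l) ≤ 2 at h
    omega
  have hplane : ∀ W ∈ covers l E, ((#(sect S W) - #(sect S l) : ℤ)
      + (#(sect (tangentPts F S Q) W) - #(sect (tangentPts F S Q) l))) ≤ q := by
    intro W hW
    obtain ⟨hlW, -, hrank⟩ := mem_covers.1 hW
    have := hS.card_sect_add_card_sect_tangentPts_le_of_plane (hcard ▸ hq) hQ ha hb hQab hlW hrank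
    omega
  have hsum := Finset.sum_le_sum hplane
  rw [Finset.sum_add_distrib, sum_card_sect_covers habE, sum_card_sect_covers habE,
    Finset.sum_const, card_covers hcard habE (hE.trans (by rw [hl])), hSl, hXl, nsmul_eq_mul,
    mul_comm] at hsum
  zify
  push_cast at hsum
  linarith

end Segre

section Solids

variable {F V : Type*} [Field F] [AddCommGroup V] [Module F V]
variable {S T : Finset V} {E H U W : Submodule F V} {a b c d Q : V}

theorem OffCap.mono (hQ : OffCap F S Q) (hT : T ⊆ S) : OffCap F T Q :=
  ⟨hQ.ne_zero, fun a ha => hQ.notMem_span a (hT ha)⟩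

theorem secantPts_mono (hT : T ⊆ S) : secantPts F T Q ⊆ secantPts F S Q := fun a ha => by
  obtain ⟨ha, b, hb, hba, hQ⟩ := mem_secantPts.1 ha
  exact mem_secantPts.2 ⟨hT ha, b, hT hb, hba, hQ⟩

/-- The amount by which a point `Q` on a secant of a `c`-cap in a solid `H` misses equality in the
bound `c + #X ≤ q ^ 2 + q + 2`, where `X` is the set of points of the cap on tangents through `Q`.
-/
noncomputable def defect (q : ℕ) (S : Finset V) (H : Submodule F V) (Q : V) : ℤ :=
  q ^ 2 + q + 2 - #(sect S H) - #(sect (tangentPts F S Q) H)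

theorem defect_eq (q : ℕ) (S : Finset V) (H : Submodule F V) (Q : V) :
    defect q S H Q = q ^ 2 + q + 2 - 2 * #(sect S H) + #(sect (secantPts F S Q) H) := by
  have := card_sect_tangentPts_add_card_sect_secantPts S Q H
  rw [defect]
  omega

theorem sect_secantPts_eq_of_sect_tangentPts_eq_empty
    (hT : sect (tangentPts F S Q) H = ∅) (hWH : W ≤ H) :
    sect (secantPts F S Q) W = sect S W := by
  have := card_sect_tangentPts_add_card_sect_secantPts S Q H
  rw [hT, Finset.card_empty, zero_add] at this
  rw [← sect_sect hWH, ← sect_sect (S := S) hWH,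
    Finset.eq_of_subset_of_card_le (sect_mono_left secantPts_subset) this.ge]

namespace CapRep

theorem sect_secantPts_span_pair (hS : CapRep F S) (ha : a ∈ S) (hb : b ∈ S) (hab : a ≠ b)
    (hQ : Q ∈ span F {a, b}) : sect (secantPts F S Q) (span F {a, b}) = {a, b} := by
  refine ((sect_mono_left secantPts_subset).trans (hS.sect_span_pair ha hb).subset).antisymm ?_
  rw [Finset.insert_subset_iff, Finset.singleton_subset_iff, mem_sect, mem_sect]
  exact ⟨⟨mem_secantPts.2 ⟨ha, b, hb, hab.symm, hQ⟩, left_mem_span_pair a b⟩,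
    mem_secantPts.2 ⟨hb, a, ha, hab, Set.pair_comm a b ▸ hQ⟩, right_mem_span_pair a b⟩

theorem le_card_offPts_inter_secant [Fintype F] [Fintype V] {q : ℕ} (hcard : Fintype.card F = q)
    (hS : CapRep F S) (hUW : U ≤ W) (hrank : finrank F W = finrank F U + 1) (hc : c ∈ S)
    (hd : d ∈ S) (hcd : c ≠ d) (hcW : c ∈ W) (hdW : d ∈ W) (hcU : c ∉ U) (hdU : d ∉ U) :
    q - 1 ≤ #{Q ∈ offPts S U | Q ∈ span F {c, d}} := by
  obtain ⟨u, hu, w, hw, huw⟩ := mem_sup.1 (eq_sup_span_singleton hUW hrank hcW hcU ▸ hdW)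
  have hu0 : u ≠ 0 := by
    rintro rfl
    rw [zero_add] at huw
    exact hS.notMem_span_singleton hd hc hcd.symm (huw ▸ hw)
  have hucd : u ∈ span F {c, d} := by
    rw [eq_sub_of_add_eq huw]
    exact sub_mem (right_mem_span_pair c d) (span_mono (by simp) hw)
  rw [← hcard, ← Fintype.card_units, ← Finset.card_univ]
  refine Finset.card_le_card_of_injOn (fun t : Fˣ => t • u) (fun t _ => ?_) fun t _ t' _ h =>
    Units.ext (smul_left_injective F hu0 h)
  have htu : t • u ≠ 0 := (smul_eq_zero_iff_eq t).not.2 hu0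
  have htcd : t • u ∈ span F {c, d} := smul_mem _ _ hucd
  rw [Finset.mem_coe, Finset.mem_filter, mem_offPts]
  refine ⟨⟨U.smul_mem _ hu, htu, fun e he hmem => ?_⟩, htcd⟩
  have heu := mem_span_singleton_symm htu hmem
  have heU : e ∈ U := (span_singleton_le_iff_mem _ U).2 (U.smul_mem (t : F) hu) heu
  refine hS.notMem_span_pair c hc d hd e he ?_ ?_ ((span_singleton_le_iff_mem _ _).2 htcd heu)
  · rintro rfl
    exact hcU heU
  · rintro rfl
    exact hdU heU

theorem card_sect_secantPts_sdiff_add_two_le (hS : CapRep F S) (ha : a ∈ S) (hb : b ∈ S)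
    (hab : a ≠ b) (habW : span F {a, b} ≤ W) (hQ : Q ∈ span F {a, b}) :
    #(sect (secantPts F (S \ sect S (span F {a, b})) Q) W) + 2 ≤ #(sect (secantPts F S Q) W) := by
  set T := S \ sect S (span F {a, b})
  have hsub : sect (secantPts F T Q) W ∪ {a, b} ⊆ sect (secantPts F S Q) W := by
    rw [← hS.sect_secantPts_span_pair ha hb hab hQ]
    exact Finset.union_subset (sect_mono_left (secantPts_mono Finset.sdiff_subset))
      (sect_mono habW)
  have hdisj : Disjoint (sect (secantPts F T Q) W) {a, b} := by
    rw [← hS.sect_span_pair ha hb]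
    exact Finset.disjoint_of_subset_left (sect_subset.trans secantPts_subset)
      Finset.sdiff_disjoint
  rw [← Finset.card_pair hab, ← Finset.card_union_of_disjoint hdisj]
  exact Finset.card_le_card hsub

theorem le_sum_card_sect_secantPts_of_plane [Fintype F] [Fintype V] {q : ℕ}
    (hcard : Fintype.card F = q) (hS : CapRep F S) (ha : a ∈ S) (hb : b ∈ S) (hab : a ≠ b)
    (habW : span F {a, b} ≤ W) (hrank : finrank F W = finrank F (span F {a, b}) + 1) :
    ((q - 1) * ((#(sect S W) - 2) * (#(sect S W) - 3)) : ℤ)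
      ≤ ∑ Q ∈ offPts S (span F {a, b}), (#(sect (secantPts F S Q) W) - 2 : ℤ) := by
  set T := S \ sect S (span F {a, b}) with hT
  have hTS : T ⊆ S := Finset.sdiff_subset
  have hsdiff : sect T W = sect S W \ sect S (span F {a, b}) := by
    ext c
    simp only [hT, mem_sect, Finset.mem_sdiff]
    tauto
  have hmemT {c : V} (hc : c ∈ sect T W) : c ∈ S ∧ c ∉ span F {a, b} ∧ c ∈ W := by
    simp only [hsdiff, mem_sect, Finset.mem_sdiff, not_and] at hc
    exact ⟨hc.1.1, hc.2 hc.1.1, hc.1.2⟩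
  have hcardT : (#(sect T W) : ℤ) = #(sect S W) - 2 := by
    rw [hsdiff, ← card_sect_sub_card_sect habW, hS.card_sect_span_pair ha hb hab, Nat.cast_ofNat]
  have hpoint : ∀ Q ∈ offPts S (span F {a, b}),
      (#{p ∈ (sect T W).offDiag | Q ∈ span F {p.1, p.2}} : ℤ)
        ≤ #(sect (secantPts F S Q) W) - 2 := by
    intro Q hQ
    obtain ⟨hQab, hQ⟩ := mem_offPts.1 hQ
    rw [← (hS.mono hTS).card_sect_secantPts (hQ.mono hTS) (habW hQab)]
    have : #(sect (secantPts F T Q) W) + 2 ≤ #(sect (secantPts F S Q) W) :=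
      hS.card_sect_secantPts_sdiff_add_two_le ha hb hab habW hQab
    omega
  have hpairs : ∀ p ∈ (sect T W).offDiag,
      q - 1 ≤ #{Q ∈ offPts S (span F {a, b}) | Q ∈ span F {p.1, p.2}} := by
    intro p hp
    obtain ⟨hc, hd, hcd⟩ := Finset.mem_offDiag.1 hp
    obtain ⟨hcS, hcl, hcW⟩ := hmemT hc
    obtain ⟨hdS, hdl, hdW⟩ := hmemT hd
    exact hS.le_card_offPts_inter_secant hcard habW hrank hcS hdS hcd hcW hdW hcl hdl
  have hswap := Finset.sum_card_bipartiteAbove_eq_sum_card_bipartiteBelow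
    (s := offPts S (span F {a, b})) (t := (sect T W).offDiag)
    (fun Q (p : V × V) => Q ∈ span F {p.1, p.2})
  have hcount := (Finset.card_nsmul_le_sum _ _ _ hpairs).trans_eq hswap.symm
  refine le_trans ?_ (Finset.sum_le_sum hpoint)
  have hq : 1 ≤ q := hcard ▸ Fintype.one_lt_card.le
  rw [Finset.offDiag_card, smul_eq_mul] at hcount
  zify [hq, Nat.le_mul_self] at hcount
  rw [hcardT] at hcount
  simp only [Finset.bipartiteAbove] at hcount
  linarith

theorem sum_mul_sub_two_mul_sub_three [Fintype F] [Finite V] {q : ℕ}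
    (hcard : Fintype.card F = q) (hS : CapRep F S) (hH : finrank F H = 4) (ha : a ∈ S)
    (hb : b ∈ S) (hab : a ≠ b) (habH : span F {a, b} ≤ H) :
    (∑ W ∈ covers (span F {a, b}) H, ((#(sect S W) - 2) * (#(sect S W) - 3) : ℤ))
      = (∑ W ∈ covers (span F {a, b}) H, (#(sect S W) - q) * (#(sect S W) - q - 1 : ℤ))
        + ((2 * q - 4) * (#(sect S H) - 2) - (q + 1) * ((q - 2) * (q - 1))) := by
  have hplanes : ∑ W ∈ covers (span F {a, b}) H, (#(sect S W) - 2 : ℤ) = #(sect S H) - 2 := by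
    have := sum_card_sect_covers habH S
    rwa [hS.card_sect_span_pair ha hb hab, Nat.cast_ofNat] at this
  have hconst : ∑ W ∈ covers (span F {a, b}) H, ((q - 2) * (q - 1) : ℤ)
      = (q + 1) * ((q - 2) * (q - 1)) := by
    rw [Finset.sum_const, card_covers (j := 2) hcard habH
      (by rw [hH, hS.finrank_span_pair ha hb hab]), nsmul_eq_mul, Finset.sum_range_succ,
      Finset.sum_range_one]
    push_cast
    ring
  rw [← hplanes, ← hconst, Finset.mul_sum, ← Finset.sum_sub_distrib, ← Finset.sum_add_distrib]
  exact Finset.sum_congr rfl fun W _ => by ring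

theorem sum_defect_secant [Fintype F] [Fintype V] {q : ℕ} (hcard : Fintype.card F = q)
    (hS : CapRep F S) (ha : a ∈ S) (hb : b ∈ S) (hab : a ≠ b) (habH : span F {a, b} ≤ H) :
    ∑ Q ∈ offPts S (span F {a, b}), defect q S H Q
      = (q - 1) ^ 2 * (q ^ 2 + q + 4 - 2 * #(sect S H))
        + ∑ W ∈ covers (span F {a, b}) H, ∑ Q ∈ offPts S (span F {a, b}),
          (#(sect (secantPts F S Q) W) - 2 : ℤ) := by
  have hsecants : ∑ W ∈ covers (span F {a, b}) H, ∑ Q ∈ offPts S (span F {a, b}),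
      (#(sect (secantPts F S Q) W) - 2 : ℤ)
      = ∑ Q ∈ offPts S (span F {a, b}), (#(sect (secantPts F S Q) H) - 2 : ℤ) := by
    rw [Finset.sum_comm]
    refine Finset.sum_congr rfl fun Q hQ => ?_
    have := sum_card_sect_covers habH (secantPts F S Q)
    rwa [hS.sect_secantPts_span_pair ha hb hab (mem_offPts.1 hQ).1, Finset.card_pair hab,
      Nat.cast_ofNat] at this
  rw [hsecants, ← hS.card_offPts_span_pair hcard ha hb hab, ← nsmul_eq_mul, ← Finset.sum_const,
    ← Finset.sum_add_distrib]
  refine Finset.sum_congr rfl fun Q _ => ?_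
  rw [defect_eq]
  ring

theorem le_sum_defect_of_secant [Fintype F] [Fintype V] {q : ℕ} (hcard : Fintype.card F = q)
    (hS : CapRep F S) (hH : finrank F H = 4) (ha : a ∈ S) (hb : b ∈ S) (hab : a ≠ b)
    (habH : span F {a, b} ≤ H) :
    2 * (q - 1) * (q ^ 2 + 1 - #(sect S H)) + (q - 1) * ∑ W ∈ covers (span F {a, b}) H,
        (#(sect S W) - q) * (#(sect S W) - q - 1 : ℤ)
      ≤ ∑ Q ∈ offPts S (span F {a, b}), defect q S H Q := by
  have hplanes : ∑ W ∈ covers (span F {a, b}) H,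
        ((q - 1) * ((#(sect S W) - 2) * (#(sect S W) - 3)) : ℤ)
      ≤ ∑ W ∈ covers (span F {a, b}) H, ∑ Q ∈ offPts S (span F {a, b}),
        (#(sect (secantPts F S Q) W) - 2 : ℤ) :=
    Finset.sum_le_sum fun W hW =>
      have hW := mem_covers.1 hW
      hS.le_sum_card_sect_secantPts_of_plane hcard ha hb hab hW.1 hW.2.2
  rw [← Finset.mul_sum, hS.sum_mul_sub_two_mul_sub_three hcard hH ha hb hab habH] at hplanes
  rw [hS.sum_defect_secant hcard ha hb hab habH]
  linarith

theorem sum_defect [Fintype F] [Fintype V] {q : ℕ} (hcard : Fintype.card F = q)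
    (hS : CapRep F S) (hH : finrank F H = 4) : ∑ Q ∈ offPts S H, defect q S H Q
      = (q ^ 2 - 1) * (#(sect S H) - (q ^ 2 + 1)) * (#(sect S H) - (q ^ 2 + q + 2)) := by
  rw [Finset.sum_congr rfl fun Q _ => defect_eq q S H Q, Finset.sum_add_distrib,
    hS.sum_card_secantPts hcard, Finset.sum_const, nsmul_eq_mul, hS.card_offPts hcard, hH]
  ring

theorem defect_nonneg [Fintype F] [Finite V] {q : ℕ} (hcard : Fintype.card F = q) (hq : Even q)
    (hS : CapRep F S) (hH : finrank F H = 4) (hQ : OffCap F S Q) (hQH : Q ∈ H)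
    (hsecant : (sect (secantPts F S Q) H).Nonempty) : 0 ≤ defect q S H Q := by
  have := hS.card_sect_add_card_sect_tangentPts_le_of_finrank (j := 2) hcard hq hQ hQH hsecant hH
  rw [Finset.sum_range_succ, Finset.sum_range_one] at this
  zify at this
  rw [defect]
  linarith

theorem sect_span_singleton_eq_empty (hS : CapRep F S) (hQ : OffCap F S Q) :
    sect S (span F {Q}) = ∅ :=
  Finset.eq_empty_of_forall_notMem fun a ha =>
    have ha := mem_sect.1 ha
    hQ.notMem_span a ha.1 (mem_span_singleton_symm (hS.ne_zero ha.1) ha.2)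

theorem exists_sect_eq_empty [Fintype F] [Finite V] {q : ℕ} (hcard : Fintype.card F = q)
    (hS : CapRep F S) (hQ : OffCap F S Q) (hQH : Q ∈ H) (hH : finrank F H = 4)
    (hT : sect (tangentPts F S Q) H = ∅) (hcardH : #(sect S H) < 2 * (q ^ 2 + q + 1)) :
    ∃ M ∈ covers (span F {Q}) H, sect S M = ∅ := by
  have hQle : span F {Q} ≤ H := (span_singleton_le_iff_mem Q H).2 hQH
  have hlines : #(covers (span F {Q}) H) = q ^ 2 + q + 1 := by
    rw [card_covers (j := 3) hcard hQle (by rw [hH, finrank_span_singleton hQ.ne_zero])]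
    simp only [Finset.sum_range_succ, Finset.sum_range_zero]
    ring
  by_contra! hne
  have htwo : ∀ M ∈ covers (span F {Q}) H, (2 : ℤ) ≤ #(sect S M) := by
    intro M hM
    obtain ⟨hQM, hMH, -⟩ := mem_covers.1 hM
    obtain ⟨a, ha⟩ := hne M hM
    obtain ⟨haS, haM⟩ := mem_sect.1 ha
    rw [← sect_secantPts_eq_of_sect_tangentPts_eq_empty hT hMH] at ha
    obtain ⟨-, b, hb, hba, hQab⟩ := mem_secantPts.1 (mem_sect.1 ha).1
    have hbM := hQ.mem_of_mem_span_pair haS (hQM (mem_span_singleton_self Q)) haM hQab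
    exact_mod_cast Finset.one_lt_card.2
      ⟨a, mem_sect.2 ⟨haS, haM⟩, b, mem_sect.2 ⟨hb, hbM⟩, hba.symm⟩
  have hsum := sum_card_sect_covers hQle S
  rw [hS.sect_span_singleton_eq_empty hQ, Finset.card_empty, Nat.cast_zero] at hsum
  simp only [sub_zero] at hsum
  have hle := Finset.card_nsmul_le_sum _ _ _ htwo
  rw [hlines, hsum, nsmul_eq_mul] at hle
  norm_cast at hle
  omega

theorem card_sect_plane_of_sect_tangentPts_eq_empty [Fintype F] [Finite V] {q : ℕ}
    (hcard : Fintype.card F = q) (hq : Even q) (hS : CapRep F S) (hQ : OffCap F S Q)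
    (hH : finrank F H = 4) (hT : sect (tangentPts F S Q) H = ∅)
    (hcardH : #(sect S H) = q ^ 2 + q + 2) (hWH : W ≤ H) (hW : finrank F W = 3) (hQW : Q ∈ W)
    (hne : (sect S W).Nonempty) : #(sect S W) = q + 2 := by
  obtain ⟨a, ha, b, hb, hab, hQab, habW⟩ :=
    hQ.exists_secant hQW (sect_secantPts_eq_of_sect_tangentPts_eq_empty hT hWH ▸ hne)
  have habH := habW.trans hWH
  have hrank := hS.finrank_span_pair ha hb hab
  have hle : ∀ W' ∈ covers (span F {a, b}) H,
      (#(sect S W') - #(sect S (span F {a, b})) : ℤ) ≤ q := by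
    intro W' hW'
    obtain ⟨habW', -, hrankW'⟩ := mem_covers.1 hW'
    have := hS.card_sect_add_card_sect_tangentPts_le_of_plane (hcard ▸ hq) hQ ha hb hQab habW'
      hrankW'
    rw [hS.card_sect_span_pair ha hb hab]
    omega
  have hsum : ∑ W' ∈ covers (span F {a, b}) H, (#(sect S W') - #(sect S (span F {a, b})) : ℤ)
      = ∑ _W' ∈ covers (span F {a, b}) H, (q : ℤ) := by
    rw [sum_card_sect_covers habH, Finset.sum_const,
      card_covers (j := 2) hcard habH (by rw [hH, hrank]), hS.card_sect_span_pair ha hb hab, hcardH,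
      Finset.sum_range_succ, Finset.sum_range_one, nsmul_eq_mul]
    push_cast
    ring
  have heq := (Finset.sum_eq_sum_iff_of_le hle).1 hsum W
    (mem_covers.2 ⟨habW, hWH, by rw [hW, hrank]⟩)
  rw [hS.card_sect_span_pair ha hb hab] at heq
  omega

-- A cap of this size on which every line through `Q` in `H` is a secant or external would make the
-- planes through an external line on `Q` meet it in `0` or `q + 2` points, but `q + 2 ∣ 4` fails.
theorem sect_tangentPts_nonempty [Fintype F] [Finite V] {q : ℕ} (hcard : Fintype.card F = q)
    (hq : Even q) (hq2 : 2 < q) (hS : CapRep F S) (hQ : OffCap F S Q) (hQH : Q ∈ H)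
    (hH : finrank F H = 4) (hcardH : #(sect S H) = q ^ 2 + q + 2) :
    (sect (tangentPts F S Q) H).Nonempty := by
  by_contra hT
  rw [Finset.not_nonempty_iff_eq_empty] at hT
  obtain ⟨M, hM, hSM⟩ := hS.exists_sect_eq_empty hcard hQ hQH hH hT (by rw [hcardH]; nlinarith)
  obtain ⟨hQM, hMH, hrankM⟩ := mem_covers.1 hM
  rw [finrank_span_singleton hQ.ne_zero] at hrankM
  have hsum := sum_card_sect_covers hMH S
  have hdvd : ((q + 2 : ℕ) : ℤ) ∣ #(sect S H) - #(sect S M) := by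
    rw [← hsum]
    refine Finset.dvd_sum fun W hW => ?_
    obtain ⟨hMW, hWH, hrankW⟩ := mem_covers.1 hW
    rw [hSM, Finset.card_empty, Nat.cast_zero, sub_zero]
    obtain hempty | hne := (sect S W).eq_empty_or_nonempty
    · rw [hempty, Finset.card_empty, Nat.cast_zero]
      exact dvd_zero _
    · rw [hS.card_sect_plane_of_sect_tangentPts_eq_empty hcard hq hQ hH hT hcardH hWH
        (by rw [hrankW, hrankM]) (hMW (hQM (mem_span_singleton_self Q))) hne]
  have hdvd4 : ((q + 2 : ℕ) : ℤ) ∣ 4 := by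
    have hsplit : (#(sect S H) - #(sect S M) : ℤ) = (q + 2 : ℕ) * (q - 1) + 4 := by
      rw [hSM, hcardH, Finset.card_empty]
      push_cast
      ring
    exact (dvd_add_right (dvd_mul_right _ _)).1 (hsplit ▸ hdvd)
  have := Int.le_of_dvd four_pos hdvd4
  omega

theorem two_mul_le_sum_defect_of_secant [Fintype F] [Fintype V] {q : ℕ}
    (hcard : Fintype.card F = q) (hS : CapRep F S) (hH : finrank F H = 4) (ha : a ∈ S)
    (hb : b ∈ S) (hab : a ≠ b) (habH : span F {a, b} ≤ H) :
    2 * (q - 1) * (q ^ 2 + 1 - #(sect S H))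
      ≤ ∑ Q ∈ offPts S (span F {a, b}), defect q S H Q := by
  refine le_trans (le_add_of_nonneg_right (mul_nonneg ?_ (Finset.sum_nonneg fun W _ => ?_)))
    (hS.le_sum_defect_of_secant hcard hH ha hb hab habH)
  · have : 1 < q := hcard ▸ Fintype.one_lt_card
    omega
  · nlinarith [Int.le_self_sq (#(sect S W) - q : ℤ)]

theorem two_mul_lt_sum_defect_of_secant [Fintype F] [Fintype V] {q : ℕ}
    (hcard : Fintype.card F = q) (hS : CapRep F S) (hH : finrank F H = 4) (ha : a ∈ S)
    (hb : b ∈ S) (hab : a ≠ b) (habH : span F {a, b} ≤ H) (hW : W ∈ covers (span F {a, b}) H)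
    (hcardW : q + 2 ≤ #(sect S W)) :
    2 * (q - 1) * (q ^ 2 + 1 - #(sect S H))
      < ∑ Q ∈ offPts S (span F {a, b}), defect q S H Q := by
  refine lt_of_lt_of_le (lt_add_of_pos_right _ (mul_pos ?_ (Finset.sum_pos' (fun W' _ => ?_)
    ⟨W, hW, ?_⟩))) (hS.le_sum_defect_of_secant hcard hH ha hb hab habH)
  · have : 1 < q := hcard ▸ Fintype.one_lt_card
    omega
  · nlinarith [Int.le_self_sq (#(sect S W') - q : ℤ)]
  · exact mul_pos (by omega) (by omega)

theorem card_sect_lt_of_defect_nonneg [Fintype F] [Fintype V] {q : ℕ} (hcard : Fintype.card F = q)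
    (hq : Even q) (hq2 : 2 < q) (hS : CapRep F S) (hH : finrank F H = 4)
    (hdefect : ∀ Q ∈ offPts S H, 0 ≤ defect q S H Q) (hWH : W ≤ H) (hW : finrank F W = 3)
    (hcardW : q + 2 ≤ #(sect S W)) : #(sect S H) < q ^ 2 + 1 := by
  obtain ⟨a, ha, b, hb, hab⟩ := Finset.one_lt_card.1 (show 1 < #(sect S W) by omega)
  obtain ⟨haS, haW⟩ := mem_sect.1 ha
  obtain ⟨hbS, hbW⟩ := mem_sect.1 hb
  have habW : span F {a, b} ≤ W := span_pair_le.2 ⟨haW, hbW⟩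
  have hlt := hS.two_mul_lt_sum_defect_of_secant hcard hH haS hbS hab (habW.trans hWH)
    (mem_covers.2 ⟨habW, hWH, by rw [hW, hS.finrank_span_pair haS hbS hab]⟩) hcardW
  have hle : ∑ Q ∈ offPts S (span F {a, b}), defect q S H Q ≤ ∑ Q ∈ offPts S H, defect q S H Q :=
    Finset.sum_le_sum_of_subset_of_nonneg (fun Q hQ => mem_offPts.2
      ⟨habW.trans hWH (mem_offPts.1 hQ).1, (mem_offPts.1 hQ).2⟩) fun Q hQ _ => hdefect Q hQ
  rw [hS.sum_defect hcard hH] at hle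
  have hsum := hlt.trans_le hle
  have hsum_nonneg := Finset.sum_nonneg hdefect
  rw [hS.sum_defect hcard hH] at hsum_nonneg
  have hoff := hS.offCap_add haS hbS hab
  have hmem : a + b ∈ H := hWH (add_mem haW hbW)
  have hupper : #(sect S H) < q ^ 2 + q + 2 := by
    have hadd := hdefect _ (mem_offPts.2 ⟨hmem, hoff⟩)
    rw [defect] at hadd
    refine lt_of_le_of_ne (by zify; omega) fun heq => ?_
    have hpos := (hS.sect_tangentPts_nonempty hcard hq hq2 hoff hmem hH heq).card_pos
    zify at heq hpos
    linarith
  by_contra! hlower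
  zify at hq2 hupper hlower
  obtain heq | hlt := hlower.eq_or_lt
  · rw [← heq] at hsum
    simp at hsum
  · have hprod := mul_pos (mul_pos (show (0 : ℤ) < q ^ 2 - 1 by nlinarith) (sub_pos.2 hlt))
      (sub_pos.2 hupper)
    linarith

theorem mul_card_sect_le_of_defect_nonneg [Fintype F] [Fintype V] {q : ℕ}
    (hcard : Fintype.card F = q) (hS : CapRep F S) (hH : finrank F H = 4)
    (hdefect : ∀ Q ∈ offPts S H, 0 ≤ defect q S H Q) (hlt : #(sect S H) < q ^ 2 + 1) :
    (q + 3) * #(sect S H) ≤ q ^ 3 + 2 * q ^ 2 + 3 * q + 4 := by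
  set c := #(sect S H)
  obtain hzero | hpos := c.eq_zero_or_pos
  · rw [hzero]
    omega
  have hlower : (c * (c - 1) * (2 * (q - 1) * (q ^ 2 + 1 - c)) : ℤ)
      ≤ ∑ Q ∈ offPts S H, #(sect (secantPts F S Q) H) * defect q S H Q := by
    rw [hS.sum_card_secantPts_mul H, show (c * (c - 1) : ℤ) = #(sect S H).offDiag by
      rw [Finset.offDiag_card, Nat.cast_sub (Nat.le_mul_self _), Nat.cast_mul]; ring,
      ← nsmul_eq_mul]
    refine Finset.card_nsmul_le_sum _ _ _ fun p hp => ?_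
    obtain ⟨ha, hb, hab⟩ := Finset.mem_offDiag.1 hp
    rw [mem_sect] at ha hb
    exact hS.two_mul_le_sum_defect_of_secant hcard hH ha.1 hb.1 hab (span_pair_le.2 ⟨ha.2, hb.2⟩)
  have hupper : ∑ Q ∈ offPts S H, #(sect (secantPts F S Q) H) * defect q S H Q
      ≤ c * ((q ^ 2 - 1) * (c - (q ^ 2 + 1)) * (c - (q ^ 2 + q + 2))) := by
    rw [← hS.sum_defect hcard hH, Finset.mul_sum]
    exact Finset.sum_le_sum fun Q hQ => mul_le_mul_of_nonneg_right
      (Nat.cast_le.2 (Finset.card_le_card (sect_mono_left secantPts_subset))) (hdefect Q hQ)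
  have hq : 1 < q := hcard ▸ Fintype.one_lt_card
  zify at hpos hlt hq ⊢
  refine le_of_mul_le_mul_left ?_ (mul_pos (mul_pos hpos (sub_pos.2 hq)) (sub_pos.2 hlt))
  linarith

theorem mul_card_sect_solid_le [Fintype F] [Finite V] {q : ℕ} (hcard : Fintype.card F = q)
    (hq : Even q) (hq2 : 2 < q) (hS : CapRep F S) (hH : finrank F H = 4) (hWH : W ≤ H)
    (hW : finrank F W = 3) (hcardW : q + 2 ≤ #(sect S W)) :
    (q + 3) * #(sect S H) ≤ q ^ 3 + 2 * q ^ 2 + 3 * q + 4 := by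
  have := Fintype.ofFinite V
  obtain ⟨T, hST, hT, hTH, hcomplete⟩ :=
    (hS.mono (sect_subset (E := H))).exists_complete fun a ha => (mem_sect.1 ha).2
  have hsectH {A : Finset V} (hA : A ⊆ T) : sect A H = A :=
    Finset.filter_true_of_mem fun a ha => hTH a (hA ha)
  have hdefect : ∀ Q ∈ offPts T H, 0 ≤ defect q T H Q := fun Q hQ =>
    hT.defect_nonneg hcard hq hH (mem_offPts.1 hQ).2 (mem_offPts.1 hQ).1
      (by rw [hsectH secantPts_subset]; exact hcomplete Q hQ)
  have hcardTW : q + 2 ≤ #(sect T W) :=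
    hcardW.trans (Finset.card_le_card (sect_sect hWH ▸ sect_mono_left hST))
  refine le_trans (Nat.mul_le_mul_left _ ?_) (hT.mul_card_sect_le_of_defect_nonneg hcard hH hdefect
    (hT.card_sect_lt_of_defect_nonneg hcard hq hq2 hH hdefect hWH hW hcardTW))
  rw [hsectH subset_rfl]
  exact Finset.card_le_card hST

end CapRep

end Solids

section Ovals

variable {F V : Type*} [Field F] [AddCommGroup V] [Module F V] {q : ℕ}
variable {S : Finset V} {E H U W : Submodule F V} {a b Q : V}

theorem card_sect_le_of_covers [Fintype F] [Finite V] (hcard : Fintype.card F = q)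
    (hUE : U ≤ E) {j : ℕ} (hj : finrank F E = finrank F U + (j + 1)) {t B : ℤ}
    (ht : t ≤ #(sect S U)) (hB : ∀ W ∈ covers U E, (#(sect S W) : ℤ) ≤ B) :
    (#(sect S E) : ℤ) ≤ t + (∑ i ∈ Finset.range (j + 1), (q : ℤ) ^ i) * (B - t) := by
  have hsum : (#(sect S E) - #(sect S U) : ℤ)
      ≤ (∑ i ∈ Finset.range (j + 1), (q : ℤ) ^ i) * (B - #(sect S U)) := by
    have hcovers : (∑ i ∈ Finset.range (j + 1), (q : ℤ) ^ i) = #(covers U E) := by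
      rw [card_covers hcard hUE hj, Nat.cast_sum]
      exact Finset.sum_congr rfl fun i _ => (Nat.cast_pow q i).symm
    rw [hcovers, ← sum_card_sect_covers hUE, ← nsmul_eq_mul]
    exact Finset.sum_le_card_nsmul _ _ _ fun W hW => sub_le_sub_right (hB W hW) _
  rw [Finset.sum_range_succ', pow_zero] at hsum ⊢
  have htail : 0 ≤ ∑ i ∈ Finset.range j, (q : ℤ) ^ (i + 1) :=
    Finset.sum_nonneg fun i _ => by positivity
  nlinarith

/-- The planes of `E` that meet the point set in an oval, that is, in `q + 1` points. -/
noncomputable def ovalPlanes [Finite V] (q : ℕ) (S : Finset V) (E : Submodule F V) :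
    Finset (Submodule F V) :=
  (Set.toFinite {W | W ≤ E ∧ finrank F W = 3 ∧ #(sect S W) = q + 1}).toFinset

theorem mem_ovalPlanes [Finite V] :
    W ∈ ovalPlanes q S E ↔ W ≤ E ∧ finrank F W = 3 ∧ #(sect S W) = q + 1 := by
  simp [ovalPlanes]

/-- The planes through `Q` that meet the cap in an oval, with no secant of that oval through `Q`. -/
noncomputable def nucleusPlanes [Finite V] (q : ℕ) (S : Finset V) (E : Submodule F V) (Q : V) :
    Finset (Submodule F V) :=
  {W ∈ ovalPlanes q S E | Q ∈ W ∧ sect (secantPts F S Q) W = ∅}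

theorem mem_nucleusPlanes [Finite V] : W ∈ nucleusPlanes q S E Q ↔
    (W ≤ E ∧ finrank F W = 3 ∧ #(sect S W) = q + 1) ∧ Q ∈ W ∧ sect (secantPts F S Q) W = ∅ := by
  rw [nucleusPlanes, Finset.mem_filter, mem_ovalPlanes]

theorem card_sect_tangentPts_of_sect_secantPts_eq_empty (h : sect (secantPts F S Q) W = ∅) :
    #(sect (tangentPts F S Q) W) = #(sect S W) := by
  rw [← card_sect_tangentPts_add_card_sect_secantPts S Q W, h, Finset.card_empty, add_zero]

namespace CapRep

theorem le_card_ovalPlanes_through [Fintype F] [Finite V] (hcard : Fintype.card F = q)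
    (hS : CapRep F S) (hE : finrank F E = 5)
    (hplane : ∀ W ≤ E, finrank F W = 3 → #(sect S W) ≤ q + 1) (ha : a ∈ S) (hb : b ∈ S)
    (hab : a ≠ b) (habE : span F {a, b} ≤ E) :
    (#(sect S E) - 2 - (q - 2) * (q ^ 2 + q + 1) : ℤ)
      ≤ #{W ∈ ovalPlanes q S E | a ∈ W ∧ b ∈ W} := by
  have hrank := hS.finrank_span_pair ha hb hab
  have hcovers : #(covers (span F {a, b}) E) = q ^ 2 + q + 1 := by
    rw [card_covers (j := 3) hcard habE (by rw [hE, hrank])]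
    simp only [Finset.sum_range_succ, Finset.sum_range_zero]
    ring
  have hsum := sum_card_sect_covers habE S
  have hle : ∀ W ∈ covers (span F {a, b}) E, (#(sect S W) - #(sect S (span F {a, b})) : ℤ)
      ≤ (q - 2) + if #(sect S W) = q + 1 then 1 else 0 := by
    intro W hW
    obtain ⟨-, hWE, hrankW⟩ := mem_covers.1 hW
    have := hplane W hWE (by rw [hrankW, hrank])
    rw [hS.card_sect_span_pair ha hb hab]
    split_ifs <;> omega
  have hsub : {W ∈ covers (span F {a, b}) E | #(sect S W) = q + 1}
      ⊆ {W ∈ ovalPlanes q S E | a ∈ W ∧ b ∈ W} := by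
    intro W hW
    obtain ⟨hW, hcardW⟩ := Finset.mem_filter.1 hW
    obtain ⟨habW, hWE, hrankW⟩ := mem_covers.1 hW
    exact Finset.mem_filter.2
      ⟨mem_ovalPlanes.2 ⟨hWE, by rw [hrankW, hrank], hcardW⟩, span_pair_le.1 habW⟩
  refine le_trans ?_ (Nat.cast_le.2 (Finset.card_le_card hsub))
  have hsumle := Finset.sum_le_sum hle
  rw [hsum, hS.card_sect_span_pair ha hb hab, Finset.sum_add_distrib, Finset.sum_const, hcovers,
    Finset.sum_boole, nsmul_eq_mul] at hsumle
  push_cast at hsumle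
  linarith

theorem le_card_ovalPlanes [Fintype F] [Finite V] (hcard : Fintype.card F = q) (hS : CapRep F S)
    (hE : finrank F E = 5) (hplane : ∀ W ≤ E, finrank F W = 3 → #(sect S W) ≤ q + 1) :
    (#(sect S E) * (#(sect S E) - 1) * (#(sect S E) - 2 - (q - 2) * (q ^ 2 + q + 1)) : ℤ)
      ≤ (q + 1) * q * #(ovalPlanes q S E) := by
  have hoffDiag {A : Finset V} : (#A.offDiag : ℤ) = #A * (#A - 1) := by
    rw [Finset.offDiag_card, Nat.cast_sub (Nat.le_mul_self _), Nat.cast_mul]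
    ring
  have hpairs : ∀ W ∈ ovalPlanes q S E,
      (#{p ∈ (sect S E).offDiag | p.1 ∈ W ∧ p.2 ∈ W} : ℤ) = (q + 1) * q := by
    intro W hW
    obtain ⟨hWE, -, hcardW⟩ := mem_ovalPlanes.1 hW
    have hfilter : {p ∈ (sect S E).offDiag | p.1 ∈ W ∧ p.2 ∈ W} = (sect S W).offDiag := by
      ext p
      rw [← sect_sect hWE]
      simp only [Finset.mem_filter, Finset.mem_offDiag, mem_sect]
      tauto
    rw [hfilter, hoffDiag, hcardW]
    push_cast
    ring
  have hswap := Finset.sum_card_bipartiteAbove_eq_sum_card_bipartiteBelow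
    (s := (sect S E).offDiag) (t := ovalPlanes q S E)
    (fun p (W : Submodule F V) => p.1 ∈ W ∧ p.2 ∈ W)
  zify [Finset.bipartiteAbove, Finset.bipartiteBelow] at hswap
  rw [Finset.sum_congr rfl hpairs, Finset.sum_const, nsmul_eq_mul, mul_comm] at hswap
  rw [← hswap, ← hoffDiag, ← nsmul_eq_mul]
  refine Finset.card_nsmul_le_sum _ _ _ fun p hp => ?_
  obtain ⟨ha, hb, hab⟩ := Finset.mem_offDiag.1 hp
  rw [mem_sect] at ha hb
  exact hS.le_card_ovalPlanes_through hcard hE hplane ha.1 hb.1 hab (span_pair_le.2 ⟨ha.2, hb.2⟩)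

theorem le_card_offPts_oval [Fintype F] [Fintype V] (hcard : Fintype.card F = q) (hq : Even q)
    (hS : CapRep F S) (hW : finrank F W = 3) (hcardW : #(sect S W) = q + 1) :
    (q - 1 : ℤ) ≤ #{Q ∈ offPts S W | sect (secantPts F S Q) W = ∅} := by
  have hle : ∀ Q ∈ offPts S W,
      (q - q * if sect (secantPts F S Q) W = ∅ then 1 else 0 : ℤ)
        ≤ #(sect (secantPts F S Q) W) := by
    intro Q hQ
    obtain ⟨hQW, hQ⟩ := mem_offPts.1 hQ
    split_ifs with hsecant
    · rw [hsecant, mul_one, sub_self, Finset.card_empty, Nat.cast_zero]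
    · have hplane := hS.card_sect_add_card_sect_tangentPts_le_of_finrank (j := 1) hcard hq hQ hQW
        (Finset.nonempty_iff_ne_empty.2 hsecant) hW
      have := card_sect_tangentPts_add_card_sect_secantPts S Q W
      rw [Finset.sum_range_one, pow_zero] at hplane
      omega
  have hsum := Finset.sum_le_sum hle
  rw [hS.sum_card_secantPts hcard, Finset.sum_sub_distrib, Finset.sum_const, nsmul_eq_mul,
    hS.card_offPts hcard, ← Finset.mul_sum, Finset.sum_boole, hW, hcardW] at hsum
  push_cast at hsum
  have hq0 : (0 : ℤ) < q := by exact_mod_cast hcard ▸ Fintype.card_pos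
  refine le_of_mul_le_mul_left ?_ hq0
  linarith

theorem mul_card_ovalPlanes_le_sum_card_nucleusPlanes [Fintype F] [Fintype V]
    (hcard : Fintype.card F = q) (hq : Even q) (hS : CapRep F S) (E : Submodule F V) :
    ((q - 1) * #(ovalPlanes q S E) : ℤ) ≤ ∑ Q ∈ offPts S E, (#(nucleusPlanes q S E Q) : ℤ) := by
  have hswap := Finset.sum_card_bipartiteAbove_eq_sum_card_bipartiteBelow
    (s := offPts S E) (t := ovalPlanes q S E)
    (fun Q (W : Submodule F V) => Q ∈ W ∧ sect (secantPts F S Q) W = ∅)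
  zify [Finset.bipartiteAbove, Finset.bipartiteBelow] at hswap
  simp only [nucleusPlanes]
  rw [hswap, mul_comm, ← nsmul_eq_mul]
  refine Finset.card_nsmul_le_sum _ _ _ fun W hW => ?_
  obtain ⟨hWE, hrankW, hcardW⟩ := mem_ovalPlanes.1 hW
  refine (hS.le_card_offPts_oval hcard hq hrankW hcardW).trans
    (Nat.cast_le.2 (Finset.card_le_card fun Q hQ => ?_))
  rw [Finset.mem_filter, mem_offPts] at hQ ⊢
  exact ⟨⟨hWE hQ.1.1, hQ.1.2⟩, hQ.1.1, hQ.2⟩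

theorem span_pair_sup_eq_of_mem_nucleusPlanes [Finite V] (hS : CapRep F S)
    (hW : W ∈ nucleusPlanes q S E Q) (ha : a ∈ sect S W) (hb : b ∈ sect S W) (hab : a ≠ b) :
    W = span F {a, b} ⊔ span F {Q} := by
  obtain ⟨⟨-, hrankW, -⟩, hQW, hsecant⟩ := mem_nucleusPlanes.1 hW
  have haW := mem_sect.1 ha
  have hbW := mem_sect.1 hb
  refine eq_sup_span_singleton (span_pair_le.2 ⟨haW.2, hbW.2⟩)
    (by rw [hrankW, hS.finrank_span_pair haW.1 hbW.1 hab]) hQW fun hQab => ?_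
  exact Finset.notMem_empty a (hsecant ▸ mem_sect.2
    ⟨mem_secantPts.2 ⟨haW.1, b, hbW.1, hab.symm, hQab⟩, haW.2⟩)

theorem mul_card_nucleusPlanes_le [Finite V] (hS : CapRep F S)
    (hH : ∀ W ∈ nucleusPlanes q S E Q, W ≤ H) :
    (q + 1) * q * #(nucleusPlanes q S E Q)
      ≤ #(sect (tangentPts F S Q) H) * (#(sect (tangentPts F S Q) H) - 1) := by
  set X := tangentPts F S Q
  have hcardX : ∀ W ∈ nucleusPlanes q S E Q, #(sect X W).offDiag = (q + 1) * q := by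
    intro W hW
    obtain ⟨⟨-, -, hcardW⟩, -, hsecant⟩ := mem_nucleusPlanes.1 hW
    rw [Finset.offDiag_card, card_sect_tangentPts_of_sect_secantPts_eq_empty hsecant, hcardW,
      ← Nat.mul_sub_one, Nat.add_sub_cancel]
  have hdisj : (nucleusPlanes q S E Q : Set (Submodule F V)).PairwiseDisjoint
      fun W => (sect X W).offDiag := by
    intro W hW W' hW' hne
    refine Finset.disjoint_left.2 fun p hp hp' => hne ?_
    obtain ⟨ha, hb, hab⟩ := Finset.mem_offDiag.1 hp
    obtain ⟨ha', hb', -⟩ := Finset.mem_offDiag.1 hp'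
    have hsub {U : Submodule F V} : sect X U ⊆ sect S U := sect_mono_left tangentPts_subset
    rw [hS.span_pair_sup_eq_of_mem_nucleusPlanes hW (hsub ha) (hsub hb) hab,
      hS.span_pair_sup_eq_of_mem_nucleusPlanes hW' (hsub ha') (hsub hb') hab]
  rw [mul_comm, ← smul_eq_mul, ← Finset.sum_const, ← Finset.sum_congr rfl hcardX,
    ← Finset.card_biUnion hdisj, Nat.mul_sub_one, ← Finset.offDiag_card]
  exact Finset.card_le_card (Finset.biUnion_subset.2 fun W hW =>
    Finset.offDiag_mono (sect_mono (hH W hW)))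

end CapRep

end Ovals

section SecantFreeSolids

variable {F V : Type*} [Field F] [AddCommGroup V] [Module F V] {q : ℕ}
variable {S A : Finset V} {E H H₁ H₂ H₃ W W' : Submodule F V} {Q : V}

/-- The solids through a plane `W` in which no secant of the cap passes through `Q`. -/
noncomputable def secantFreeSolids [Finite V] (S : Finset V) (E : Submodule F V) (Q : V)
    (W : Submodule F V) : Finset (Submodule F V) :=
  {H ∈ covers W E | sect (secantPts F S Q) H = ∅}

theorem mem_secantFreeSolids [Finite V] : H ∈ secantFreeSolids S E Q W ↔
    (W ≤ H ∧ H ≤ E ∧ finrank F H = finrank F W + 1) ∧ sect (secantPts F S Q) H = ∅ := by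
  rw [secantFreeSolids, Finset.mem_filter, mem_covers]

theorem le_and_finrank_eq_of_mem_secantFreeSolids [Finite V] (hW : W ∈ nucleusPlanes q S E Q)
    (hH : H ∈ secantFreeSolids S E Q W) : H ≤ E ∧ finrank F H = 4 := by
  obtain ⟨⟨-, hHE, hrankH⟩, -⟩ := mem_secantFreeSolids.1 hH
  exact ⟨hHE, by rw [hrankH, (mem_nucleusPlanes.1 hW).1.2.1]⟩

theorem finrank_inf_of_solids [FiniteDimensional F V] (hE : finrank F E = 5)
    (h₁ : finrank F H₁ = 4) (h₂ : finrank F H₂ = 4) (h₁E : H₁ ≤ E) (h₂E : H₂ ≤ E)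
    (hne : H₁ ≠ H₂) : finrank F ↥(H₁ ⊓ H₂) = 3 := by
  have hadd := finrank_sup_add_finrank_inf_eq H₁ H₂
  have hle := finrank_mono (sup_le h₁E h₂E)
  have hlt : finrank F H₁ < finrank F ↥(H₁ ⊔ H₂) :=
    finrank_lt_finrank_of_lt (left_lt_sup.2 fun h =>
      hne (eq_of_le_of_finrank_eq h (h₂.trans h₁.symm)).symm)
  omega

theorem sect_inter_sect (A : Finset V) (H₁ H₂ : Submodule F V) :
    sect A H₁ ∩ sect A H₂ = sect A (H₁ ⊓ H₂) := by
  ext v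
  simp only [Finset.mem_inter, mem_sect, mem_inf]
  tauto

theorem card_sect_add_card_sect_le {t : ℕ} (h₁ : H₁ ≤ E) (h₂ : H₂ ≤ E)
    (h₁₂ : #(sect A (H₁ ⊓ H₂)) ≤ t) : #(sect A H₁) + #(sect A H₂) ≤ #(sect A E) + t := by
  rw [← Finset.card_union_add_card_inter, sect_inter_sect]
  exact add_le_add (Finset.card_le_card (Finset.union_subset (sect_mono h₁) (sect_mono h₂))) h₁₂

theorem card_sect_add_card_sect_add_card_sect_le {t : ℕ} (h₁ : H₁ ≤ E) (h₂ : H₂ ≤ E) (h₃ : H₃ ≤ E)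
    (h₁₂ : #(sect A (H₁ ⊓ H₂)) ≤ t) (h₁₃ : #(sect A (H₁ ⊓ H₃)) ≤ t)
    (h₂₃ : #(sect A (H₂ ⊓ H₃)) ≤ t) :
    #(sect A H₁) + #(sect A H₂) + #(sect A H₃) ≤ #(sect A E) + 3 * t := by
  have hpair := Finset.card_union_add_card_inter (sect A H₁) (sect A H₂)
  have htriple := Finset.card_union_add_card_inter (sect A H₁ ∪ sect A H₂) (sect A H₃)
  rw [Finset.union_inter_distrib_right, sect_inter_sect, sect_inter_sect] at htriple
  rw [sect_inter_sect] at hpair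
  have hinter := Finset.card_union_le (sect A (H₁ ⊓ H₃)) (sect A (H₂ ⊓ H₃))
  have hunion := Finset.card_le_card (Finset.union_subset
    (Finset.union_subset (sect_mono h₁) (sect_mono h₂)) (sect_mono h₃) :
      sect A H₁ ∪ sect A H₂ ∪ sect A H₃ ⊆ sect A E)
  omega

namespace CapRep

variable [Fintype F] [Finite V]

theorem card_sect_add_card_sect_tangentPts_le_sum (hcard : Fintype.card F = q) (hq : Even q)
    (hS : CapRep F S) (hE : finrank F E = 5) (hQ : OffCap F S Q)
    (hW : W ∈ nucleusPlanes q S E Q) :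
    (#(sect S E) + #(sect (tangentPts F S Q) E) : ℤ) ≤ (q + 1) * (q ^ 2 - q + 2)
      + ∑ H ∈ secantFreeSolids S E Q W,
        (2 * #(sect (tangentPts F S Q) H) - (q ^ 2 + q + 2) : ℤ) := by
  obtain ⟨⟨hWE, hrankW, hcardW⟩, hQW, hsecant⟩ := mem_nucleusPlanes.1 hW
  have hcardX := card_sect_tangentPts_of_sect_secantPts_eq_empty hsecant
  have hcovers := card_covers (j := 2) hcard hWE (by rw [hE, hrankW])
  rw [Finset.sum_range_succ, Finset.sum_range_one] at hcovers
  have hle : ∀ H ∈ covers W E, ((#(sect S H) - #(sect S W))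
        + (#(sect (tangentPts F S Q) H) - #(sect (tangentPts F S Q) W)) : ℤ)
      ≤ (q ^ 2 - q) + if sect (secantPts F S Q) H = ∅ then
          (2 * #(sect (tangentPts F S Q) H) - (q ^ 2 + q + 2) : ℤ) else 0 := by
    intro H hH
    obtain ⟨hWH, -, hrankH⟩ := mem_covers.1 hH
    rw [hcardX, hcardW]
    split_ifs with hsecantH
    · rw [card_sect_tangentPts_of_sect_secantPts_eq_empty hsecantH]
      push_cast
      linarith
    · have := hS.card_sect_add_card_sect_tangentPts_le_of_finrank (j := 2) hcard hq hQ (hWH hQW)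
        (Finset.nonempty_iff_ne_empty.2 hsecantH) (by rw [hrankH, hrankW])
      rw [Finset.sum_range_succ, Finset.sum_range_one] at this
      zify at this
      push_cast
      linarith
  have hsum := Finset.sum_le_sum hle
  rw [Finset.sum_add_distrib, Finset.sum_add_distrib, sum_card_sect_covers hWE,
    sum_card_sect_covers hWE, Finset.sum_const, nsmul_eq_mul, hcovers, ← Finset.sum_filter, hcardX,
    hcardW] at hsum
  push_cast at hsum
  rw [secantFreeSolids]
  linarith

theorem card_sect_secantPts_le_mul (hcard : Fintype.card F = q) (hq : Even q)
    (hS : CapRep F S) (hE : finrank F E = 5) (hQ : OffCap F S Q)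
    (hW : W ∈ nucleusPlanes q S E Q) :
    (#(sect (secantPts F S Q) E) : ℤ)
      ≤ (q ^ 2 - q) * (q + 1 - #(secantFreeSolids S E Q W)) := by
  obtain ⟨⟨hWE, hrankW, hcardW⟩, hQW, hsecant⟩ := mem_nucleusPlanes.1 hW
  have hcardX := card_sect_tangentPts_of_sect_secantPts_eq_empty hsecant
  have hcovers := card_covers (j := 2) hcard hWE (by rw [hE, hrankW])
  rw [Finset.sum_range_succ, Finset.sum_range_one] at hcovers
  have hle : ∀ H ∈ covers W E,
      (#(sect (secantPts F S Q) H) - #(sect (secantPts F S Q) W) : ℤ)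
        ≤ (q ^ 2 - q) - (q ^ 2 - q) * if sect (secantPts F S Q) H = ∅ then 1 else 0 := by
    intro H hH
    obtain ⟨hWH, -, hrankH⟩ := mem_covers.1 hH
    rw [hsecant, Finset.card_empty]
    split_ifs with hsecantH
    · rw [hsecantH, Finset.card_empty]
      omega
    · have hsolid := hS.card_sect_add_card_sect_tangentPts_le_of_finrank (j := 2) hcard hq hQ
        (hWH hQW) (Finset.nonempty_iff_ne_empty.2 hsecantH) (by rw [hrankH, hrankW])
      have hsplit := card_sect_tangentPts_add_card_sect_secantPts S Q H
      have hmono := Finset.card_le_card (sect_mono (S := tangentPts F S Q) hWH)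
      rw [Finset.sum_range_succ, Finset.sum_range_one] at hsolid
      rw [hcardX, hcardW] at hmono
      zify at hsolid hsplit hmono
      push_cast
      linarith
  have hsum := Finset.sum_le_sum hle
  rw [sum_card_sect_covers hWE, Finset.sum_sub_distrib, Finset.sum_const, nsmul_eq_mul, hcovers,
    ← Finset.mul_sum, Finset.sum_boole, hsecant, Finset.card_empty] at hsum
  push_cast at hsum
  rw [secantFreeSolids]
  linarith

theorem mul_card_sect_tangentPts_add_one_le (hcard : Fintype.card F = q) (hq : Even q)
    (hq2 : 2 < q) (hS : CapRep F S) (hQ : OffCap F S Q) (hW : W ∈ nucleusPlanes q S E Q)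
    (hH : H ∈ secantFreeSolids S E Q W) :
    (q + 3) * (#(sect (tangentPts F S Q) H) + 1) ≤ q ^ 3 + 2 * q ^ 2 + 3 * q + 4 := by
  obtain ⟨⟨-, hrankW, hcardW⟩, hQW, -⟩ := mem_nucleusPlanes.1 hW
  obtain ⟨⟨hWH, -, hrankH⟩, hsecant⟩ := mem_secantFreeSolids.1 hH
  have hQS : Q ∉ S := fun hQS => hQ.notMem_span Q hQS (mem_span_singleton_self Q)
  have hsecantH : secantPts F (sect S H) Q = ∅ := by
    refine Finset.eq_empty_of_forall_notMem fun a ha => ?_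
    exact Finset.notMem_empty a (hsecant ▸ mem_sect.2
      ⟨secantPts_mono sect_subset ha, (mem_sect.1 (secantPts_subset ha)).2⟩)
  have hcap := (hS.mono sect_subset).insert_of_secantPts_eq_empty (hQ.mono sect_subset) hsecantH
  have hinsert {U : Submodule F V} (hUH : U ≤ H) (hQU : Q ∈ U) :
      #(sect (insert Q (sect S H)) U) = #(sect S U) + 1 := by
    rw [sect, Finset.filter_insert, if_pos hQU, Finset.card_insert_of_notMem fun h =>
      hQS (sect_subset (Finset.mem_filter.1 h).1)]
    exact congrArg (· + 1) (congrArg _ (sect_sect hUH))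
  have := hcap.mul_card_sect_solid_le hcard hq hq2 (by rw [hrankH, hrankW]) hWH hrankW
    (by rw [hinsert hWH hQW, hcardW])
  rwa [hinsert le_rfl (hWH hQW), ← card_sect_tangentPts_of_sect_secantPts_eq_empty hsecant] at this

end CapRep

end SecantFreeSolids

section RankFive

variable {F V : Type*} [Field F] [Fintype F] [AddCommGroup V] [Module F V]
variable {S : Finset V} {E H H' W : Submodule F V} {Q : V}

namespace CapRep

section Finite

variable [Finite V]

theorem card_sect_plane_le (hcard : Fintype.card F = 8) (hS : CapRep F S) (hE : finrank F E = 5)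
    (hc : 480 ≤ #(sect S E)) (hWE : W ≤ E) (hW : finrank F W = 3) : #(sect S W) ≤ 9 := by
  by_contra! hcardW
  have hsolid : ∀ H ∈ covers W E, (#(sect S H) : ℤ) ≤ 60 := by
    intro H hH
    obtain ⟨hWH, -, hrankH⟩ := mem_covers.1 hH
    have := hS.mul_card_sect_solid_le hcard (by decide) (by norm_num) (by rw [hrankH, hW]) hWH hW
      hcardW
    omega
  have hbound := card_sect_le_of_covers (j := 1) (t := 10) hcard hWE (by rw [hE, hW])
    (by exact_mod_cast hcardW) hsolid
  norm_num [Finset.sum_range_succ] at hbound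
  omega

theorem card_sect_tangentPts_le_of_mem_secantFreeSolids (hcard : Fintype.card F = 8)
    (hS : CapRep F S) (hQ : OffCap F S Q) (hW : W ∈ nucleusPlanes 8 S E Q)
    (hH : H ∈ secantFreeSolids S E Q W) : #(sect (tangentPts F S Q) H) ≤ 59 := by
  have := hS.mul_card_sect_tangentPts_add_one_le hcard (by decide) (by norm_num) hQ hW hH
  omega

theorem card_sect_tangentPts_inf_le (hcard : Fintype.card F = 8) (hS : CapRep F S)
    (hE : finrank F E = 5) (hc : 480 ≤ #(sect S E)) (hH : H ≤ E ∧ finrank F H = 4)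
    (hH' : H' ≤ E ∧ finrank F H' = 4) (hne : H ≠ H') :
    #(sect (tangentPts F S Q) (H ⊓ H')) ≤ 9 :=
  (Finset.card_le_card (sect_mono_left tangentPts_subset)).trans
    (hS.card_sect_plane_le hcard hE hc (inf_le_left.trans hH.1)
      (finrank_inf_of_solids hE hH.2 hH'.2 hH.1 hH'.1 hne))

theorem card_secantFreeSolids_le_two (hcard : Fintype.card F = 8) (hS : CapRep F S)
    (hE : finrank F E = 5) (hc : 480 ≤ #(sect S E)) (hQ : OffCap F S Q)
    (hσ : #(sect S E) + #(sect (tangentPts F S Q) E) ≤ 586) (hW : W ∈ nucleusPlanes 8 S E Q) :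
    #(secantFreeSolids S E Q W) ≤ 2 := by
  have hsecant := hS.card_sect_secantPts_le_mul hcard (by decide) hE hQ hW
  have hsplit := card_sect_tangentPts_add_card_sect_secantPts S Q E
  push_cast at hsecant
  omega

theorem exists_two_secantFreeSolids (hcard : Fintype.card F = 8) (hS : CapRep F S)
    (hE : finrank F E = 5) (hc : 480 ≤ #(sect S E)) (hQ : OffCap F S Q)
    (hσ : #(sect S E) + #(sect (tangentPts F S Q) E) ≤ 586)
    (hσ' : 566 < #(sect S E) + #(sect (tangentPts F S Q) E)) (hW : W ∈ nucleusPlanes 8 S E Q) :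
    ∃ H ∈ secantFreeSolids S E Q W, ∃ H' ∈ secantFreeSolids S E Q W, H ≠ H' ∧ W = H ⊓ H' ∧
      97 ≤ #(sect (tangentPts F S Q) H) + #(sect (tangentPts F S Q) H') := by
  have hsum := hS.card_sect_add_card_sect_tangentPts_le_sum hcard (by decide) hE hQ hW
  have hx {H : Submodule F V} (hH : H ∈ secantFreeSolids S E Q W) :=
    hS.card_sect_tangentPts_le_of_mem_secantFreeSolids hcard hQ hW hH
  have hfree := hS.card_secantFreeSolids_le_two hcard hE hc hQ hσ hW
  interval_cases hcount : #(secantFreeSolids S E Q W)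
  · rw [Finset.card_eq_zero.1 hcount, Finset.sum_empty] at hsum
    push_cast at hsum
    omega
  · obtain ⟨H, hH⟩ := Finset.card_eq_one.1 hcount
    have := hx (hH ▸ Finset.mem_singleton_self H)
    rw [hH, Finset.sum_singleton] at hsum
    push_cast at hsum
    omega
  · obtain ⟨H, H', hne, heq⟩ := Finset.card_eq_two.1 hcount
    have hH : H ∈ secantFreeSolids S E Q W := by simp [heq]
    have hH' : H' ∈ secantFreeSolids S E Q W := by simp [heq]
    have hsolid := le_and_finrank_eq_of_mem_secantFreeSolids hW hH
    have hsolid' := le_and_finrank_eq_of_mem_secantFreeSolids hW hH'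
    rw [heq, Finset.sum_pair hne] at hsum
    push_cast at hsum
    refine ⟨H, hH, H', hH', hne, eq_of_le_of_finrank_eq (le_inf
      (mem_secantFreeSolids.1 hH).1.1 (mem_secantFreeSolids.1 hH').1.1) ?_, by omega⟩
    rw [finrank_inf_of_solids hE hsolid.2 hsolid'.2 hsolid.1 hsolid'.1 hne]
    exact (mem_nucleusPlanes.1 hW).1.2.1

theorem card_nucleusPlanes_le_one (hcard : Fintype.card F = 8) (hS : CapRep F S)
    (hE : finrank F E = 5) (hc : 480 ≤ #(sect S E)) (hQ : OffCap F S Q)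
    (hσ : #(sect S E) + #(sect (tangentPts F S Q) E) ≤ 586)
    (hσ' : 566 < #(sect S E) + #(sect (tangentPts F S Q) E)) : #(nucleusPlanes 8 S E Q) ≤ 1 := by
  refine Finset.card_le_one.2 fun W hW W' hW' => ?_
  obtain ⟨H₁, hH₁, H₂, hH₂, hne, rfl, hx⟩ :=
    hS.exists_two_secantFreeSolids hcard hE hc hQ hσ hσ' hW
  obtain ⟨K₁, hK₁, K₂, hK₂, hne', rfl, hx'⟩ :=
    hS.exists_two_secantFreeSolids hcard hE hc hQ hσ hσ' hW'
  have hsmall {K : Submodule F V} (hK : K ∈ secantFreeSolids S E Q (K₁ ⊓ K₂)) :=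
    hS.card_sect_tangentPts_le_of_mem_secantFreeSolids hcard hQ hW' hK
  have hsolid₁ := le_and_finrank_eq_of_mem_secantFreeSolids hW hH₁
  have hsolid₂ := le_and_finrank_eq_of_mem_secantFreeSolids hW hH₂
  have hmem {K : Submodule F V} (hK : K ∈ secantFreeSolids S E Q (K₁ ⊓ K₂))
      (hxK : 38 ≤ #(sect (tangentPts F S Q) K)) : K = H₁ ∨ K = H₂ := by
    by_contra! hKne
    have hsolid := le_and_finrank_eq_of_mem_secantFreeSolids hW' hK
    have hthree := card_sect_add_card_sect_add_card_sect_le hsolid₁.1 hsolid₂.1 hsolid.1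
      (hS.card_sect_tangentPts_inf_le (Q := Q) hcard hE hc hsolid₁ hsolid₂ hne)
      (hS.card_sect_tangentPts_inf_le hcard hE hc hsolid₁ hsolid hKne.1.symm)
      (hS.card_sect_tangentPts_inf_le hcard hE hc hsolid₂ hsolid hKne.2.symm)
    omega
  have hK₁le := hsmall hK₁
  have hK₂le := hsmall hK₂
  rcases hmem hK₁ (by omega) with rfl | rfl <;> rcases hmem hK₂ (by omega) with rfl | rfl
  exacts [absurd rfl hne', rfl, inf_comm _ _, absurd rfl hne']

theorem exists_secantFreeSolid_le (hcard : Fintype.card F = 8) (hS : CapRep F S)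
    (hE : finrank F E = 5) (hc : 480 ≤ #(sect S E)) (hQ : OffCap F S Q)
    (hσ : #(sect S E) + #(sect (tangentPts F S Q) E) ≤ 566)
    (hσ' : 522 < #(sect S E) + #(sect (tangentPts F S Q) E)) (hW : W ∈ nucleusPlanes 8 S E Q) :
    ∃ H ∈ secantFreeSolids S E Q W,
      #(sect S E) + #(sect (tangentPts F S Q) E) ≤ 448 + 2 * #(sect (tangentPts F S Q) H) := by
  have hsum := hS.card_sect_add_card_sect_tangentPts_le_sum hcard (by decide) hE hQ hW
  have hfree := hS.card_secantFreeSolids_le_two hcard hE hc hQ (hσ.trans (by norm_num)) hW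
  interval_cases hcount : #(secantFreeSolids S E Q W)
  · rw [Finset.card_eq_zero.1 hcount, Finset.sum_empty] at hsum
    push_cast at hsum
    omega
  · obtain ⟨H, hH⟩ := Finset.card_eq_one.1 hcount
    rw [hH, Finset.sum_singleton] at hsum
    push_cast at hsum
    exact ⟨H, hH ▸ Finset.mem_singleton_self H, by omega⟩
  · obtain ⟨H, H', hne, heq⟩ := Finset.card_eq_two.1 hcount
    have hsolid := le_and_finrank_eq_of_mem_secantFreeSolids hW (H := H) (by simp [heq])
    have hsolid' := le_and_finrank_eq_of_mem_secantFreeSolids hW (H := H') (by simp [heq])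
    have htwo := card_sect_add_card_sect_le hsolid.1 hsolid'.1
      (hS.card_sect_tangentPts_inf_le (Q := Q) hcard hE hc hsolid hsolid' hne)
    rw [heq, Finset.sum_pair hne] at hsum
    push_cast at hsum
    omega

theorem card_nucleusPlanes_le_of_le (hcard : Fintype.card F = 8) (hS : CapRep F S)
    (hE : finrank F E = 5) (hc : 480 ≤ #(sect S E)) (hQ : OffCap F S Q)
    (hσ : #(sect S E) + #(sect (tangentPts F S Q) E) ≤ 566)
    (hσ' : 522 < #(sect S E) + #(sect (tangentPts F S Q) E)) : #(nucleusPlanes 8 S E Q) ≤ 47 := by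
  rcases (nucleusPlanes 8 S E Q).eq_empty_or_nonempty with hempty | ⟨W₀, hW₀⟩
  · rw [hempty, Finset.card_empty]
    norm_num
  obtain ⟨H₀, hH₀, hx₀⟩ := hS.exists_secantFreeSolid_le hcard hE hc hQ hσ hσ' hW₀
  have hsolid₀ := le_and_finrank_eq_of_mem_secantFreeSolids hW₀ hH₀
  have hle : ∀ W ∈ nucleusPlanes 8 S E Q, W ≤ H₀ := by
    intro W hW
    obtain ⟨H, hH, hx⟩ := hS.exists_secantFreeSolid_le hcard hE hc hQ hσ hσ' hW
    have hsolid := le_and_finrank_eq_of_mem_secantFreeSolids hW hH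
    obtain rfl : H = H₀ := by
      by_contra hne
      have htwo := card_sect_add_card_sect_le hsolid.1 hsolid₀.1
        (hS.card_sect_tangentPts_inf_le (Q := Q) hcard hE hc hsolid hsolid₀ hne)
      omega
    exact (mem_secantFreeSolids.1 hH).1.1
  have hx := hS.card_sect_tangentPts_le_of_mem_secantFreeSolids hcard hQ hW₀ hH₀
  have hpairs := (hS.mul_card_nucleusPlanes_le hle).trans
    (Nat.mul_le_mul hx (Nat.sub_le_sub_right hx 1))
  omega

theorem two_mul_card_nucleusPlanes_add_le (hcard : Fintype.card F = 8) (hS : CapRep F S)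
    (hE : finrank F E = 5) (hc : 480 ≤ #(sect S E)) (hQ : OffCap F S Q)
    (hσ : #(sect S E) + #(sect (tangentPts F S Q) E) ≤ 586) :
    2 * #(nucleusPlanes 8 S E Q) + 5 * (#(sect S E) + #(sect (tangentPts F S Q) E)) ≤ 2932 := by
  rcases lt_or_ge 566 (#(sect S E) + #(sect (tangentPts F S Q) E)) with hlarge | hσ
  · have := hS.card_nucleusPlanes_le_one hcard hE hc hQ hσ hlarge
    omega
  rcases lt_or_ge 522 (#(sect S E) + #(sect (tangentPts F S Q) E)) with hmedium | hσ
  · have := hS.card_nucleusPlanes_le_of_le hcard hE hc hQ hσ hmedium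
    omega
  · have hx : #(sect (tangentPts F S Q) E) ≤ 42 := by omega
    have hpairs := (hS.mul_card_nucleusPlanes_le (q := 8)
      fun W hW => (mem_nucleusPlanes.1 hW).1.1).trans
      (Nat.mul_le_mul hx (Nat.sub_le_sub_right hx 1))
    omega

end Finite

section Counting

variable [Fintype V]

theorem mul_card_ovalPlanes_le (hcard : Fintype.card F = 8) (hS : CapRep F S)
    (hE : finrank F E = 5) (hc : 480 ≤ #(sect S E))
    (hσ : ∀ Q ∈ offPts S E, #(sect S E) + #(sect (tangentPts F S Q) E) ≤ 586) :
    (14 * #(ovalPlanes 8 S E) : ℤ) ≤ (32767 - 7 * #(sect S E)) * (2932 - 10 * #(sect S E))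
      + 245 * (#(sect S E) * (#(sect S E) - 1)) := by
  have hle : ∀ Q ∈ offPts S E, (2 * #(nucleusPlanes 8 S E Q) : ℤ)
      ≤ (2932 - 10 * #(sect S E)) + 5 * #(sect (secantPts F S Q) E) := by
    intro Q hQ
    have hbound := hS.two_mul_card_nucleusPlanes_add_le hcard hE hc (mem_offPts.1 hQ).2 (hσ Q hQ)
    have hsplit := card_sect_tangentPts_add_card_sect_secantPts S Q E
    omega
  have hsum := Finset.sum_le_sum hle
  have hnuclei := hS.mul_card_ovalPlanes_le_sum_card_nucleusPlanes hcard (by decide) E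
  rw [← Finset.mul_sum, Finset.sum_add_distrib, Finset.sum_const, ← Finset.mul_sum, nsmul_eq_mul,
    hS.sum_card_secantPts hcard, hS.card_offPts hcard, hE] at hsum
  push_cast at hsum hnuclei
  linarith

theorem card_sect_add_card_sect_tangentPts_le_of_completeIn (hcard : Fintype.card F = 8)
    (hS : CapRep F S) (hE : finrank F E = 5) (hSE : ∀ a ∈ S, a ∈ E) (hcomplete : CompleteIn S E)
    (hQ : Q ∈ offPts S E) : #(sect S E) + #(sect (tangentPts F S Q) E) ≤ 586 := by
  obtain ⟨a, ha⟩ := hcomplete Q hQ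
  obtain ⟨hQE, hQ⟩ := mem_offPts.1 hQ
  exact hS.card_sect_add_card_sect_tangentPts_le_of_finrank (j := 3) hcard (by decide) hQ hQE
    ⟨a, mem_sect.2 ⟨ha, hSE a (secantPts_subset ha)⟩⟩ hE

theorem card_sect_le_of_completeIn (hcard : Fintype.card F = 8) (hS : CapRep F S)
    (hE : finrank F E = 5) (hSE : ∀ a ∈ S, a ∈ E) (hcomplete : CompleteIn S E) :
    #(sect S E) ≤ 479 := by
  by_contra! hc
  have hσ : ∀ Q ∈ offPts S E, #(sect S E) + #(sect (tangentPts F S Q) E) ≤ 586 := fun Q =>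
    hS.card_sect_add_card_sect_tangentPts_le_of_completeIn hcard hE hSE hcomplete
  obtain ⟨a, ha, b, hb, hab⟩ := Finset.one_lt_card.1 (show 1 < #(sect S E) by omega)
  rw [mem_sect] at ha hb
  have hmax := hσ (a + b)
    (mem_offPts.2 ⟨add_mem ha.2 hb.2, hS.offCap_add ha.1 hb.1 hab⟩)
  have hlower := hS.le_card_ovalPlanes hcard hE fun W hWE hW =>
    hS.card_sect_plane_le hcard hE hc hWE hW
  have hupper := hS.mul_card_ovalPlanes_le hcard hE hc hσ
  obtain ⟨m, hm⟩ := Nat.exists_eq_add_of_le' (Nat.succ_le_of_lt hc)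
  have hm0 : (0 : ℤ) ≤ m := Nat.cast_nonneg m
  have hm1 : (m : ℤ) ≤ 106 := by omega
  rw [hm] at hlower hupper
  push_cast at hlower hupper
  nlinarith [mul_nonneg hm0 hm0, mul_nonneg hm0 (mul_nonneg hm0 hm0),
    mul_nonneg hm0 (sub_nonneg.2 hm1)]

end Counting

theorem card_sect_le_of_finrank_eq_five [Finite V] (hcard : Fintype.card F = 8) (hS : CapRep F S)
    (hE : finrank F E = 5) : #(sect S E) ≤ 479 := by
  cases nonempty_fintype V
  obtain ⟨T, hST, hT, hTE, hcomplete⟩ := (hS.mono sect_subset).exists_complete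
    (E := E) fun a ha => (mem_sect.1 ha).2
  calc #(sect S E) ≤ #(sect T E) := Finset.card_le_card fun a ha =>
        mem_sect.2 ⟨hST ha, (mem_sect.1 ha).2⟩
    _ ≤ 479 := hT.card_sect_le_of_completeIn hcard hE hTE hcomplete

end CapRep

end RankFive

section AnyRank

namespace CapRep

variable {F V : Type*} [Field F] [Fintype F] [AddCommGroup V] [Module F V] [Finite V]
variable {S : Finset V} {m : ℕ}

theorem card_le_of_solid (hcard : Fintype.card F = 8) (hS : CapRep F S)
    (hV : finrank F V = m + 5) {H : Submodule F V} (hH : finrank F H = 4)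
    (hcardH : 61 ≤ #(sect S H)) :
    (#S : ℤ) ≤ 61 + 418 * ∑ i ∈ Finset.range (m + 1), (8 : ℤ) ^ i := by
  have hbound := card_sect_le_of_covers (j := m) (t := 61) (B := 479) hcard (le_top : H ≤ ⊤)
    (by rw [finrank_top, hV, hH]; ring) (by exact_mod_cast hcardH) fun W hW =>
      Nat.cast_le.2 (hS.card_sect_le_of_finrank_eq_five hcard (by rw [(mem_covers.1 hW).2.2, hH]))
  rw [sect_top] at hbound
  push_cast at hbound
  linarith

theorem card_le_of_plane (hcard : Fintype.card F = 8) (hV : finrank F V = m + 5)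
    {W : Submodule F V} (hW : finrank F W = 3) (hcardW : 9 ≤ #(sect S W))
    (hsolid : ∀ H : Submodule F V, finrank F H = 4 → #(sect S H) ≤ 60) :
    (#S : ℤ) ≤ 60 + 408 * ∑ i ∈ Finset.range (m + 1), (8 : ℤ) ^ i := by
  have hbound := card_sect_le_of_covers (j := m + 1) (t := 9) (B := 60) hcard (le_top : W ≤ ⊤)
    (by rw [finrank_top, hV, hW]; ring) (by exact_mod_cast hcardW) fun H hH =>
      Nat.cast_le.2 (hsolid H (by rw [(mem_covers.1 hH).2.2, hW]))
  rw [sect_top, geom_sum_succ] at hbound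
  push_cast at hbound
  linarith

theorem card_le_of_forall_plane (hcard : Fintype.card F = 8) (hS : CapRep F S)
    (hV : finrank F V = m + 5)
    (hplane : ∀ W : Submodule F V, finrank F W = 3 → #(sect S W) ≤ 8) :
    (#S : ℤ) ≤ 56 + 384 * ∑ i ∈ Finset.range (m + 1), (8 : ℤ) ^ i := by
  rcases Nat.lt_or_ge 1 #S with hone | hone
  · obtain ⟨a, ha, b, hb, hab⟩ := Finset.one_lt_card.1 hone
    have hrank := hS.finrank_span_pair ha hb hab
    have hbound := card_sect_le_of_covers (j := m + 2) (t := 2) (B := 8) hcard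
      (le_top : span F {a, b} ≤ ⊤) (by rw [finrank_top, hV, hrank]; ring)
      (by rw [hS.card_sect_span_pair ha hb hab]; rfl) fun W hW =>
        Nat.cast_le.2 (hplane W (by rw [(mem_covers.1 hW).2.2, hrank]))
    rw [sect_top, geom_sum_succ, geom_sum_succ] at hbound
    push_cast at hbound
    linarith
  · have : 0 ≤ ∑ i ∈ Finset.range (m + 1), (8 : ℤ) ^ i := by positivity
    omega

theorem card_le (hcard : Fintype.card F = 8) (hS : CapRep F S) (hV : finrank F V = m + 5) :
    (#S : ℤ) ≤ 61 + 418 * ∑ i ∈ Finset.range (m + 1), (8 : ℤ) ^ i := by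
  have hgeom : 0 ≤ ∑ i ∈ Finset.range (m + 1), (8 : ℤ) ^ i := by positivity
  by_cases! hsolid : ∃ H : Submodule F V, finrank F H = 4 ∧ 61 ≤ #(sect S H)
  · obtain ⟨H, hH, hcardH⟩ := hsolid
    exact hS.card_le_of_solid hcard hV hH hcardH
  by_cases! hplane : ∃ W : Submodule F V, finrank F W = 3 ∧ 9 ≤ #(sect S W)
  · obtain ⟨W, hW, hcardW⟩ := hplane
    have := card_le_of_plane hcard hV hW hcardW fun H hH => Nat.le_of_lt_succ (hsolid H hH)
    linarith
  · have := hS.card_le_of_forall_plane hcard hV fun W hW => Nat.le_of_lt_succ (hplane W hW)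
    linarith

end CapRep

end AnyRank

section Projective

variable {F : Type*} [Field F] {n : ℕ} {P Q R : PGPoint F n}

theorem rep_mem_span_singleton_rep_iff : P.rep ∈ span F {Q.rep} ↔ P = Q := by
  refine ⟨fun h => Projectivization.submodule_injective (eq_of_le_of_finrank_eq ?_ ?_),
    fun h => h ▸ mem_span_singleton_self _⟩
  · rwa [P.submodule_eq, Q.submodule_eq, span_singleton_le_iff_mem]
  · rw [P.finrank_submodule, Q.finrank_submodule]

theorem coll3_of_rep_mem_span_pair (h : R.rep ∈ span F {P.rep, Q.rep}) : Coll3 P Q R := by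
  have hle : P.submodule ⊔ Q.submodule ⊔ R.submodule ≤ span F {P.rep, Q.rep} := by
    simp only [Projectivization.submodule_eq, sup_le_iff, span_singleton_le_iff_mem]
    exact ⟨⟨left_mem_span_pair _ _, right_mem_span_pair _ _⟩, h⟩
  refine (finrank_mono hle).trans ((finrank_span_le_card ({P.rep, Q.rep} : Set _)).trans ?_)
  rw [Set.toFinset_insert, Set.toFinset_singleton]
  exact Finset.card_le_two

theorem rep_injective : Function.Injective (Projectivization.rep : PGPoint F n → _) :=
  fun _ _ h => rep_mem_span_singleton_rep_iff.1 (mem_span_singleton.2 ⟨1, by rw [one_smul, h]⟩)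

theorem exists_capRep_of_isCap [Finite F] {K : Set (PGPoint F n)} (hK : IsCap K) :
    ∃ S : Finset (Fin (n + 1) → F), CapRep F S ∧ #S = K.ncard := by
  have hfin : (Projectivization.rep '' K).Finite := Set.toFinite _
  refine ⟨hfin.toFinset, ⟨?_, ?_⟩, ?_⟩
  · rw [hfin.mem_toFinset]
    rintro ⟨P, -, hP⟩
    exact P.rep_nonzero hP
  · simp only [hfin.mem_toFinset, Set.forall_mem_image, rep_injective.ne_iff]
    intro P hP Q hQ R hR hRP hRQ hmem
    rcases eq_or_ne P Q with rfl | hPQ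
    · rw [Set.pair_eq_singleton, rep_mem_span_singleton_rep_iff] at hmem
      exact hRP hmem
    · exact hK P hP Q hQ R hR hPQ hRP.symm hRQ.symm (coll3_of_rep_mem_span_pair hmem)
  · rw [← Set.ncard_eq_toFinset_card _ hfin, Set.ncard_image_of_injective _ rep_injective]

end Projective

end PGCap

theorem stmt13_general (F : Type*) [Field F] [Fintype F] (hcard : Fintype.card F = 8)
    (n : ℕ) (hn : 4 ≤ n) (K : Set (PGPoint F n)) (hK : IsCap K) :
    (K.ncard : ℝ) ≤ 478 * (8 : ℝ) ^ (n - 4)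
      - 2 * (∑ i ∈ Finset.range (n - 4), (8 : ℝ) ^ i) + 1 := by
  obtain ⟨S, hS, hSK⟩ := PGCap.exists_capRep_of_isCap hK
  obtain ⟨m, rfl⟩ := Nat.exists_eq_add_of_le' hn
  have hbound : (K.ncard : ℝ) ≤ 61 + 418 * ∑ i ∈ Finset.range (m + 1), (8 : ℝ) ^ i := by
    rw [← hSK]
    exact_mod_cast hS.card_le (m := m) hcard (finrank_fin_fun F)
  have hgeom := mul_geom_sum (8 : ℝ) m
  rw [geom_sum_succ'] at hbound
  rw [Nat.add_sub_cancel]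
  linarith

theorem stmt13 (F : Type*) [Field F] [Fintype F] (hcard : Fintype.card F = 8)
    (n : ℕ) (hn : 5 ≤ n) (K : Set (PGPoint F n)) (hK : IsCap K) :
    (K.ncard : ℝ) ≤ 478 * (8 : ℝ) ^ (n - 4)
      - 2 * (∑ i ∈ Finset.range (n - 4), (8 : ℝ) ^ i) + 1 :=
  stmt13_general F hcard n (by omega) K hK
end
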